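/- arXiv:0906.4177 — 2 statements merged into one kernel-verified Lean document; each statement's English description precedes it below -/
import Mathlib

section
/- Let χ be a primitive even nontrivial Dirichlet character modulo q. Unconditionally, for any x ≥ 2 and any complex number s not equal to a zero of L(·,χ) and not in {0, -2, -4, -6, ...}, one has -L'/L(s,χ) = Σ_{2 ≤ n ≤ x} Λ(n)χ(n) n^{-s} · (log(x/n)/log x) + (1/log x)·(d/ds)(L'/L)(s,χ) + (1/log x)·Σ_ρ m_ρ · x^{ρ-s}/(ρ-s)² + (1/log x)·Σ_{m=0}^{∞} x^{-2m-s}/(2m+s)², where ρ runs over the zeros of L(·,χ) with 0 < Re ρ < 1, each counted with its multiplicity m_ρ (order of vanishing of L(·,χ) at ρ). -/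
open Complex


/-- Splitting off one zero of an entire function. -/
lemma EF.factor_one (g : ℂ → ℂ) (hg : Differentiable ℂ g) (a : ℂ) (n : ℕ)
    (hn : analyticOrderAt g a = n) :
    ∃ g' : ℂ → ℂ, Differentiable ℂ g' ∧ (∀ z, g z = (z - a) ^ n * g' z) ∧ g' a ≠ 0 := by
  obtain ⟨g0, hg0, hne, hev⟩ := (hg.analyticAt a).analyticOrderAt_eq_natCast.mp hn
  classical
  refine ⟨fun z => if z = a then g0 a else g z / (z - a) ^ n, ?_, ?_, ?_⟩
  · intro z
    by_cases hz : z = a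
    · subst hz
      refine hg0.differentiableAt.congr_of_eventuallyEq ?_
      filter_upwards [hev] with w hw
      by_cases hwz : w = z
      · simp [hwz]
      · simp only [hwz, if_false]
        rw [hw, smul_eq_mul, mul_div_cancel_left₀]
        exact pow_ne_zero _ (sub_ne_zero.mpr hwz)
    · have : DifferentiableAt ℂ (fun z => g z / (z - a) ^ n) z := by
        refine (hg z).div (by fun_prop) (pow_ne_zero _ (sub_ne_zero.mpr hz))
      refine this.congr_of_eventuallyEq ?_
      filter_upwards [isOpen_ne.mem_nhds hz] with w hw
      simp [show w ≠ a from hw]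
  · intro z
    by_cases hz : z = a
    · subst hz
      have := hev.self_of_nhds
      simpa using this
    · simp only [hz, if_false]
      rw [mul_div_cancel₀]
      exact pow_ne_zero _ (sub_ne_zero.mpr hz)
  · simpa using hne

lemma EF.order_ne_top (f : ℂ → ℂ) (hf : Differentiable ℂ f) (b : ℂ) (h0 : f b ≠ 0) (a : ℂ) :
    analyticOrderAt f a ≠ ⊤ := by
  intro h
  rw [analyticOrderAt_eq_top] at h
  have h1 : AnalyticOnNhd ℂ f Set.univ := fun z _ => hf.analyticAt z
  have h2 : AnalyticOnNhd ℂ (fun _ : ℂ => (0 : ℂ)) Set.univ := fun z _ => analyticAt_const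
  have := h1.eq_of_eventuallyEq h2 (z₀ := a) h
  exact h0 (congrFun this b)

lemma EF.factor_finset (f : ℂ → ℂ) (hf : Differentiable ℂ f) (h0 : f 0 ≠ 0) (S : Finset ℂ)
    (hS : (0 : ℂ) ∉ S) :
    ∃ g : ℂ → ℂ, Differentiable ℂ g ∧
      (∀ z, f z = g z * ∏ ρ ∈ S, (1 - z / ρ) ^ (analyticOrderNatAt f ρ)) ∧
      ∀ ρ ∈ S, g ρ ≠ 0 := by
  classical
  induction S using Finset.induction_on with
  | empty => exact ⟨f, hf, by simp, by simp⟩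
  | insert a S ha ih =>
    have ha0 : a ≠ 0 := fun h => hS (by simp [h])
    obtain ⟨g, hg, hfg, hgS⟩ := ih (fun h => hS (Finset.mem_insert_of_mem h))
    set P : ℂ → ℂ := fun z => ∏ ρ ∈ S, (1 - z / ρ) ^ (analyticOrderNatAt f ρ) with hP
    have hPd : Differentiable ℂ P := by
      intro z
      simp only [hP]
      fun_prop
    have hPa : P a ≠ 0 := by
      refine Finset.prod_ne_zero_iff.mpr fun ρ hρ => pow_ne_zero _ ?_
      have hρ0 : ρ ≠ 0 := fun h => hS (Finset.mem_insert_of_mem (h ▸ hρ))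
      rw [sub_ne_zero]
      intro h
      rw [eq_div_iff hρ0, one_mul] at h
      exact ha (h ▸ hρ)
    have hord : analyticOrderAt g a = (analyticOrderNatAt f a : ℕ) := by
      have h1 : f = g * P := by ext z; exact hfg z
      have h2 := analyticOrderAt_mul (hg.analyticAt a) (hPd.analyticAt a)
      rw [← h1, ((hPd.analyticAt a).analyticOrderAt_eq_zero).mpr hPa, add_zero] at h2
      rw [← h2, Nat.cast_analyticOrderNatAt]
      exact EF.order_ne_top f hf 0 h0 a
    obtain ⟨g', hg', hgg', hg'a⟩ := EF.factor_one g hg a _ hord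
    set n := analyticOrderNatAt f a with hn
    refine ⟨fun z => (-a) ^ n * g' z, by fun_prop, ?_, ?_⟩
    · intro z
      rw [Finset.prod_insert ha, hfg z, hgg' z]
      have : (z - a) ^ n = (-a) ^ n * (1 - z / a) ^ n := by
        rw [← mul_pow]; congr 1; field_simp; ring
      rw [this]; ring
    · intro ρ hρ
      refine mul_ne_zero (pow_ne_zero _ (neg_ne_zero.mpr ha0)) ?_
      rcases Finset.mem_insert.mp hρ with rfl | hρ
      · exact hg'a
      · intro h
        apply hgS ρ hρ
        rw [hgg', h, mul_zero]

/-- derivative bound for log derivative of zero-free functions -/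
lemma EF.logDeriv_bound (g : ℂ → ℂ) (hg : Differentiable ℂ g) (R M : ℝ) (hR : 0 < R) (hM : 0 < M)
    (hne : ∀ z ∈ Metric.ball (0 : ℂ) R, g z ≠ 0)
    (hb : ∀ z ∈ Metric.ball (0 : ℂ) R, ‖g z‖ ≤ Real.exp M * ‖g 0‖) :
    ∀ z ∈ Metric.ball (0 : ℂ) (R / 4), ‖deriv (logDeriv g) z‖ ≤ 128 * M / R ^ 2 := by
  have hg' : Differentiable ℂ (deriv g) := by
    have : ContDiff ℂ 2 g := hg.contDiff
    exact (this.differentiable_deriv_two)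
  have hld : DifferentiableOn ℂ (logDeriv g) (Metric.ball 0 R) := by
    intro z hz
    exact ((hg' z).div (hg z) (hne z hz)).differentiableWithinAt
  obtain ⟨h, h0, hh⟩ := hld.isExactOn_ball.with_val_at 0 0
  have h00 : (0 : ℂ) ∈ Metric.ball (0 : ℂ) R := by simpa using hR
  have hexp : ∀ z ∈ Metric.ball (0 : ℂ) R, g z * cexp (-h z) = g 0 := by
    have hdiff : DifferentiableOn ℂ (fun z => g z * cexp (-h z)) (Metric.ball 0 R) := fun z hz =>
      ((hg z).mul ((hh z hz).differentiableAt.neg.cexp)).differentiableWithinAt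
    have hder : ∀ z ∈ Metric.ball (0 : ℂ) R, deriv (fun z => g z * cexp (-h z)) z = 0 := by
      intro z hz
      have := (hg z).hasDerivAt.mul ((hh z hz).neg.cexp)
      refine this.deriv.trans ?_
      rw [logDeriv_apply]
      field_simp [hne z hz]
      ring
    intro z hz
    have := (convex_ball (0:ℂ) R).norm_image_sub_le_of_norm_deriv_le (f := fun z => g z * cexp (-h z))
      (C := 0) (fun x hx => (hg x).mul ((hh x hx).differentiableAt.neg.cexp))
      (fun x hx => by rw [hder x hx]; simp) h00 hz
    simp only [zero_mul, norm_le_zero_iff, sub_eq_zero, h0] at this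
    simpa using this
  have hre : Set.MapsTo h (Metric.ball 0 R) {z | z.re ≤ M} := by
    intro z hz
    have h1 := hexp z hz
    have h2 := hb z hz
    have h3 : ‖g z‖ * Real.exp (-(h z).re) = ‖g 0‖ := by
      rw [← h1, norm_mul, Complex.norm_exp]; simp
    have hg0 : 0 < ‖g z‖ := norm_pos_iff.mpr (hne z hz)
    rw [← h3] at h2
    have h4 : 1 ≤ Real.exp (M - (h z).re) := by
      rw [sub_eq_add_neg, Real.exp_add]
      by_contra hlt
      push Not at hlt
      nlinarith
    have := Real.one_le_exp_iff.mp h4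
    simp only [Set.mem_ofPred_eq]
    linarith
  have hhd : DifferentiableOn ℂ h (Metric.ball 0 R) := fun z hz =>
    (hh z hz).differentiableAt.differentiableWithinAt
  have hbc : ∀ z, ‖z‖ ≤ R / 2 → ‖h z‖ ≤ 2 * M := by
    intro z hz
    have hz' : z ∈ Metric.ball (0 : ℂ) R := by simp; linarith
    refine (Complex.borelCaratheodory_zero hM hhd hre hR hz' h0).trans ?_
    rw [div_le_iff₀ (by linarith)]
    nlinarith
  have hd1 : ∀ z, ‖z‖ ≤ 3 * R / 8 → ‖logDeriv g z‖ ≤ 16 * M / R := by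
    intro z hz
    have hz' : z ∈ Metric.ball (0 : ℂ) R := by simp; linarith
    rw [← (hh z hz').deriv]
    have hsub : Metric.closedBall z (R / 8) ⊆ Metric.ball 0 R := by
      intro w hw
      simp only [Metric.mem_closedBall, dist_eq_norm, Metric.mem_ball, sub_zero] at hw ⊢
      have : ‖w‖ ≤ ‖w - z‖ + ‖z‖ := by simpa using norm_add_le (w - z) z
      linarith
    have := Complex.norm_deriv_le_of_forall_mem_sphere_norm_le (f := h) (c := z) (R := R / 8)
      (C := 2 * M) (by linarith) ((hhd.mono hsub).diffContOnCl_ball subset_rfl) (fun w hw => by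
        apply hbc
        simp only [mem_sphere_iff_norm] at hw
        have : ‖w‖ ≤ ‖w - z‖ + ‖z‖ := by simpa using norm_add_le (w - z) z
        linarith)
    refine this.trans (le_of_eq ?_)
    field_simp; norm_num
  intro z hz
  simp only [Metric.mem_ball, dist_zero_right] at hz
  have hsub : Metric.closedBall z (R / 8) ⊆ Metric.ball 0 R := by
    intro w hw
    simp only [Metric.mem_closedBall, dist_eq_norm, Metric.mem_ball, sub_zero] at hw ⊢
    have : ‖w‖ ≤ ‖w - z‖ + ‖z‖ := by simpa using norm_add_le (w - z) z
    linarith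
  have := Complex.norm_deriv_le_of_forall_mem_sphere_norm_le (f := logDeriv g) (c := z) (R := R / 8)
    (C := 16 * M / R) (by linarith) ((hld.mono hsub).diffContOnCl_ball subset_rfl) (fun w hw => by
      apply hd1
      simp only [mem_sphere_iff_norm] at hw
      have : ‖w‖ ≤ ‖w - z‖ + ‖z‖ := by simpa using norm_add_le (w - z) z
      linarith)
  refine this.trans (le_of_eq ?_)
  field_simp; norm_num


lemma EF.zeros_finite (f : ℂ → ℂ) (hf : Differentiable ℂ f) (h0 : f 0 ≠ 0) (R : ℝ) :
    {z : ℂ | f z = 0 ∧ ‖z‖ ≤ R}.Finite := by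
  by_contra hinf
  obtain ⟨x, -, hx⟩ := Set.Infinite.exists_accPt_of_subset_isCompact
    (s := {z : ℂ | f z = 0 ∧ ‖z‖ ≤ R}) hinf (isCompact_closedBall (0 : ℂ) R)
    (fun z hz => by simpa using hz.2)
  rw [accPt_iff_frequently_nhdsNE] at hx
  have h1 : AnalyticOnNhd ℂ f Set.univ := fun z _ => hf.analyticAt z
  have := h1.eqOn_zero_of_preconnected_of_frequently_eq_zero isPreconnected_univ (Set.mem_univ x)
    (hx.mono fun y hy => hy.1)
  exact h0 (this (Set.mem_univ 0))

lemma EF.core (f : ℂ → ℂ) (hf : Differentiable ℂ f) (h0 : f 0 ≠ 0) (R B : ℝ) (hR : 0 < R)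
    (hB : ∀ z, ‖z‖ ≤ 3 * R → ‖f z‖ ≤ Real.exp B) (hBpos : 0 < B - Real.log ‖f 0‖)
    (S : Finset ℂ) (hS : ∀ z, z ∈ S ↔ f z = 0 ∧ ‖z‖ ≤ R) :
    (2 : ℝ) ^ (∑ ρ ∈ S, analyticOrderNatAt f ρ) * ‖f 0‖ ≤ Real.exp B ∧
    ∃ g : ℂ → ℂ, Differentiable ℂ g ∧ (∀ z ∈ Metric.ball (0 : ℂ) R, g z ≠ 0) ∧
      (∀ z, f z ≠ 0 → logDeriv f z = logDeriv g z +
        ∑ ρ ∈ S, (analyticOrderNatAt f ρ : ℂ) * (1 / (z - ρ))) ∧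
      ∀ z ∈ Metric.ball (0 : ℂ) (R / 4),
        ‖deriv (logDeriv g) z‖ ≤ 128 * (B - Real.log ‖f 0‖) / R ^ 2 := by
  have hS0 : (0 : ℂ) ∉ S := fun h => h0 ((hS 0).mp h).1
  have hSne : ∀ ρ ∈ S, ρ ≠ 0 := fun ρ h h' => hS0 (h' ▸ h)
  obtain ⟨g, hg, hfg, hgS⟩ := EF.factor_finset f hf h0 S hS0
  set n := ∑ ρ ∈ S, analyticOrderNatAt f ρ with hn
  have hg0 : g 0 = f 0 := by rw [hfg 0]; simp
  have hf0 : 0 < ‖f 0‖ := norm_pos_iff.mpr h0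
  have hgne : ∀ z ∈ Metric.ball (0 : ℂ) R, g z ≠ 0 := by
    intro z hz hgz
    have hfz : f z = 0 := by rw [hfg, hgz, zero_mul]
    have : z ∈ S := (hS z).mpr ⟨hfz, by simpa using (Metric.mem_ball.mp hz).le⟩
    exact hgS z this hgz
  have hsph : ∀ z ∈ frontier (Metric.ball (0 : ℂ) (3 * R)), ‖g z‖ ≤ Real.exp B / 2 ^ n := by
    intro z hz
    rw [frontier_ball _ (by positivity)] at hz
    have hz' : ‖z‖ = 3 * R := by simpa using hz
    rw [le_div_iff₀ (by positivity)]
    refine le_trans ?_ (hB z hz'.le)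
    rw [hfg z, norm_mul]
    gcongr
    rw [hn, ← Finset.prod_pow_eq_pow_sum, norm_prod]
    refine Finset.prod_le_prod (fun _ _ => by positivity) fun ρ hρ => ?_
    rw [norm_pow]
    gcongr
    have h1 : ‖z / ρ‖ - ‖(1 : ℂ)‖ ≤ ‖1 - z / ρ‖ := by
      rw [norm_sub_rev]; exact norm_sub_norm_le _ _
    have hρ0 : 0 < ‖ρ‖ := norm_pos_iff.mpr (hSne ρ hρ)
    have h2 : 3 ≤ ‖z / ρ‖ := by
      rw [norm_div, le_div_iff₀ hρ0, hz']
      have := ((hS ρ).mp hρ).2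
      linarith
    rw [norm_one] at h1
    linarith
  have hall : ∀ z ∈ closure (Metric.ball (0 : ℂ) (3 * R)), ‖g z‖ ≤ Real.exp B / 2 ^ n := fun z hz =>
    Complex.norm_le_of_forall_mem_frontier_norm_le Metric.isBounded_ball hg.diffContOnCl hsph hz
  refine ⟨?_, g, hg, hgne, ?_, ?_⟩
  · have := hall 0 (subset_closure (by simpa using hR))
    rw [le_div_iff₀ (by positivity), hg0] at this
    linarith
  · intro z hz
    have hff : f = fun z => g z * ∏ ρ ∈ S, (1 - z / ρ) ^ (analyticOrderNatAt f ρ) := funext hfg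
    have hz' := hz
    rw [hfg z] at hz'
    have hgz := left_ne_zero_of_mul hz'
    have hPz := right_ne_zero_of_mul hz'
    have hPz' := Finset.prod_ne_zero_iff.mp hPz
    conv_lhs => rw [hff]
    rw [logDeriv_mul z hgz hPz (hg z) (by fun_prop), logDeriv_prod hPz' (fun i _ => by fun_prop)]
    congr 1
    refine Finset.sum_congr rfl fun ρ hρ => ?_
    have hρ0 := hSne ρ hρ
    rw [logDeriv_fun_pow (by fun_prop)]
    congr 1
    have hzρ : z - ρ ≠ 0 := by
      intro h
      rw [sub_eq_zero] at h
      exact hz (h ▸ ((hS ρ).mp hρ).1)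
    have hd : deriv (fun z : ℂ => 1 - z / ρ) z = -(1 / ρ) := by
      have := ((hasDerivAt_id z).div_const ρ).const_sub 1
      simpa using this.deriv
    rw [logDeriv_apply, hd]
    have h3 : 1 - z / ρ = -(z - ρ) / ρ := by field_simp; ring
    rw [h3]
    field_simp
  · refine EF.logDeriv_bound g hg R _ hR hBpos hgne fun z hz => ?_
    have h1 := hall z (subset_closure (Metric.ball_subset_ball (by linarith) hz))
    refine h1.trans ?_
    rw [hg0, Real.exp_sub, Real.exp_log hf0, div_mul_cancel₀ _ hf0.ne']
    exact div_le_self (Real.exp_pos _).le (one_le_pow₀ (by norm_num))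


lemma EF.hadamard (f : ℂ → ℂ) (hf : Differentiable ℂ f) (h0 : f 0 ≠ 0) (C : ℝ) (hC : 0 ≤ C)
    (hb : ∀ R : ℝ, 1 ≤ R → ∀ z, ‖z‖ ≤ R → ‖f z‖ ≤ Real.exp (C * R ^ (3 / 2 : ℝ))) :
    Summable (fun ρ : {ρ : ℂ // f ρ = 0} =>
      (analyticOrderNatAt f (ρ : ℂ) : ℝ) / ‖(ρ : ℂ)‖ ^ 2) ∧
    (∀ w, f w ≠ 0 → HasSum (fun ρ : {ρ : ℂ // f ρ = 0} =>
      (analyticOrderNatAt f (ρ : ℂ) : ℂ) * (1 / (w - ρ) + 1 / ρ)) (logDeriv f w - logDeriv f 0)) ∧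
    HasSum (fun ρ : {ρ : ℂ // f ρ = 0} =>
      (analyticOrderNatAt f (ρ : ℂ) : ℂ) / (ρ : ℂ) ^ 2) (-(deriv (logDeriv f) 0)) := by
  classical
  set m : ℂ → ℕ := fun ρ => analyticOrderNatAt f ρ with hm
  set θ : ℝ := 2 ^ (3 / 2 : ℝ) with hθ
  have hθpos : 0 < θ := by positivity
  have hθ4 : θ / 4 < 1 := by
    rw [div_lt_one (by norm_num)]
    calc θ < 2 ^ (2 : ℝ) := Real.rpow_lt_rpow_of_exponent_lt (by norm_num) (by norm_num)
      _ = 4 := by norm_num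
  set K : ℝ := C * 3 ^ (3 / 2 : ℝ) + 2 * |Real.log ‖f 0‖| + 1 with hK
  have hKpos : 0 < K := by positivity
  have hfin := EF.zeros_finite f hf h0
  set S : ℕ → Finset ℂ := fun N => (hfin (2 ^ N)).toFinset with hSdef
  have hS : ∀ N z, z ∈ S N ↔ f z = 0 ∧ ‖z‖ ≤ 2 ^ N := fun N z => by simp [hSdef]
  have hf0 : 0 < ‖f 0‖ := norm_pos_iff.mpr h0
  have hpow : ∀ N : ℕ, ((2 : ℝ) ^ N) ^ (3 / 2 : ℝ) = θ ^ N := by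
    intro N
    rw [hθ, ← Real.rpow_natCast, ← Real.rpow_natCast, ← Real.rpow_mul (by norm_num),
      ← Real.rpow_mul (by norm_num), mul_comm]
  have hθ1 : ∀ N : ℕ, 1 ≤ θ ^ N := fun N => one_le_pow₀ (by
    rw [hθ]; exact Real.one_le_rpow (by norm_num) (by norm_num))
  have key : ∀ N : ℕ, (∑ ρ ∈ S N, (m ρ : ℝ)) ≤ 2 * K * θ ^ N ∧
      ∃ g : ℂ → ℂ, Differentiable ℂ g ∧ (∀ z ∈ Metric.ball (0 : ℂ) (2 ^ N), g z ≠ 0) ∧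
      (∀ z, f z ≠ 0 → logDeriv f z = logDeriv g z + ∑ ρ ∈ S N, (m ρ : ℂ) * (1 / (z - ρ))) ∧
      ∀ z ∈ Metric.ball (0 : ℂ) (2 ^ N / 4),
        ‖deriv (logDeriv g) z‖ ≤ 128 * K * (θ / 4) ^ N := by
    intro N
    have h2N : (1 : ℝ) ≤ 2 ^ N := one_le_pow₀ (by norm_num)
    set B : ℝ := C * (3 * 2 ^ N) ^ (3 / 2 : ℝ) + |Real.log ‖f 0‖| + 1 with hB
    have hB1 : C * (3 * 2 ^ N) ^ (3 / 2 : ℝ) = C * 3 ^ (3 / 2 : ℝ) * θ ^ N := by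
      rw [Real.mul_rpow (by norm_num) (by positivity), hpow]; ring
    have hlog1 := le_abs_self (Real.log ‖f 0‖)
    have hlog2 := neg_abs_le (Real.log ‖f 0‖)
    have habs := abs_nonneg (Real.log ‖f 0‖)
    have hBpos : 0 < B - Real.log ‖f 0‖ := by
      have : 0 ≤ C * (3 * 2 ^ N) ^ (3 / 2 : ℝ) := by positivity
      linarith
    have hBle : B - Real.log ‖f 0‖ ≤ K * θ ^ N := by
      have := hθ1 N
      rw [hB, hB1, hK]
      nlinarith
    obtain ⟨h1, g, hg, hgne, hgf, hgb⟩ := EF.core f hf h0 (2 ^ N) B (by positivity) (by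
      intro z hz
      refine (hb (3 * 2 ^ N) (by linarith) z hz).trans ?_
      gcongr
      linarith) hBpos (S N) (hS N)
    refine ⟨?_, g, hg, hgne, hgf, fun z hz => (hgb z hz).trans ?_⟩
    · have h2 := Real.log_le_log (by positivity) h1
      rw [Real.log_exp, Real.log_mul (by positivity) hf0.ne', Real.log_pow] at h2
      push_cast at h2
      have h3 := Real.log_two_gt_d9
      have h4 : (0 : ℝ) ≤ ∑ ρ ∈ S N, (m ρ : ℝ) := Finset.sum_nonneg fun _ _ => by positivity
      simp only [hm] at h4 ⊢
      nlinarith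
    · have : 128 * K * (θ / 4) ^ N = 128 * (K * θ ^ N) / (2 ^ N) ^ 2 := by
        rw [div_pow, ← pow_mul, mul_comm N 2, pow_mul]; norm_num; ring
      rw [this]
      gcongr
  have hmono : Monotone S := by
    intro a b hab z hz
    rw [hS] at hz ⊢
    exact ⟨hz.1, hz.2.trans (pow_le_pow_right₀ (by norm_num) hab)⟩
  have hex : ∀ z, f z = 0 → ∃ N, z ∈ S N := by
    intro z hz
    obtain ⟨N, hN⟩ := pow_unbounded_of_one_lt ‖z‖ (one_lt_two (α := ℝ))
    exact ⟨N, (hS N z).mpr ⟨hz, hN.le⟩⟩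
  have hne : ∀ ρ, f ρ = 0 → ρ ≠ 0 := fun ρ h h' => h0 (h' ▸ h)
  set T : ℕ → Finset {ρ : ℂ // f ρ = 0} := fun N => (S N).subtype _ with hT
  have hTm : Monotone T := fun a b hab z hz => by
    simp only [hT, Finset.mem_subtype] at hz ⊢
    exact hmono hab hz
  have hTex : ∀ z : {ρ : ℂ // f ρ = 0}, ∃ N, z ∈ T N := fun z => by
    obtain ⟨N, hN⟩ := hex z z.2
    exact ⟨N, by simpa [hT] using hN⟩
  have hTtend : Filter.Tendsto T Filter.atTop Filter.atTop :=
    Filter.tendsto_atTop_finset_of_monotone hTm hTex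
  have hTsumR : ∀ (F : ℂ → ℝ) N, ∑ ρ ∈ T N, F ρ = ∑ ρ ∈ S N, F ρ := fun F N => by
    simp only [hT]
    exact Finset.sum_subtype_of_mem F (fun x hx => ((hS N x).mp hx).1)
  have hTsumC : ∀ (F : ℂ → ℂ) N, ∑ ρ ∈ T N, F ρ = ∑ ρ ∈ S N, F ρ := fun F N => by
    simp only [hT]
    exact Finset.sum_subtype_of_mem F (fun x hx => ((hS N x).mp hx).1)
  have hsumbd : ∀ N, ∑ ρ ∈ S N, (m ρ : ℝ) / ‖ρ‖ ^ 2 ≤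
      ∑ ρ ∈ S 0, (m ρ : ℝ) / ‖ρ‖ ^ 2 + ∑ j ∈ Finset.range N, 2 * K * θ * (θ / 4) ^ j := by
    intro N
    induction N with
    | zero => simp
    | succ N ih =>
      rw [Finset.sum_range_succ, ← add_assoc, ← Finset.sum_sdiff (hmono (Nat.le_succ N)), add_comm]
      refine add_le_add ih ?_
      calc ∑ ρ ∈ S (N + 1) \ S N, (m ρ : ℝ) / ‖ρ‖ ^ 2
          ≤ ∑ ρ ∈ S (N + 1) \ S N, (m ρ : ℝ) / 4 ^ N := by
            refine Finset.sum_le_sum fun ρ hρ => ?_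
            rw [Finset.mem_sdiff, hS, hS] at hρ
            have h1 : (2 : ℝ) ^ N < ‖ρ‖ := by
              by_contra h
              exact hρ.2 ⟨hρ.1.1, not_lt.mp h⟩
            have h2 : (4 : ℝ) ^ N = (2 ^ N) ^ 2 := by
              rw [← pow_mul, mul_comm N 2, pow_mul]; norm_num
            rw [h2]
            gcongr
        _ ≤ ∑ ρ ∈ S (N + 1), (m ρ : ℝ) / 4 ^ N :=
            Finset.sum_le_sum_of_subset_of_nonneg Finset.sdiff_subset (fun _ _ _ => by positivity)
        _ = (∑ ρ ∈ S (N + 1), (m ρ : ℝ)) / 4 ^ N := by rw [Finset.sum_div]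
        _ ≤ (2 * K * θ ^ (N + 1)) / 4 ^ N := by gcongr; exact (key (N + 1)).1
        _ = _ := by rw [div_pow]; ring
  have hsum : Summable (fun ρ : {ρ : ℂ // f ρ = 0} => (m ρ : ℝ) / ‖(ρ : ℂ)‖ ^ 2) := by
    have hgeo : Summable (fun j : ℕ => 2 * K * θ * (θ / 4) ^ j) :=
      (summable_geometric_of_lt_one (by positivity) hθ4).mul_left _
    refine summable_of_sum_le (c := ∑ ρ ∈ S 0, (m ρ : ℝ) / ‖ρ‖ ^ 2 +
      ∑' j : ℕ, 2 * K * θ * (θ / 4) ^ j) (fun _ => by positivity) fun u => ?_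
    obtain ⟨N, hN⟩ := (hTtend.eventually (Filter.eventually_ge_atTop u)).exists
    refine (Finset.sum_le_sum_of_subset_of_nonneg hN (fun _ _ _ => by positivity)).trans ?_
    rw [hTsumR (fun ρ => (m ρ : ℝ) / ‖ρ‖ ^ 2)]
    refine (hsumbd N).trans ?_
    gcongr
    exact hgeo.sum_le_tsum _ (fun _ _ => by positivity)
  have hgeo0 : Filter.Tendsto (fun N : ℕ => 128 * K * (θ / 4) ^ N) Filter.atTop (nhds 0) := by
    simpa using (tendsto_pow_atTop_nhds_zero_of_lt_one (by positivity) hθ4).const_mul (128 * K)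
  refine ⟨hsum, ?_, ?_⟩
  · intro w hw
    have hs : Summable (fun ρ : {ρ : ℂ // f ρ = 0} => (m ρ : ℂ) * (1 / (w - ρ) + 1 / ρ)) := by
      refine Summable.of_norm_bounded_eventually (hsum.mul_left (2 * ‖w‖)) ?_
      have hfin2 : {ρ : {ρ : ℂ // f ρ = 0} | ‖(ρ : ℂ)‖ ≤ 2 * ‖w‖}.Finite := by
        have := (hfin (2 * ‖w‖)).preimage (f := ((↑) : {ρ : ℂ // f ρ = 0} → ℂ))
          Subtype.val_injective.injOn
        refine this.subset fun ρ hρ => ⟨ρ.2, hρ⟩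
      filter_upwards [hfin2.compl_mem_cofinite] with ρ hρ
      simp only [Set.mem_compl_iff, Set.mem_ofPred_eq, not_le] at hρ
      have hρ0 := hne ρ ρ.2
      have hρp : 0 < ‖(ρ : ℂ)‖ := norm_pos_iff.mpr hρ0
      have hwρ : w - ρ ≠ 0 := sub_ne_zero.mpr (fun h => hw (h ▸ ρ.2))
      have h1 : (1 / (w - ρ) + 1 / ρ : ℂ) = w / ((w - ρ) * ρ) := by field_simp; ring
      have h2 : ‖(ρ : ℂ)‖ / 2 ≤ ‖w - ρ‖ := by
        have := norm_sub_norm_le (ρ : ℂ) w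
        rw [norm_sub_rev] at this
        linarith
      rw [h1, norm_mul, norm_div, norm_mul, Complex.norm_natCast]
      have h3 : ‖w‖ / (‖w - ρ‖ * ‖(ρ : ℂ)‖) ≤ ‖w‖ / (‖(ρ : ℂ)‖ / 2 * ‖(ρ : ℂ)‖) := by gcongr
      calc (m ρ : ℝ) * (‖w‖ / (‖w - ρ‖ * ‖(ρ : ℂ)‖))
          ≤ (m ρ : ℝ) * (‖w‖ / (‖(ρ : ℂ)‖ / 2 * ‖(ρ : ℂ)‖)) := by gcongr
        _ = _ := by field_simp
    have hlim1 := hs.hasSum.comp hTtend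
    have hlim2 : Filter.Tendsto (fun N => ∑ ρ ∈ T N, (m ρ : ℂ) * (1 / (w - ρ) + 1 / (ρ : ℂ)))
        Filter.atTop (nhds (logDeriv f w - logDeriv f 0)) := by
      rw [tendsto_iff_norm_sub_tendsto_zero]
      have hlim3 : Filter.Tendsto (fun N : ℕ => 128 * K * (θ / 4) ^ N * ‖w‖)
        Filter.atTop (nhds 0) := by simpa using hgeo0.mul_const ‖w‖
      refine squeeze_zero' (Filter.Eventually.of_forall fun _ => norm_nonneg _) ?_ hlim3
      have hev : ∀ᶠ N : ℕ in Filter.atTop, 4 * ‖w‖ < 2 ^ N :=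
        (tendsto_pow_atTop_atTop_of_one_lt (one_lt_two (α := ℝ))).eventually_gt_atTop _
      filter_upwards [hev] with N hN
      obtain ⟨-, g, hg, hgne, hgf, hgb⟩ := key N
      have hg' : Differentiable ℂ (deriv g) :=
        (hg.contDiff (n := 2)).differentiable_deriv_two
      have h1 : ∑ ρ ∈ T N, (m ρ : ℂ) * (1 / (w - ρ) + 1 / (ρ : ℂ)) - (logDeriv f w - logDeriv f 0)
          = -(logDeriv g w - logDeriv g 0) := by
        rw [hTsumC (fun ρ => (m ρ : ℂ) * (1 / (w - ρ) + 1 / ρ)), hgf w hw, hgf 0 h0]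
        have : ∑ ρ ∈ S N, (m ρ : ℂ) * (1 / (w - ρ) + 1 / ρ) =
          ∑ ρ ∈ S N, (m ρ : ℂ) * (1 / (w - ρ)) - ∑ ρ ∈ S N, (m ρ : ℂ) * (1 / (0 - ρ)) := by
          rw [← Finset.sum_sub_distrib]
          refine Finset.sum_congr rfl fun ρ _ => ?_
          rw [zero_sub, one_div_neg_eq_neg_one_div]; ring
        rw [this]; ring
      rw [h1, norm_neg]
      have h2N : (0 : ℝ) < 2 ^ N := by positivity
      have := (convex_ball (0:ℂ) (2 ^ N / 4)).norm_image_sub_le_of_norm_deriv_le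
        (f := logDeriv g) (C := 128 * K * (θ / 4) ^ N) (x := 0) (y := w) (fun x hx => by
          refine (hg' x).div (hg x) (hgne x (Metric.ball_subset_ball (by linarith) hx)))
        hgb (by simp) (by simp; linarith)
      simpa using this
    have := tendsto_nhds_unique hlim2 hlim1
    rw [this]
    exact hs.hasSum
  · have hs : Summable (fun ρ : {ρ : ℂ // f ρ = 0} => (m ρ : ℂ) / (ρ : ℂ) ^ 2) := by
      refine Summable.of_norm (hsum.congr fun ρ => ?_)
      simp
    have hlim1 := hs.hasSum.comp hTtend
    have hlim2 : Filter.Tendsto (fun N => ∑ ρ ∈ T N, (m ρ : ℂ) / (ρ : ℂ) ^ 2)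
        Filter.atTop (nhds (-(deriv (logDeriv f) 0))) := by
      rw [tendsto_iff_norm_sub_tendsto_zero]
      refine squeeze_zero (fun _ => norm_nonneg _) (fun N => ?_) hgeo0
      obtain ⟨-, g, hg, hgne, hgf, hgb⟩ := key N
      have hg' : Differentiable ℂ (deriv g) :=
        (hg.contDiff (n := 2)).differentiable_deriv_two
      have h0b : (0 : ℂ) ∈ Metric.ball (0 : ℂ) (2 ^ N) := by simp
      have hev : logDeriv f =ᶠ[nhds 0]
          fun z => logDeriv g z + ∑ ρ ∈ S N, (m ρ : ℂ) * (1 / (z - ρ)) := by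
        filter_upwards [hf.continuous.continuousAt.eventually_ne h0] with z hz using hgf z hz
      have hd : HasDerivAt (fun z => logDeriv g z + ∑ ρ ∈ S N, (m ρ : ℂ) * (1 / (z - ρ)))
          (deriv (logDeriv g) 0 + ∑ ρ ∈ S N, (m ρ : ℂ) * (-1 / (ρ : ℂ) ^ 2)) 0 := by
        refine HasDerivAt.add (((hg' 0).div (hg 0) (hgne 0 h0b)).hasDerivAt) ?_
        refine HasDerivAt.fun_sum fun ρ hρ => ?_
        have hρ0 : ρ ≠ 0 := hne ρ ((hS N ρ).mp hρ).1
        have := ((hasDerivAt_id (0 : ℂ)).sub_const ρ).inv (by simpa using hρ0)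
        simpa using this.const_mul (m ρ : ℂ)
      rw [hev.deriv_eq, hd.deriv, hTsumC (fun ρ => (m ρ : ℂ) / ρ ^ 2)]
      have : ∑ ρ ∈ S N, (m ρ : ℂ) * (-1 / (ρ : ℂ) ^ 2) = -∑ ρ ∈ S N, (m ρ : ℂ) / ρ ^ 2 := by
        rw [← Finset.sum_neg_distrib]
        refine Finset.sum_congr rfl fun ρ _ => by ring
      rw [this]
      have h5 : ∀ a b : ℂ, a - -(b + -a) = b := fun a b => by ring
      rw [h5]
      exact hgb 0 (by simp)
    have := tendsto_nhds_unique hlim2 hlim1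
    rw [this]
    exact hs.hasSum


lemma EF.charsum_bound {q : ℕ} [NeZero q] (χ : DirichletCharacter ℂ q) (hχ : χ ≠ 1) (n : ℕ) :
    ‖∑ k ∈ Finset.range n, χ (k : ZMod q)‖ ≤ q := by
  have hq : ∑ k ∈ Finset.range q, χ (k : ZMod q) = 0 := by
    rw [← χ.sum_eq_zero_of_ne_one hχ]
    obtain ⟨k, rfl⟩ : ∃ k, q = k + 1 := ⟨q - 1, by have := NeZero.pos q; omega⟩
    rw [Finset.sum_range]
    refine Finset.sum_congr rfl fun i _ => ?_
    congr 1
    exact Fin.cast_val_eq_self i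
  have hper : Function.Periodic (fun n => ∑ k ∈ Finset.range n, χ (k : ZMod q)) q := by
    intro n
    simp only
    rw [add_comm, Finset.sum_range_add, hq, zero_add]
    refine Finset.sum_congr rfl fun k _ => ?_
    simp
  have := hper.map_mod_nat n
  rw [← this]
  refine (norm_sum_le _ _).trans ?_
  calc ∑ k ∈ Finset.range (n % q), ‖χ (k : ZMod q)‖ ≤ ∑ k ∈ Finset.range (n % q), (1 : ℝ) :=
        Finset.sum_le_sum fun k _ => χ.norm_le_one _
    _ = ((n % q : ℕ) : ℝ) := by simp
    _ ≤ q := by exact_mod_cast (Nat.mod_lt n (NeZero.pos q)).le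

lemma EF.charsum_bound' {q : ℕ} [NeZero q] (χ : DirichletCharacter ℂ q) (hχ : χ ≠ 1) (n : ℕ) :
    ‖∑ k ∈ Finset.Icc 1 n, χ (k : ZMod q)‖ ≤ q + 1 := by
  have h1 : ∑ k ∈ Finset.range (n + 1), χ (k : ZMod q) =
      χ ((0 : ℕ) : ZMod q) + ∑ k ∈ Finset.Icc 1 n, χ (k : ZMod q) := by
    rw [Finset.range_eq_Ico, Finset.sum_eq_sum_Ico_succ_bot (by omega)]
    congr 1
  have h2 := EF.charsum_bound χ hχ (n + 1)
  have h3 := χ.norm_le_one ((0 : ℕ) : ZMod q)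
  have h4 : ∑ k ∈ Finset.Icc 1 n, χ (k : ZMod q) =
    ∑ k ∈ Finset.range (n + 1), χ (k : ZMod q) - χ ((0 : ℕ) : ZMod q) := by rw [h1]; ring
  rw [h4]
  refine (norm_sub_le _ _).trans ?_
  linarith

lemma EF.L_bound_right {q : ℕ} [NeZero q] (χ : DirichletCharacter ℂ q) (hχ : χ ≠ 1) (z : ℂ)
    (hz : 1 / 2 ≤ z.re) : ‖DirichletCharacter.LFunction χ z‖ ≤ 2 * (q + 1) * ‖z‖ := by
  set A : ℕ → ℂ := fun n => ∑ k ∈ Finset.Icc 1 n, χ (k : ZMod q) with hA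
  have hAb : ∀ n, ‖A n‖ ≤ q + 1 := EF.charsum_bound' χ hχ
  set f : ℝ → ℂ := (Set.Ioi (1 : ℝ)).indicator (fun t => A ⌊t⌋₊) with hf
  have hfb : ∀ t, ‖f t‖ ≤ q + 1 := fun t => by
    simp only [hf, Set.indicator]
    split_ifs
    · exact hAb _
    · simp; positivity
  have hfm : Measurable f :=
    ((measurable_from_top (f := A)).comp Nat.measurable_floor).indicator measurableSet_Ioi
  have hfl : MeasureTheory.LocallyIntegrableOn f (Set.Ioi 0) := by
    have : MeasureTheory.LocallyIntegrable f := by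
      refine (MeasureTheory.locallyIntegrable_const ((q : ℝ) + 1)).mono hfm.aestronglyMeasurable ?_
      refine Filter.Eventually.of_forall fun t => ?_
      refine (hfb t).trans (le_abs_self _)
    exact this.locallyIntegrableOn _
  have hmel : ∀ z : ℂ, mellin f (-z) = ∫ t in Set.Ioi (1 : ℝ), A ⌊t⌋₊ * (t : ℂ) ^ (-(z + 1)) := by
    intro z
    rw [mellin, ← MeasureTheory.integral_indicator measurableSet_Ioi,
      ← MeasureTheory.integral_indicator measurableSet_Ioi]
    congr 1
    ext t
    simp only [hf, Set.indicator, Set.mem_Ioi]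
    by_cases h : 1 < t
    · have : 0 < t := by linarith
      simp only [h, this, if_true, smul_eq_mul]
      rw [mul_comm]; congr 2; ring
    · simp [h]
  have hdiff : ∀ z : ℂ, 0 < z.re → DifferentiableAt ℂ (fun z => z * mellin f (-z)) z := by
    intro z hz
    have h1 : DifferentiableAt ℂ (mellin f) (-z) := by
      refine mellin_differentiableAt_of_isBigO_rpow (a := 0) (b := -z.re - 1) hfl ?_ (by simpa) ?_ (by simp)
      · refine Asymptotics.IsBigO.of_bound (q + 1) (Filter.Eventually.of_forall fun t => ?_)
        simpa using hfb t
      · refine Asymptotics.IsBigO.of_bound 0 ?_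
        filter_upwards [Ioo_mem_nhdsGT (zero_lt_one (α := ℝ))] with t ht
        simp only [hf, Set.indicator, Set.mem_Ioi, not_lt.mpr ht.2.le, if_false]
        simp
    exact differentiableAt_id.mul (h1.comp z differentiableAt_id.neg)
  have heq1 : ∀ z : ℂ, 1 < z.re → DirichletCharacter.LFunction χ z = z * mellin f (-z) := by
    intro z hz
    rw [DirichletCharacter.LFunction_eq_LSeries χ hz, hmel]
    refine LSeries_eq_mul_integral (fun n => χ (n : ZMod q)) (r := 0) le_rfl (by linarith) ?_ ?_
    · exact DirichletCharacter.LSeriesSummable_of_one_lt_re χ hz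
    · refine Asymptotics.IsBigO.of_bound (q + 1) (Filter.Eventually.of_forall fun t => ?_)
      simpa using hAb t
  have hopen : IsOpen {z : ℂ | 0 < z.re} := isOpen_lt continuous_const continuous_re
  have hconv : Convex ℝ {z : ℂ | 0 < z.re} := convex_halfSpace_re_gt 0
  have heq : Set.EqOn (DirichletCharacter.LFunction χ) (fun z => z * mellin f (-z))
      {z : ℂ | 0 < z.re} := by
    refine AnalyticOnNhd.eqOn_of_preconnected_of_eventuallyEq (𝕜 := ℂ) (z₀ := 2) ?_ ?_ hconv.isPreconnected
      (by simp) ?_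
    · exact fun z _ => (DirichletCharacter.differentiable_LFunction hχ).analyticAt z
    · exact DifferentiableOn.analyticOnNhd (fun z hz => (hdiff z hz).differentiableWithinAt) hopen
    · have : {z : ℂ | 1 < z.re} ∈ nhds (2 : ℂ) :=
        (isOpen_lt continuous_const continuous_re).mem_nhds (by simp)
      filter_upwards [this] with z hz using heq1 z hz
  have hzpos : 0 < z.re := by linarith
  rw [heq hzpos]
  simp only [norm_mul]
  rw [mul_comm]
  gcongr
  rw [hmel]
  have hIntg : MeasureTheory.IntegrableOn (fun t : ℝ => ((q : ℝ) + 1) * t ^ (-(z.re + 1))) (Set.Ioi 1) :=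
    (integrableOn_Ioi_rpow_of_lt (by linarith) zero_lt_one).const_mul _
  refine (MeasureTheory.norm_integral_le_of_norm_le hIntg ?_).trans ?_
  · refine (MeasureTheory.ae_restrict_iff' measurableSet_Ioi).mpr
      (Filter.Eventually.of_forall fun t ht => ?_)
    have ht0 : 0 < t := lt_trans zero_lt_one ht
    rw [norm_mul, Complex.norm_cpow_eq_rpow_re_of_pos ht0]
    simp only [neg_re, add_re, one_re]
    gcongr
    exact hAb _
  · rw [MeasureTheory.integral_const_mul, integral_Ioi_rpow_of_lt (by linarith) zero_lt_one]
    rw [Real.one_rpow, mul_comm 2]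
    gcongr
    rw [show -(z.re + 1) + 1 = -z.re by ring, neg_div_neg_eq, div_le_iff₀ hzpos]
    linarith


lemma EF.fe {q : ℕ} [NeZero q] (hq : 3 ≤ q) (χ : DirichletCharacter ℂ q) (hprim : χ.IsPrimitive)
    (heven : χ (-1) = 1) (t : ℂ) (ht : ∀ n : ℕ, t ≠ -n) :
    DirichletCharacter.LFunction χ (1 - t) =
      (q : ℂ) ^ (t - 1) * (2 * Real.pi) ^ (-t) * Gamma t *
        (2 * Complex.cos (Real.pi * t / 2) * gaussSum χ ZMod.stdAddChar) *
        DirichletCharacter.LFunction χ⁻¹ t := by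
  have hev : ∀ x, χ (-x) = χ x := fun x => DirichletCharacter.Even.to_fun heven x
  have hev' : ∀ x, χ⁻¹ (-x) = χ⁻¹ x := fun x => by
    refine DirichletCharacter.Even.to_fun ?_ x
    show χ⁻¹ (-1) = 1
    rw [MulChar.inv_apply_eq_inv', heven, inv_one]
  have h0 : χ 0 = 0 := by
    have : Nontrivial (ZMod q) := by
      have : Fact (1 < q) := ⟨by omega⟩
      infer_instance
    exact χ.map_zero
  have hF : ZMod.dft (χ : ZMod q → ℂ) = fun k => gaussSum χ ZMod.stdAddChar * χ⁻¹ k := by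
    ext k
    rw [hprim.fourierTransform_eq_inv_mul_gaussSum, hev', mul_comm]
  have h := ZMod.LFunction_one_sub (χ : ZMod q → ℂ) ht (Or.inl h0)
  have h2 : (fun x => χ (-x)) = (χ : ZMod q → ℂ) := funext hev
  have hL : ZMod.LFunction (fun k => gaussSum χ ZMod.stdAddChar * χ⁻¹ k) t =
      gaussSum χ ZMod.stdAddChar * ZMod.LFunction (χ⁻¹ : DirichletCharacter ℂ q) t := by
    simp only [ZMod.LFunction, Finset.mul_sum]
    refine Finset.sum_congr rfl fun _ _ => by ring
  rw [h2, hF, hL] at h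
  simp only [DirichletCharacter.LFunction]
  rw [h, Complex.two_cos]
  rw [show (Real.pi : ℂ) * t / 2 * I = Real.pi * I * t / 2 by ring,
    show -((Real.pi : ℂ) * t / 2) * I = -Real.pi * I * t / 2 by ring]
  ring

lemma EF.gauss_ne {q : ℕ} [NeZero q] (χ : DirichletCharacter ℂ q) (hprim : χ.IsPrimitive) :
    gaussSum χ ZMod.stdAddChar ≠ 0 := by
  intro h
  have hF : ZMod.dft (χ : ZMod q → ℂ) = 0 := by
    ext k
    rw [hprim.fourierTransform_eq_inv_mul_gaussSum, h, mul_zero]; rfl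
  have : (χ : ZMod q → ℂ) = 0 := by simpa using hF
  have h1 := congrFun this 1
  simp at h1

/-- Near any point of the closed left half plane, `L` is a nonvanishing analytic function times
a cosine. -/
lemma EF.left_factor {q : ℕ} [NeZero q] (hq : 3 ≤ q) (χ : DirichletCharacter ℂ q)
    (hprim : χ.IsPrimitive) (heven : χ (-1) = 1) (hχ : χ ≠ 1) :
    ∃ K : ℂ → ℂ, (∀ z : ℂ, z.re ≤ 0 → AnalyticAt ℂ K z ∧ K z ≠ 0) ∧
      ∀ z : ℂ, z.re < 1 → DirichletCharacter.LFunction χ z =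
        K z * Complex.cos (Real.pi * (1 - z) / 2) := by
  have hχ' : χ⁻¹ ≠ 1 := by simpa using hχ
  have hq0 : (q : ℂ) ≠ 0 := by exact_mod_cast NeZero.ne q
  have hpi : (2 * Real.pi : ℂ) ≠ 0 := by
    simp [Real.pi_ne_zero]
  have hnn : ∀ z : ℂ, z.re < 1 → ∀ n : ℕ, 1 - z ≠ -n := by
    intro z hz n h
    have := congrArg re h
    simp at this
    have : (0:ℝ) ≤ n := n.cast_nonneg
    linarith
  refine ⟨fun z => (q : ℂ) ^ ((1 - z) - 1) * (2 * Real.pi) ^ (-(1 - z)) * Gamma (1 - z) *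
        (2 * gaussSum χ ZMod.stdAddChar) *
        DirichletCharacter.LFunction χ⁻¹ (1 - z), ?_, ?_⟩
  · intro z hz
    constructor
    · have hopen : IsOpen {z : ℂ | z.re < 1} := isOpen_lt continuous_re continuous_const
      refine DifferentiableOn.analyticAt (s := {z : ℂ | z.re < 1}) ?_
        (hopen.mem_nhds (by simp; linarith))
      intro w hw
      refine DifferentiableAt.differentiableWithinAt ?_
      have hd : DifferentiableAt ℂ (fun z : ℂ => 1 - z) w := by fun_prop
      refine DifferentiableAt.mul (DifferentiableAt.mul (DifferentiableAt.mul (DifferentiableAt.mul ?_ ?_) ?_) ?_) ?_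
      · exact DifferentiableAt.const_cpow (by fun_prop) (Or.inl hq0)
      · exact DifferentiableAt.const_cpow (by fun_prop) (Or.inl hpi)
      · exact (differentiableAt_Gamma (1 - w) (hnn w hw)).comp w hd
      · fun_prop
      · exact ((DirichletCharacter.differentiable_LFunction hχ') (1 - w)).comp w hd
    · refine mul_ne_zero (mul_ne_zero (mul_ne_zero (mul_ne_zero ?_ ?_) ?_) ?_) ?_
      · simp [cpow_eq_zero_iff, hq0]
      · rw [Ne, cpow_eq_zero_iff]; exact fun h => hpi h.1
      · exact Gamma_ne_zero (hnn z (by linarith))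
      · exact mul_ne_zero two_ne_zero (EF.gauss_ne χ hprim)
      · exact DirichletCharacter.LFunction_ne_zero_of_one_le_re χ⁻¹ (.inl hχ') (by simp; linarith)
  · intro z hz
    have := EF.fe hq χ hprim heven (1 - z) (hnn z hz)
    rw [sub_sub_cancel] at this
    rw [this]; ring

lemma EF.trivial_zero_order {q : ℕ} [NeZero q] (hq : 3 ≤ q) (χ : DirichletCharacter ℂ q)
    (hprim : χ.IsPrimitive) (heven : χ (-1) = 1) (hχ : χ ≠ 1) (k : ℕ) :
    DirichletCharacter.LFunction χ (-2 * (k : ℂ)) = 0 ∧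
    analyticOrderNatAt (DirichletCharacter.LFunction χ) (-2 * (k : ℂ)) = 1 := by
  obtain ⟨K, hK, hL⟩ := EF.left_factor hq χ hprim heven hχ
  have hre : ((-2 * (k : ℂ)).re) ≤ 0 := by simp
  have hcos : Complex.cos (Real.pi * (1 - (-2 * (k : ℂ))) / 2) = 0 := by
    rw [Complex.cos_eq_zero_iff]
    exact ⟨k, by push_cast; ring⟩
  have h0 : DirichletCharacter.LFunction χ (-2 * (k : ℂ)) = 0 := by
    rw [hL _ (by linarith), hcos, mul_zero]
  refine ⟨h0, ?_⟩
  have han : AnalyticAt ℂ (DirichletCharacter.LFunction χ) (-2 * (k : ℂ)) :=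
    (DirichletCharacter.differentiable_LFunction hχ).analyticAt _
  rw [analyticOrderNatAt, han.analyticOrderAt_eq_one_of_zero_deriv_ne_zero h0]
  · rfl
  · have hopen : IsOpen {z : ℂ | z.re < 1} := isOpen_lt continuous_re continuous_const
    have hev : DirichletCharacter.LFunction χ =ᶠ[nhds (-2 * (k : ℂ))]
        fun z => K z * Complex.cos (Real.pi * (1 - z) / 2) := by
      filter_upwards [hopen.mem_nhds (show (-2 * (k : ℂ)).re < 1 by linarith)] with z hz
      exact hL z hz
    rw [hev.deriv_eq]
    have hd1 : HasDerivAt (fun z : ℂ => (Real.pi : ℂ) * (1 - z) / 2) (-(Real.pi : ℂ) / 2) (-2 * (k : ℂ)) := by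
      have := (((hasDerivAt_id (-2 * (k : ℂ))).const_sub 1).const_mul (Real.pi : ℂ)).div_const 2
      simpa using this
    have hd := (hK _ hre).1.differentiableAt.hasDerivAt.mul hd1.ccos
    have hd' := hd.deriv
    have e : (K * fun x => Complex.cos (Real.pi * (1 - x) / 2)) =
      fun z => K z * Complex.cos (Real.pi * (1 - z) / 2) := rfl
    rw [e] at hd'
    rw [hd', hcos, mul_zero, zero_add]
    refine mul_ne_zero (hK _ hre).2 (mul_ne_zero ?_ ?_)
    · intro hsin
      have := Complex.sin_sq_add_cos_sq (Real.pi * (1 - (-2 * (k : ℂ))) / 2)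
      rw [hcos] at this
      rw [neg_eq_zero] at hsin
      rw [hsin] at this
      norm_num at this
    · simp [Real.pi_ne_zero]

lemma EF.zero_classify {q : ℕ} [NeZero q] (hq : 3 ≤ q) (χ : DirichletCharacter ℂ q)
    (hprim : χ.IsPrimitive) (heven : χ (-1) = 1) (hχ : χ ≠ 1) (z : ℂ)
    (hz : DirichletCharacter.LFunction χ z = 0) :
    (0 < z.re ∧ z.re < 1) ∨ ∃ k : ℕ, z = -2 * (k : ℂ) := by
  have h1 : z.re < 1 := by
    by_contra h
    exact DirichletCharacter.LFunction_ne_zero_of_one_le_re χ (.inl hχ) (not_lt.mp h) hz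
  by_cases h0 : 0 < z.re
  · exact Or.inl ⟨h0, h1⟩
  right
  obtain ⟨K, hK, hL⟩ := EF.left_factor hq χ hprim heven hχ
  rw [hL z h1] at hz
  have hc := (mul_eq_zero.mp hz).resolve_left (hK z (not_lt.mp h0)).2
  rw [Complex.cos_eq_zero_iff] at hc
  obtain ⟨n, hn⟩ := hc
  have hpi : (Real.pi : ℂ) ≠ 0 := by simp [Real.pi_ne_zero]
  have hz2 : z = -2 * (n : ℂ) := by
    have : (Real.pi : ℂ) * (1 - z) = Real.pi * (2 * n + 1) := by
      linear_combination 2 * hn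
    have := mul_left_cancel₀ hpi this
    linear_combination -this
  have hn0 : 0 ≤ n := by
    rw [hz2] at h0
    simp at h0
    exact_mod_cast h0
  obtain ⟨k, rfl⟩ := Int.eq_ofNat_of_zero_le hn0
  exact ⟨k, by simpa using hz2⟩


lemma EF.norm_Gamma_le (t : ℂ) (ht : 0 < t.re) : ‖Gamma t‖ ≤ Real.Gamma t.re := by
  rw [Complex.Gamma_eq_integral ht, Real.Gamma_eq_integral ht, Complex.GammaIntegral]
  refine (MeasureTheory.norm_integral_le_integral_norm _).trans (le_of_eq ?_)
  refine MeasureTheory.setIntegral_congr_fun measurableSet_Ioi fun x hx => ?_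
  simp only [norm_mul]
  rw [Complex.norm_cpow_eq_rpow_re_of_pos hx, Complex.norm_real, Real.norm_of_nonneg (Real.exp_pos _).le]
  simp

lemma EF.Gamma_growth (σ N : ℝ) (h1 : 1 / 2 ≤ σ) (h2 : σ ≤ N) (hN : 1 ≤ N) :
    Real.Gamma σ ≤ Real.exp ((1 + 2 * (4 : ℝ) ^ (3 / 2 : ℝ)) * N ^ (3 / 2 : ℝ)) := by
  have hM1 : 1 ≤ N ^ (3 / 2 : ℝ) := Real.one_le_rpow hN (by norm_num)
  have hσ : 0 < σ := by linarith
  set n : ℕ := ⌈N⌉₊ + 1 with hn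
  have hn1 : N ≤ ⌈N⌉₊ := Nat.le_ceil N
  have hn2 : (⌈N⌉₊ : ℝ) < N + 1 := Nat.ceil_lt_add_one (by linarith)
  have hnr : (n : ℝ) ≤ 4 * N := by simp [hn]; linarith
  have hnpos : (0 : ℝ) < n := by positivity
  have e1 : Real.Gamma (σ + 1) = σ * Real.Gamma σ := Real.Gamma_add_one hσ.ne'
  have e2 : Real.Gamma (σ + 1 + 1) = (σ + 1) * Real.Gamma (σ + 1) :=
    Real.Gamma_add_one (by linarith)
  have p1 := Real.Gamma_pos_of_pos hσ
  have e3 : Real.Gamma (σ + 1 + 1) ≤ Real.Gamma (n + 1) := by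
    refine Real.Gamma_strictMonoOn_Ici.monotoneOn ?_ ?_ ?_
    · simp; linarith
    · simp [hn]; linarith
    · simp [hn]; linarith
  rw [Real.Gamma_nat_eq_factorial] at e3
  have e4 : (n.factorial : ℝ) ≤ (n : ℝ) ^ n := by exact_mod_cast Nat.factorial_le_pow n
  have e5 : (n : ℝ) ^ n = Real.exp (n * Real.log n) := by
    rw [mul_comm, Real.exp_mul, Real.exp_log hnpos, Real.rpow_natCast]
  have e6 : Real.log n ≤ 2 * (n : ℝ) ^ (1 / 2 : ℝ) := by
    have := Real.log_le_rpow_div hnpos.le (show (0 : ℝ) < 1 / 2 by norm_num)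
    linarith
  have e7 : (n : ℝ) * (n : ℝ) ^ (1 / 2 : ℝ) = (n : ℝ) ^ (3 / 2 : ℝ) := by
    nth_rewrite 1 [← Real.rpow_one (n : ℝ)]
    rw [← Real.rpow_add hnpos]; norm_num
  have e8 : (n : ℝ) ^ (3 / 2 : ℝ) ≤ (4 : ℝ) ^ (3 / 2 : ℝ) * N ^ (3 / 2 : ℝ) := by
    rw [← Real.mul_rpow (by norm_num) (by linarith)]
    exact Real.rpow_le_rpow hnpos.le hnr (by norm_num)
  have e9 : (n : ℝ) * Real.log n ≤ 2 * (4 : ℝ) ^ (3 / 2 : ℝ) * N ^ (3 / 2 : ℝ) := by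
    have := mul_le_mul_of_nonneg_left e6 hnpos.le
    nlinarith
  have e10 : Real.Gamma (σ + 1 + 1) ≤ Real.exp (2 * (4 : ℝ) ^ (3 / 2 : ℝ) * N ^ (3 / 2 : ℝ)) := by
    rw [e5] at e4
    exact e3.trans (e4.trans (Real.exp_le_exp.mpr e9))
  have e11 : Real.Gamma σ ≤ 2 * Real.Gamma (σ + 1 + 1) := by
    rw [e2, e1]
    have : 1 ≤ 2 * ((σ + 1) * σ) := by nlinarith
    nlinarith
  have e12 : 2 ≤ Real.exp (N ^ (3 / 2 : ℝ)) := by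
    have := Real.add_one_le_exp (N ^ (3 / 2 : ℝ)); linarith
  rw [add_mul, one_mul, Real.exp_add]
  refine e11.trans ?_
  have := (Real.Gamma_pos_of_pos (show 0 < σ + 1 + 1 by linarith)).le
  gcongr

lemma EF.norm_cos_le (z : ℂ) : ‖Complex.cos z‖ ≤ Real.exp ‖z‖ := by
  rw [Complex.cos, norm_div, Complex.norm_ofNat]
  have h1 := Complex.norm_exp_le_exp_norm (z * I)
  have h2 := Complex.norm_exp_le_exp_norm (-z * I)
  simp only [norm_mul, norm_neg, norm_I, mul_one] at h1 h2
  have := norm_add_le (cexp (z * I)) (cexp (-z * I))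
  rw [div_le_iff₀ two_pos]; linarith

lemma EF.L_growth {q : ℕ} [NeZero q] (hq : 3 ≤ q) (χ : DirichletCharacter ℂ q)
    (hprim : χ.IsPrimitive) (heven : χ (-1) = 1) (hχ : χ ≠ 1) :
    ∃ C : ℝ, 0 ≤ C ∧ ∀ z : ℂ, ‖DirichletCharacter.LFunction χ z‖ ≤
      Real.exp (C * (1 + ‖z‖) ^ (3 / 2 : ℝ)) := by
  have hχ' : χ⁻¹ ≠ 1 := by simpa using hχ
  set G := ‖gaussSum χ ZMod.stdAddChar‖ with hG
  set c1 : ℝ := 2 * (q + 1) + 1 with hc1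
  set c2 : ℝ := 1 + 2 * (4 : ℝ) ^ (3 / 2 : ℝ) with hc2
  have hlq : 0 ≤ Real.log q := Real.log_natCast_nonneg q
  have hqp : (0 : ℝ) < q := by exact_mod_cast NeZero.pos q
  have hc2p : 0 ≤ c2 := by positivity
  have hc1p : 0 ≤ c1 := by positivity
  have hGp : 0 ≤ G := norm_nonneg _
  have hright : ∀ (ψ : DirichletCharacter ℂ q), ψ ≠ 1 → ∀ (z : ℂ) (N : ℝ), 1 / 2 ≤ z.re → ‖z‖ ≤ N →
      1 ≤ N → ‖DirichletCharacter.LFunction ψ z‖ ≤ Real.exp (c1 * N ^ (3 / 2 : ℝ)) := by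
    intro ψ hψ z N hz hN hN1
    have hM1 : 1 ≤ N ^ (3 / 2 : ℝ) := Real.one_le_rpow hN1 (by norm_num)
    have hM2 : N ≤ N ^ (3 / 2 : ℝ) := Real.self_le_rpow_of_one_le hN1 (by norm_num)
    refine (EF.L_bound_right ψ hψ z hz).trans ?_
    have a1 := Real.add_one_le_exp (2 * ((q : ℝ) + 1))
    have a2 := Real.add_one_le_exp N
    calc 2 * ((q : ℝ) + 1) * ‖z‖ ≤ Real.exp (2 * (q + 1)) * Real.exp N := by
          gcongr <;> linarith
      _ = Real.exp (2 * (q + 1) + N) := (Real.exp_add _ _).symm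
      _ ≤ _ := by
          refine Real.exp_le_exp.mpr ?_
          rw [hc1]
          nlinarith
  refine ⟨c1 + (Real.log q + c2 + 1 + 2 + G + c1), by positivity, fun z => ?_⟩
  set N := 1 + ‖z‖ with hNdef
  have hN1 : 1 ≤ N := by have := norm_nonneg z; linarith
  have hM1 : 1 ≤ N ^ (3 / 2 : ℝ) := Real.one_le_rpow hN1 (by norm_num)
  have hM2 : N ≤ N ^ (3 / 2 : ℝ) := Real.self_le_rpow_of_one_le hN1 (by norm_num)
  set M := N ^ (3 / 2 : ℝ) with hM
  by_cases hz : 1 / 2 ≤ z.re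
  · refine (hright χ hχ z N hz (by linarith) hN1).trans (Real.exp_le_exp.mpr ?_)
    gcongr
    have : 0 ≤ Real.log q + c2 + 1 + 2 + G + c1 := by positivity
    linarith
  · push Not at hz
    set t := 1 - z with ht
    have htre : t.re = 1 - z.re := by simp [ht]
    have htN : ‖t‖ ≤ N := by
      have := norm_sub_le 1 z; simpa using this
    have htre2 : 1 / 2 ≤ t.re := by linarith
    have hfe := EF.fe hq χ hprim heven t (fun n h => by
      have := congrArg re h
      simp only [neg_re, natCast_re] at this
      have : (0:ℝ) ≤ n := n.cast_nonneg
      linarith)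
    rw [ht, sub_sub_cancel, ← ht] at hfe
    rw [hfe]
    simp only [norm_mul]
    have b1 : ‖(q : ℂ) ^ (t - 1)‖ ≤ Real.exp (Real.log q * M) := by
      rw [Complex.norm_natCast_cpow_of_pos (NeZero.pos q), Real.rpow_def_of_pos hqp]
      refine Real.exp_le_exp.mpr (mul_le_mul_of_nonneg_left ?_ hlq)
      have := (re_le_norm t)
      simp only [sub_re, one_re]; linarith
    have b2 : ‖(2 * Real.pi : ℂ) ^ (-t)‖ ≤ 1 := by
      have h2pi : 0 < 2 * Real.pi := by positivity
      have := Complex.norm_cpow_eq_rpow_re_of_pos h2pi (-t)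
      push_cast at this
      rw [this]
      refine Real.rpow_le_one_of_one_le_of_nonpos ?_ (by simp; linarith)
      have := Real.pi_gt_three; linarith
    have b3 : ‖Gamma t‖ ≤ Real.exp (c2 * M) :=
      (EF.norm_Gamma_le t (by linarith)).trans
        (EF.Gamma_growth t.re N htre2 ((re_le_norm t).trans htN) hN1)
    have b4 : ‖Complex.cos (Real.pi * t / 2)‖ ≤ Real.exp (2 * M) := by
      refine (EF.norm_cos_le _).trans (Real.exp_le_exp.mpr ?_)
      rw [norm_div, norm_mul, Complex.norm_real, Real.norm_of_nonneg Real.pi_pos.le, Complex.norm_ofNat]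
      have := Real.pi_lt_four
      have := norm_nonneg t
      nlinarith
    have b5 : ‖(2 : ℂ)‖ ≤ Real.exp (1 * M) := by
      have := Real.add_one_le_exp (1 * M)
      rw [Complex.norm_ofNat]; linarith
    have b6 : G ≤ Real.exp (G * M) := by
      have := Real.add_one_le_exp (G * M)
      nlinarith
    have b7 := hright χ⁻¹ hχ' t N htre2 htN hN1
    calc _ ≤ Real.exp (Real.log q * M) * 1 * Real.exp (c2 * M) *
          (Real.exp (1 * M) * Real.exp (2 * M) * Real.exp (G * M)) * Real.exp (c1 * M) := by
          gcongr
      _ = Real.exp ((Real.log q + c2 + 1 + 2 + G + c1) * M) := by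
          simp only [mul_one, ← Real.exp_add]
          congr 1; ring
      _ ≤ _ := by
          refine Real.exp_le_exp.mpr (mul_le_mul_of_nonneg_right ?_ (by linarith))
          linarith

lemma EF.L_growth_shift {q : ℕ} [NeZero q] (hq : 3 ≤ q) (χ : DirichletCharacter ℂ q)
    (hprim : χ.IsPrimitive) (heven : χ (-1) = 1) (hχ : χ ≠ 1) (s : ℂ) :
    ∃ C : ℝ, 0 ≤ C ∧ ∀ R : ℝ, 1 ≤ R → ∀ w : ℂ, ‖w‖ ≤ R →
      ‖DirichletCharacter.LFunction χ (s + w)‖ ≤ Real.exp (C * R ^ (3 / 2 : ℝ)) := by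
  obtain ⟨C, hC, h⟩ := EF.L_growth hq χ hprim heven hχ
  refine ⟨C * (‖s‖ + 2) ^ (3 / 2 : ℝ), by positivity, fun R hR w hw => ?_⟩
  refine (h _).trans (Real.exp_le_exp.mpr ?_)
  rw [mul_assoc, ← Real.mul_rpow (by positivity) (by linarith)]
  have := norm_add_le s w
  have := norm_nonneg s
  refine mul_le_mul_of_nonneg_left (Real.rpow_le_rpow (by positivity) ?_ (by norm_num)) hC
  nlinarith


lemma EF.norm_exp_mul (w : ℂ) (u : ℝ) : ‖cexp (-w * u)‖ = Real.exp (-w.re * u) := by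
  rw [Complex.norm_exp]; simp

lemma EF.exp_int (d : ℝ) (hd : 0 < d) (M : ℝ) :
    MeasureTheory.IntegrableOn (fun u : ℝ => M * Real.exp (-d * u)) (Set.Ioi 0) :=
  (integrableOn_exp_mul_Ioi (a := -d) (by linarith) 0).const_mul M

lemma EF.bound_aux (T : ℂ) (M σ : ℝ) (w : ℂ) (u : ℝ) (hb : ‖T‖ ≤ M * Real.exp (σ * u)) :
    ‖cexp (-w * u) * T‖ ≤ M * Real.exp (-(w.re - σ) * u) := by
  rw [norm_mul, EF.norm_exp_mul]
  calc _ ≤ Real.exp (-w.re * u) * (M * Real.exp (σ * u)) := by gcongr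
    _ = _ := by
      rw [mul_left_comm, ← Real.exp_add]; congr 2; ring

lemma EF.integrable_of_bound (T : ℝ → ℂ) (hT : ContinuousOn T (Set.Ioi 0)) (M σ : ℝ)
    (hb : ∀ u, 0 < u → ‖T u‖ ≤ M * Real.exp (σ * u)) (w : ℂ) (hw : σ < w.re) :
    MeasureTheory.IntegrableOn (fun u : ℝ => cexp (-w * u) * T u) (Set.Ioi 0) := by
  refine MeasureTheory.Integrable.mono' (EF.exp_int (w.re - σ) (by linarith) M) ?_ ?_
  · refine ContinuousOn.aestronglyMeasurable (ContinuousOn.mul ?_ hT) measurableSet_Ioi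
    exact Continuous.continuousOn (by fun_prop)
  · refine (MeasureTheory.ae_restrict_iff' measurableSet_Ioi).mpr
      (Filter.Eventually.of_forall fun u hu => EF.bound_aux _ _ _ _ _ (hb u hu))

lemma EF.laplace_sum {ι : Type*} [Countable ι] (T : ι → ℝ → ℂ) (hT : ∀ i, Continuous (T i))
    (M : ι → ℝ) (hM : Summable M) (σ : ℝ) (hσ : 0 ≤ σ)
    (hb : ∀ i u, 0 < u → ‖T i u‖ ≤ M i * Real.exp (σ * u)) :
    ContinuousOn (fun u => ∑' i, T i u) (Set.Ioi 0) ∧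
    (∀ u, 0 < u → Summable fun i => T i u) ∧
    ∀ w : ℂ, σ < w.re →
      MeasureTheory.IntegrableOn (fun u : ℝ => cexp (-w * u) * ∑' i, T i u) (Set.Ioi 0) ∧
      HasSum (fun i => ∫ u : ℝ in Set.Ioi 0, cexp (-w * u) * T i u)
        (∫ u : ℝ in Set.Ioi 0, cexp (-w * u) * ∑' i, T i u) := by
  have hM0 : ∀ i, 0 ≤ M i := fun i => by
    have := (norm_nonneg _).trans (hb i 1 one_pos)
    exact nonneg_of_mul_nonneg_left this (Real.exp_pos _)
  have hsum : ∀ u, 0 < u → Summable fun i => ‖T i u‖ := fun u hu =>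
    Summable.of_nonneg_of_le (fun i => norm_nonneg _) (fun i => hb i u hu) (hM.mul_right _)
  have hcont : ContinuousOn (fun u => ∑' i, T i u) (Set.Ioi 0) := by
    intro u hu
    have : ContinuousOn (fun u => ∑' i, T i u) (Set.Ioo 0 (u + 1)) := by
      refine continuousOn_tsum (u := fun i => M i * Real.exp (σ * (u + 1)))
        (fun i => (hT i).continuousOn) (hM.mul_right _) ?_
      intro i v hv
      refine (hb i v hv.1).trans ?_
      have := hM0 i
      have := hv.2.le
      gcongr
    exact (this.continuousAt (Ioo_mem_nhds hu (by linarith))).continuousWithinAt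
  refine ⟨hcont, fun u hu => (hsum u hu).of_norm, fun w hw => ⟨?_, ?_⟩⟩
  · refine EF.integrable_of_bound _ hcont (∑' i, M i) σ ?_ w hw
    intro u hu
    refine (norm_tsum_le_tsum_norm (hsum u hu)).trans ?_
    rw [← tsum_mul_right]
    exact (hsum u hu).tsum_le_tsum (fun i => hb i u hu) (hM.mul_right _)
  · have hIntg : ∀ i, MeasureTheory.IntegrableOn (fun u : ℝ => cexp (-w * u) * T i u) (Set.Ioi 0) :=
      fun i => EF.integrable_of_bound _ (hT i).continuousOn (M i) σ (hb i) w hw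
    have h := MeasureTheory.hasSum_integral_of_summable_integral_norm hIntg ?_
    · simpa only [tsum_mul_left] using h
    · have hd : 0 < w.re - σ := by linarith
      set K := ∫ u : ℝ in Set.Ioi 0, Real.exp (-(w.re - σ) * u)
      refine Summable.of_nonneg_of_le (fun i => MeasureTheory.integral_nonneg fun _ => norm_nonneg _)
        (fun i => ?_) (hM.mul_right K)
      rw [← MeasureTheory.integral_const_mul]
      refine MeasureTheory.setIntegral_mono_on (hIntg i).norm (EF.exp_int _ hd _) measurableSet_Ioi ?_
      intro u hu
      exact EF.bound_aux _ _ _ _ _ (hb i u hu)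

lemma EF.max_bound (σ : ℝ) (hσ : 0 < σ) (x : ℝ) : max x 0 ≤ (1 / σ) * Real.exp (σ * x) := by
  have h := Real.add_one_le_exp (σ * x)
  refine max_le ?_ (by positivity)
  rw [one_div, inv_mul_eq_div, le_div_iff₀ hσ]; linarith

lemma EF.laplace_max (l : ℝ) (hl : 0 ≤ l) (w : ℂ) (hw : 0 < w.re) :
    ∫ u : ℝ in Set.Ioi 0, cexp (-w * u) * ((max (u - l) 0 : ℝ) : ℂ) = cexp (-w * l) / w ^ 2 := by
  have hw0 : w ≠ 0 := by rintro rfl; simp at hw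
  have hb : ∀ u : ℝ, 0 < u → ‖((max (u - l) 0 : ℝ) : ℂ)‖ ≤
      (1 / (w.re / 2)) * Real.exp ((w.re / 2) * u) := by
    intro u hu
    rw [Complex.norm_real, Real.norm_of_nonneg (le_max_right _ _)]
    refine (EF.max_bound (w.re / 2) (by linarith) (u - l)).trans ?_
    gcongr
    linarith
  have hIntg := EF.integrable_of_bound (fun u : ℝ => ((max (u - l) 0 : ℝ) : ℂ))
    (Continuous.continuousOn (by fun_prop)) _ _ hb w (by linarith)
  have hsub : Set.Ioi l ⊆ Set.Ioi (0 : ℝ) := Set.Ioi_subset_Ioi hl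
  rw [MeasureTheory.setIntegral_eq_of_subset_of_forall_sdiff_eq_zero measurableSet_Ioi hsub]
  swap
  · intro u hu
    have : u ≤ l := not_lt.mp hu.2
    rw [max_eq_right (by linarith)]; simp
  have hdec : Filter.Tendsto (fun u : ℝ => Real.exp (-(w.re / 2) * u)) Filter.atTop (nhds 0) := by
    refine Real.tendsto_exp_atBot.comp ?_
    exact Filter.tendsto_id.const_mul_atTop_of_neg (by linarith)
  have h := MeasureTheory.integral_Ioi_of_hasDerivAt_of_tendsto' (a := l)
    (f := fun u : ℝ => -((((u : ℂ) - l) / w + 1 / w ^ 2) * cexp (-w * u)))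
    (f' := fun u : ℝ => cexp (-w * u) * ((max (u - l) 0 : ℝ) : ℂ)) (m := 0) ?_ (hIntg.mono_set hsub) ?_
  · rw [h]; simp; ring
  · intro u hu
    have hu' : l ≤ u := hu
    rw [max_eq_left (by linarith)]
    have h1 : HasDerivAt (fun u : ℝ => (u : ℂ)) 1 u := by
      simpa using (hasDerivAt_id u).ofReal_comp
    have h2 := ((((h1.sub_const (l : ℂ)).div_const w).add_const (1 / w ^ 2)).mul
      (h1.const_mul (-w)).cexp).neg
    refine h2.congr_deriv ?_
    push_cast
    field_simp
    ring
  · have hb2 : ∀ᶠ u : ℝ in Filter.atTop,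
        ‖-((((u : ℂ) - l) / w + 1 / w ^ 2) * cexp (-w * u))‖ ≤
          ((1 / (w.re / 2)) / ‖w‖ + 1 / ‖w‖ ^ 2) * Real.exp (-(w.re / 2) * u) := by
      filter_upwards [Filter.eventually_ge_atTop l, Filter.eventually_gt_atTop 0] with u hu hu0
      have e1 := hb u hu0
      rw [max_eq_left (by linarith)] at e1
      push_cast at e1
      rw [norm_neg, norm_mul, EF.norm_exp_mul]
      have e2 : Real.exp (-w.re * u) = Real.exp (-(w.re / 2) * u) * Real.exp (-(w.re / 2) * u) := by
        rw [← Real.exp_add]; congr 1; ring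
      have e3 : Real.exp ((w.re / 2) * u) * Real.exp (-(w.re / 2) * u) = 1 := by
        rw [← Real.exp_add, ← Real.exp_zero]; congr 1; ring
      have e4 : 1 ≤ Real.exp ((w.re / 2) * u) := Real.one_le_exp (by positivity)
      have e5 : ‖((u : ℂ) - l) / w + 1 / w ^ 2‖ ≤
          ((1 / (w.re / 2)) / ‖w‖ + 1 / ‖w‖ ^ 2) * Real.exp ((w.re / 2) * u) := by
        refine (norm_add_le _ _).trans ?_
        rw [norm_div, norm_div, norm_pow, norm_one, add_mul]
        refine add_le_add ?_ ?_
        · rw [div_mul_eq_mul_div]; gcongr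
        · exact le_mul_of_one_le_right (by positivity) e4
      calc _ ≤ (((1 / (w.re / 2)) / ‖w‖ + 1 / ‖w‖ ^ 2) * Real.exp ((w.re / 2) * u)) *
            (Real.exp (-(w.re / 2) * u) * Real.exp (-(w.re / 2) * u)) := by
            rw [e2]; gcongr
        _ = ((1 / (w.re / 2)) / ‖w‖ + 1 / ‖w‖ ^ 2) * Real.exp (-(w.re / 2) * u) *
          (Real.exp ((w.re / 2) * u) * Real.exp (-(w.re / 2) * u)) := by ring
        _ = _ := by rw [e3, mul_one]
    refine squeeze_zero_norm' hb2 ?_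
    have := hdec.const_mul ((1 / (w.re / 2)) / ‖w‖ + 1 / ‖w‖ ^ 2)
    rwa [mul_zero] at this

lemma EF.laplace_exp (r : ℂ) (w : ℂ) (hw : r.re < w.re) :
    ∫ u : ℝ in Set.Ioi 0, cexp (-w * u) * cexp (u * r) = 1 / (w - r) := by
  have h := integral_exp_mul_complex_Ioi (a := r - w) (by simp; linarith) 0
  have e : ∀ u : ℝ, cexp (-w * u) * cexp (u * r) = cexp ((r - w) * u) := fun u => by
    rw [← Complex.exp_add]; congr 1; ring
  simp only [e]
  rw [h]
  simp
  rw [neg_div, one_div, ← inv_neg, neg_sub]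

open FourierTransform in
lemma EF.laplace_unique (D : ℝ → ℂ) (hD : ContinuousOn D (Set.Ioi 0)) (c : ℝ)
    (h : ∀ w : ℂ, w.re = c →
      MeasureTheory.IntegrableOn (fun u : ℝ => cexp (-w * u) * D u) (Set.Ioi 0) ∧
      ∫ u : ℝ in Set.Ioi 0, cexp (-w * u) * D u = 0) (u : ℝ) (hu : 0 < u) : D u = 0 := by
  set E : ℝ → ℂ := (Set.Ioi (0 : ℝ)).indicator (fun u => cexp (-(c : ℂ) * u) * D u) with hE
  have hIntg : MeasureTheory.Integrable E :=
    (MeasureTheory.integrable_indicator_iff measurableSet_Ioi).mpr (h c (by simp)).1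
  have hF : 𝓕 E = 0 := by
    ext ξ
    rw [Real.fourier_real_eq_integral_exp_smul]
    have h2 := (h (c + 2 * Real.pi * ξ * I) (by simp)).2
    rw [← MeasureTheory.integral_indicator measurableSet_Ioi] at h2
    rw [Pi.zero_apply, ← h2]
    congr 1
    ext v
    simp only [hE, Set.indicator]
    split_ifs
    · rw [smul_eq_mul, ← mul_assoc, ← Complex.exp_add]
      congr 2
      push_cast
      ring
    · simp
  have hcont : ContinuousAt E u := by
    have h1 : ContinuousAt (fun u : ℝ => cexp (-(c : ℂ) * u) * D u) u := by
      refine ContinuousAt.mul ?_ (hD.continuousAt (Ioi_mem_nhds hu))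
      exact Continuous.continuousAt (by fun_prop)
    refine h1.congr ?_
    filter_upwards [Ioi_mem_nhds hu] with v hv
    simp only [hE, Set.indicator_of_mem hv]
  have hinv := hIntg.fourierInv_fourier_eq (by rw [hF]; exact MeasureTheory.integrable_zero _ _ _) hcont
  rw [hF] at hinv
  have hz : (𝓕⁻ (0 : ℝ → ℂ)) u = 0 := by
    rw [Real.fourierInv_eq']; simp
  rw [hz] at hinv
  rw [hE, Set.indicator_of_mem (show u ∈ Set.Ioi (0:ℝ) from hu)] at hinv
  exact (mul_eq_zero.mp hinv.symm).resolve_left (Complex.exp_ne_zero _)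


lemma EF.D_zero {ι : Type*} [Countable ι] (r : ι → ℂ) (mu : ι → ℕ)
    (hsum : Summable fun i => (mu i : ℝ) / ‖r i‖ ^ 2) (σ : ℝ) (hσ : 0 < σ) (hB : ∀ i, (r i).re ≤ σ)
    (α : ℕ → ℂ) (hα : Summable fun n : ℕ => ‖α n‖ * Real.exp (-σ * Real.log n)) (a b : ℂ)
    (P : ∀ w : ℂ, σ < w.re → a / w ^ 2 + ∑' n : ℕ, α n * (cexp (-w * Real.log n) / w ^ 2) + b / w +
      ∑' i, (mu i : ℂ) / (r i) ^ 2 * (1 / (w - r i)) = 0) (u : ℝ) (hu : 0 < u) :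
    (Summable fun i => (mu i : ℂ) / (r i) ^ 2 * cexp (u * r i)) ∧
    u * a + ∑' n : ℕ, α n * ((max (u - Real.log n) 0 : ℝ) : ℂ) + b +
      ∑' i, (mu i : ℂ) / (r i) ^ 2 * cexp (u * r i) = 0 := by
  have H1 := EF.laplace_sum (fun (n : ℕ) (u : ℝ) => α n * ((max (u - Real.log n) 0 : ℝ) : ℂ))
    (fun n => by fun_prop) (fun n => (‖α n‖ * Real.exp (-σ * Real.log n)) * (1 / σ))
    (hα.mul_right _) σ hσ.le (by
      intro n u hu
      rw [norm_mul, Complex.norm_real, Real.norm_of_nonneg (le_max_right _ _)]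
      refine (mul_le_mul_of_nonneg_left (EF.max_bound σ hσ (u - Real.log n)) (norm_nonneg _)).trans
        (le_of_eq ?_)
      rw [show σ * (u - Real.log n) = -σ * Real.log n + σ * u by ring, Real.exp_add]
      ring)
  have H2 := EF.laplace_sum (fun i (u : ℝ) => (mu i : ℂ) / (r i) ^ 2 * cexp (u * r i))
    (fun i => by fun_prop) (fun i => (mu i : ℝ) / ‖r i‖ ^ 2) hsum σ hσ.le (by
      intro i u hu
      rw [norm_mul, norm_div, norm_pow, Complex.norm_natCast, Complex.norm_exp]
      gcongr
      simp only [mul_re, ofReal_re, ofReal_im, zero_mul, sub_zero]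
      rw [mul_comm]
      exact mul_le_mul_of_nonneg_right (hB i) hu.le)
  obtain ⟨c1, s1, L1⟩ := H1
  obtain ⟨c2, s2, L2⟩ := H2
  refine ⟨s2 u hu, ?_⟩
  refine EF.laplace_unique (fun u : ℝ => (u : ℂ) * a + ∑' n : ℕ, α n * ((max (u - Real.log n) 0 : ℝ) : ℂ) + b +
      ∑' i, (mu i : ℂ) / (r i) ^ 2 * cexp (u * r i)) ?_ (σ + 1) ?_ u hu
  · refine ((ContinuousOn.add ?_ c1).add continuousOn_const).add c2
    exact Continuous.continuousOn (by fun_prop)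
  · intro w hw
    have hw1 : σ < w.re := by linarith
    have hw2 : 0 < w.re := by linarith
    obtain ⟨i1, h1⟩ := L1 w hw1
    obtain ⟨i2, h2⟩ := L2 w hw1
    have hlin : MeasureTheory.IntegrableOn (fun u : ℝ => cexp (-w * u) * (u * a)) (Set.Ioi 0) := by
      refine EF.integrable_of_bound (fun u : ℝ => u * a) (Continuous.continuousOn (by fun_prop))
        (‖a‖ * (1 / σ)) σ ?_ w hw1
      intro u hu
      have := EF.max_bound σ hσ u
      rw [max_eq_left hu.le] at this
      rw [norm_mul, Complex.norm_real, Real.norm_of_nonneg hu.le, mul_comm, mul_assoc]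
      gcongr
    have hcon : MeasureTheory.IntegrableOn (fun u : ℝ => cexp (-w * u) * b) (Set.Ioi 0) := by
      refine EF.integrable_of_bound (fun u : ℝ => b) continuousOn_const ‖b‖ 0 ?_ w hw2
      intro u hu
      simp
    have vlin : ∫ u : ℝ in Set.Ioi 0, cexp (-w * u) * (u * a) = a / w ^ 2 := by
      have := EF.laplace_max 0 le_rfl w hw2
      have e : ∫ u : ℝ in Set.Ioi 0, cexp (-w * u) * (u * a) =
          ∫ u : ℝ in Set.Ioi 0, (cexp (-w * u) * ((max (u - 0) 0 : ℝ) : ℂ)) * a := by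
        refine MeasureTheory.setIntegral_congr_fun measurableSet_Ioi fun u hu => ?_
        have hu' : (0:ℝ) < u := hu
        simp only [sub_zero, max_eq_left hu'.le]
        ring
      rw [e, MeasureTheory.integral_mul_const, this]
      simp; ring
    have vcon : ∫ u : ℝ in Set.Ioi 0, cexp (-w * u) * b = b / w := by
      have := EF.laplace_exp 0 w (by simpa using hw2)
      simp only [mul_zero, Complex.exp_zero, mul_one, sub_zero] at this
      rw [MeasureTheory.integral_mul_const, this]; ring
    have v1 : ∫ u : ℝ in Set.Ioi 0, cexp (-w * u) * ∑' n : ℕ, α n * ((max (u - Real.log n) 0 : ℝ) : ℂ) =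
        ∑' n : ℕ, α n * (cexp (-w * Real.log n) / w ^ 2) := by
      rw [← h1.tsum_eq]
      refine tsum_congr fun n => ?_
      rw [← EF.laplace_max (Real.log n) (Real.log_natCast_nonneg n) w hw2,
        ← MeasureTheory.integral_const_mul]
      congr 1; ext u; ring
    have v2 : ∫ u : ℝ in Set.Ioi 0, cexp (-w * u) * ∑' i, (mu i : ℂ) / (r i) ^ 2 * cexp (u * r i) =
        ∑' i, (mu i : ℂ) / (r i) ^ 2 * (1 / (w - r i)) := by
      rw [← h2.tsum_eq]
      refine tsum_congr fun i => ?_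
      rw [← EF.laplace_exp (r i) w (by have := hB i; linarith), ← MeasureTheory.integral_const_mul]
      congr 1; ext u; ring
    simp only [mul_add]
    refine ⟨((hlin.add i1).add hcon).add i2, ?_⟩
    have A1 := MeasureTheory.integral_add hlin i1
    have A2 := MeasureTheory.integral_add (hlin.add i1) hcon
    have A3 := MeasureTheory.integral_add ((hlin.add i1).add hcon) i2
    simp only [Pi.add_apply] at A1 A2 A3
    rw [A3, A2, A1, vlin, vcon, v1, v2]
    exact P w hw1


lemma EF.natexp (n : ℕ) (hn : n ≠ 0) (w : ℂ) : cexp (-w * Real.log n) = (n : ℂ) ^ (-w) := by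
  rw [Complex.cpow_def_of_ne_zero (by exact_mod_cast hn), mul_comm, Complex.ofReal_log (by positivity)]
  simp

lemma EF.zeros_countable (f : ℂ → ℂ) (hf : Differentiable ℂ f) (h0 : f 0 ≠ 0) :
    Countable {ρ : ℂ // f ρ = 0} := by
  have : {ρ : ℂ | f ρ = 0} ⊆ ⋃ n : ℕ, {z | f z = 0 ∧ ‖z‖ ≤ (n : ℝ)} := by
    intro z hz
    obtain ⟨n, hn⟩ := exists_nat_ge ‖z‖
    exact Set.mem_iUnion.mpr ⟨n, hz, hn⟩
  exact ((Set.countable_iUnion fun n : ℕ => (EF.zeros_finite f hf h0 n).countable).mono this).to_subtype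

lemma EF.key {q : ℕ} [NeZero q] (hq : 3 ≤ q)
    (χ : DirichletCharacter ℂ q) (hprim : χ.IsPrimitive)
    (heven : χ (-1) = 1) (hχ : χ ≠ 1) (s : ℂ)
    (hs : DirichletCharacter.LFunction χ s ≠ 0) (u : ℝ) (hu : 0 < u) :
    (Summable fun ρ : {ρ : ℂ // (fun w => DirichletCharacter.LFunction χ (s + w)) ρ = 0} =>
      (analyticOrderNatAt (fun w => DirichletCharacter.LFunction χ (s + w)) (ρ : ℂ) : ℂ) /
        (ρ : ℂ) ^ 2 * cexp (u * ρ)) ∧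
    u * logDeriv (fun w => DirichletCharacter.LFunction χ (s + w)) 0 +
      ∑' n : ℕ, ((ArithmeticFunction.vonMangoldt n : ℂ) * χ (n : ZMod q) * (n : ℂ) ^ (-s)) *
        ((max (u - Real.log n) 0 : ℝ) : ℂ) +
      deriv (logDeriv (fun w => DirichletCharacter.LFunction χ (s + w))) 0 +
      ∑' ρ : {ρ : ℂ // (fun w => DirichletCharacter.LFunction χ (s + w)) ρ = 0},
        (analyticOrderNatAt (fun w => DirichletCharacter.LFunction χ (s + w)) (ρ : ℂ) : ℂ) /
        (ρ : ℂ) ^ 2 * cexp (u * ρ) = 0 := by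
  set f : ℂ → ℂ := fun w => DirichletCharacter.LFunction χ (s + w) with hfdef
  have hLd := DirichletCharacter.differentiable_LFunction hχ
  have hf : Differentiable ℂ f := hLd.comp (by fun_prop)
  have h0 : f 0 ≠ 0 := by simpa [hfdef] using hs
  obtain ⟨C, hC, hb⟩ := EF.L_growth_shift hq χ hprim heven hχ s
  obtain ⟨Ha, Hb, Hc⟩ := EF.hadamard f hf h0 C hC hb
  have := EF.zeros_countable f hf h0
  set σ : ℝ := |1 - s.re| + 1 with hσ
  have hσ0 : 0 < σ := by positivity
  have hσ1 : 1 - s.re ≤ |1 - s.re| := le_abs_self _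
  have hfne : ∀ w : ℂ, σ < w.re → 1 < (s + w).re := by
    intro w hw; simp only [add_re]; linarith
  have hterm : ∀ (w : ℂ) (n : ℕ),
      ((ArithmeticFunction.vonMangoldt n : ℂ) * χ (n : ZMod q) * (n : ℂ) ^ (-s)) *
        cexp (-w * Real.log n) =
      LSeries.term ((fun n : ℕ => χ (n : ZMod q)) * fun n : ℕ => (ArithmeticFunction.vonMangoldt n : ℂ)) (s + w) n := by
    intro w n
    rcases eq_or_ne n 0 with rfl | hn
    · simp
    · rw [LSeries.term_of_ne_zero hn, EF.natexp n hn, Pi.mul_apply, div_eq_mul_inv,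
        ← Complex.cpow_neg, neg_add, Complex.cpow_add _ _ (by exact_mod_cast hn)]
      ring
  refine EF.D_zero (fun ρ : {ρ : ℂ // f ρ = 0} => (ρ : ℂ))
    (fun ρ => analyticOrderNatAt f (ρ : ℂ)) Ha σ hσ0 ?_
    (fun n : ℕ => (ArithmeticFunction.vonMangoldt n : ℂ) * χ (n : ZMod q) * (n : ℂ) ^ (-s)) ?_
    (logDeriv f 0) (deriv (logDeriv f) 0) ?_ u hu
  · rintro ⟨ρ, hρ⟩
    by_contra h
    push Not at h
    exact DirichletCharacter.LFunction_ne_zero_of_one_le_re χ (.inl hχ) (hfne ρ h).le hρ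
  · have h1 := DirichletCharacter.LSeriesSummable_twist_vonMangoldt χ (s := s + (σ : ℂ))
      (by simp only [add_re, ofReal_re]; linarith)
    have h2 := h1.norm
    refine h2.congr fun n => ?_
    rw [← hterm, norm_mul, EF.norm_exp_mul]
    simp
  · intro w hw
    have hre := hfne w hw
    have hw0 : w ≠ 0 := by rintro rfl; simp at hw; linarith
    have hfw : f w ≠ 0 := DirichletCharacter.LFunction_ne_zero_of_one_le_re χ (.inl hχ) hre.le
    have hn0 : ∀ ρ : {ρ : ℂ // f ρ = 0}, (ρ : ℂ) ≠ 0 := fun ρ h => h0 (by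
      have := ρ.2
      rwa [h] at this)
    have hnw : ∀ ρ : {ρ : ℂ // f ρ = 0}, w - (ρ : ℂ) ≠ 0 := fun ρ h => hfw (by
      rw [sub_eq_zero.mp h]; exact ρ.2)
    have hL : f w = LSeries (fun n : ℕ => χ (n : ZMod q)) (s + w) :=
      DirichletCharacter.LFunction_eq_LSeries χ hre
    have hL' : deriv f w = deriv (LSeries (fun n : ℕ => χ (n : ZMod q))) (s + w) := by
      rw [← DirichletCharacter.deriv_LFunction_eq_deriv_LSeries χ hre]
      exact deriv_comp_const_add _ _ _
    have hA : ∑' n : ℕ, ((ArithmeticFunction.vonMangoldt n : ℂ) * χ (n : ZMod q) * (n : ℂ) ^ (-s)) *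
        (cexp (-w * Real.log n) / w ^ 2) = -(logDeriv f w) / w ^ 2 := by
      have := DirichletCharacter.LSeries_twist_vonMangoldt_eq χ hre
      rw [← hL, ← hL', LSeries] at this
      rw [logDeriv_apply, ← neg_div, ← this, ← tsum_div_const]
      refine tsum_congr fun n => ?_
      rw [← hterm]; ring
    have hB := ((Hc.mul_left (1 / w)).add ((Hb w hfw).mul_left (1 / w ^ 2))).tsum_eq
    have hB' : ∑' ρ : {ρ : ℂ // f ρ = 0}, (analyticOrderNatAt f (ρ : ℂ) : ℂ) / (ρ : ℂ) ^ 2 *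
        (1 / (w - (ρ : ℂ))) = 1 / w * -(deriv (logDeriv f) 0) +
          1 / w ^ 2 * (logDeriv f w - logDeriv f 0) := by
      rw [← hB]
      refine tsum_congr fun ρ => ?_
      have e1 := hn0 ρ
      have e2 := hnw ρ
      field_simp
      ring
    rw [hA, hB']
    field_simp
    ring

theorem explicit_formula_dirichlet {q : ℕ} [NeZero q] (hq : 3 ≤ q)
    (χ : DirichletCharacter ℂ q) (hprim : χ.IsPrimitive)
    (heven : χ (-1) = 1) (hnontriv : χ ≠ 1)
    (x : ℝ) (hx : 2 ≤ x) (s : ℂ)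
    (hs_nzero : DirichletCharacter.LFunction χ s ≠ 0)
    (hs_ntriv : ∀ m : ℕ, s ≠ -2 * (m : ℂ))
    (m : ℂ → ℕ)
    (hm : ∀ ρ : ℂ, DirichletCharacter.LFunction χ ρ = 0 → 0 < ρ.re → ρ.re < 1 →
      ∃ g : ℂ → ℂ, AnalyticAt ℂ g ρ ∧ g ρ ≠ 0 ∧
        ∀ᶠ z in nhds ρ, DirichletCharacter.LFunction χ z = (z - ρ) ^ m ρ * g z) :
    -(deriv (DirichletCharacter.LFunction χ) s / DirichletCharacter.LFunction χ s) =
      (∑ n ∈ Finset.Icc 2 ⌊x⌋₊,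
        (ArithmeticFunction.vonMangoldt n : ℂ) * χ (n : ZMod q) * (n : ℂ) ^ (-s) *
          ((Real.log (x / n) : ℂ) / (Real.log x : ℂ))) +
      (1 / (Real.log x : ℂ)) *
        deriv (fun z => deriv (DirichletCharacter.LFunction χ) z /
          DirichletCharacter.LFunction χ z) s +
      (1 / (Real.log x : ℂ)) *
        ∑' ρ : {ρ : ℂ // DirichletCharacter.LFunction χ ρ = 0 ∧ 0 < ρ.re ∧ ρ.re < 1},
          (m ρ : ℂ) * (x : ℂ) ^ ((ρ : ℂ) - s) / ((ρ : ℂ) - s) ^ 2 +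
      (1 / (Real.log x : ℂ)) *
        ∑' k : ℕ, (x : ℂ) ^ (-2 * (k : ℂ) - s) / (2 * (k : ℂ) + s) ^ 2 := by
  have hx0 : 0 < x := by linarith
  have hxc : (x : ℂ) ≠ 0 := by exact_mod_cast hx0.ne'
  have hu : 0 < Real.log x := Real.log_pos (by linarith)
  have huc : (Real.log x : ℂ) ≠ 0 := by exact_mod_cast hu.ne'
  obtain ⟨hS, hE⟩ := EF.key hq χ hprim heven hnontriv s hs_nzero (Real.log x) hu
  set u := Real.log x with hudef
  have hLd := DirichletCharacter.differentiable_LFunction hnontriv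
  set L := DirichletCharacter.LFunction χ with hLdef
  set f : ℂ → ℂ := fun w => L (s + w) with hfdef
  have hxe : ∀ z : ℂ, (x : ℂ) ^ z = cexp (u * z) := fun z => by
    rw [Complex.cpow_def_of_ne_zero hxc, hudef, Complex.ofReal_log hx0.le]
  have hord : ∀ ρ : ℂ, analyticOrderNatAt f (ρ - s) = analyticOrderNatAt L ρ := by
    intro ρ
    have hg : AnalyticAt ℂ (fun w : ℂ => s + w) (ρ - s) := by fun_prop
    have hd : deriv (fun w : ℂ => s + w) (ρ - s) = 1 := by
      rw [deriv_const_add, deriv_id'']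
    have := analyticOrderAt_comp_of_deriv_ne_zero (f := L) hg (by rw [hd]; exact one_ne_zero)
    rw [add_sub_cancel] at this
    unfold analyticOrderNatAt
    rw [← this]
    rfl
  have hlog : ∀ w, logDeriv f w = deriv L (s + w) / L (s + w) := fun w => by
    rw [logDeriv_apply]
    have : deriv f w = deriv L (s + w) := deriv_comp_const_add L s w
    rw [this]
  have ha : logDeriv f 0 = deriv L s / L s := by rw [hlog, add_zero]
  have hb : deriv (logDeriv f) 0 = deriv (fun z => deriv L z / L z) s := by
    have e : logDeriv f = fun w => (fun z => deriv L z / L z) (s + w) := funext hlog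
    rw [e, deriv_comp_const_add (fun z => deriv L z / L z) s 0, add_zero]
  have htriv := EF.trivial_zero_order hq χ hprim heven hnontriv
  let g : {ρ : ℂ // L ρ = 0 ∧ 0 < ρ.re ∧ ρ.re < 1} ⊕ ℕ → {ρ : ℂ // f ρ = 0} :=
    Sum.elim (fun ρ => ⟨(ρ : ℂ) - s, by
        show L (s + ((ρ : ℂ) - s)) = 0
        rw [add_sub_cancel]; exact ρ.2.1⟩)
      (fun k => ⟨-2 * (k : ℂ) - s, by
        show L (s + (-2 * (k : ℂ) - s)) = 0
        rw [add_sub_cancel]; exact (htriv k).1⟩)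
  have hg : Function.Bijective g := by
    constructor
    · rintro (⟨ρ, h1, h2, h3⟩ | k) (⟨ρ', h1', h2', h3'⟩ | k') h
      · have := congrArg Subtype.val h
        simp only [g, Sum.elim_inl, sub_left_inj] at this
        subst this; rfl
      · have := congrArg Subtype.val h
        simp only [g, Sum.elim_inl, Sum.elim_inr, sub_left_inj] at this
        rw [this] at h2; simp at h2
        have : (0 : ℝ) ≤ k' := k'.cast_nonneg
        linarith
      · have := congrArg Subtype.val h
        simp only [g, Sum.elim_inl, Sum.elim_inr, sub_left_inj] at this
        rw [← this] at h2'; simp at h2'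
        have : (0 : ℝ) ≤ k := k.cast_nonneg
        linarith
      · have := congrArg Subtype.val h
        simp only [g, Sum.elim_inr, sub_left_inj] at this
        have h3 := mul_left_cancel₀ (by norm_num : (-2 : ℂ) ≠ 0) this
        have h4 : k = k' := by exact_mod_cast h3
        rw [h4]
    · rintro ⟨w, hw⟩
      have hw' : L (s + w) = 0 := hw
      rcases EF.zero_classify hq χ hprim heven hnontriv (s + w) hw' with h | ⟨k, hk⟩
      · exact ⟨Sum.inl ⟨s + w, hw', h⟩, Subtype.ext (by simp [g])⟩
      · refine ⟨Sum.inr k, Subtype.ext ?_⟩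
        simp only [g, Sum.elim_inr]
        rw [← hk]; ring
  have hS' := (Equiv.ofBijective g hg).summable_iff.mpr hS
  rw [← (Equiv.ofBijective g hg).tsum_eq] at hE
  simp only [Equiv.ofBijective_apply] at hE
  have hSl := hS'.comp_injective (Sum.inl_injective)
  have hSr := hS'.comp_injective (Sum.inr_injective)
  have hts := Summable.tsum_sum hSl hSr
  simp only [Function.comp_apply, Equiv.ofBijective_apply] at hts
  rw [hts] at hE
  have hT1 : ∑' ρ : {ρ : ℂ // L ρ = 0 ∧ 0 < ρ.re ∧ ρ.re < 1},
      (analyticOrderNatAt f ((g (Sum.inl ρ)) : ℂ) : ℂ) / ((g (Sum.inl ρ)) : ℂ) ^ 2 *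
        cexp (u * (g (Sum.inl ρ))) =
      ∑' ρ : {ρ : ℂ // L ρ = 0 ∧ 0 < ρ.re ∧ ρ.re < 1},
          (m ρ : ℂ) * (x : ℂ) ^ ((ρ : ℂ) - s) / ((ρ : ℂ) - s) ^ 2 := by
    refine tsum_congr fun ρ => ?_
    have hval : ((g (Sum.inl ρ)) : ℂ) = (ρ : ℂ) - s := rfl
    rw [hval, hord, hxe]
    have : analyticOrderNatAt L (ρ : ℂ) = m ρ := by
      obtain ⟨G, hG1, hG2, hG3⟩ := hm ρ ρ.2.1 ρ.2.2.1 ρ.2.2.2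
      have := (AnalyticAt.analyticOrderAt_eq_natCast (n := m ρ) (hLd.analyticAt (ρ : ℂ))).mpr
        ⟨G, hG1, hG2, by simpa only [smul_eq_mul] using hG3⟩
      rw [analyticOrderNatAt, this]; rfl
    rw [this]; ring
  have hT2 : ∑' k : ℕ,
      (analyticOrderNatAt f ((g (Sum.inr k)) : ℂ) : ℂ) / ((g (Sum.inr k)) : ℂ) ^ 2 *
        cexp (u * (g (Sum.inr k))) =
      ∑' k : ℕ, (x : ℂ) ^ (-2 * (k : ℂ) - s) / (2 * (k : ℂ) + s) ^ 2 := by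
    refine tsum_congr fun k => ?_
    have hval : ((g (Sum.inr k)) : ℂ) = -2 * (k : ℂ) - s := rfl
    rw [hval, hord, (htriv k).2, hxe, show (-2 * (k : ℂ) - s) ^ 2 = (2 * (k : ℂ) + s) ^ 2 by ring]
    push_cast; ring
  have hT3 : ∑' n : ℕ, ((ArithmeticFunction.vonMangoldt n : ℂ) * χ (n : ZMod q) * (n : ℂ) ^ (-s)) *
        ((max (u - Real.log n) 0 : ℝ) : ℂ) =
      (∑ n ∈ Finset.Icc 2 ⌊x⌋₊,
        (ArithmeticFunction.vonMangoldt n : ℂ) * χ (n : ZMod q) * (n : ℂ) ^ (-s) *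
          ((Real.log (x / n) : ℂ) / (u : ℂ))) * u := by
    rw [tsum_eq_sum (s := Finset.Icc 2 ⌊x⌋₊), Finset.sum_mul]
    · refine Finset.sum_congr rfl fun n hn => ?_
      rw [Finset.mem_Icc] at hn
      have hn0 : (0 : ℝ) < n := by exact_mod_cast (by omega : 0 < n)
      have hnx : (n : ℝ) ≤ x := (Nat.le_floor_iff hx0.le).mp hn.2
      have : Real.log n ≤ u := Real.log_le_log hn0 hnx
      rw [max_eq_left (by linarith), Real.log_div hx0.ne' hn0.ne', ← hudef]
      field_simp
    · intro n hn
      rw [Finset.mem_Icc, not_and_or] at hn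
      rcases hn with hn | hn
      · have : n = 0 ∨ n = 1 := by omega
        rcases this with rfl | rfl <;> simp
      · have hnx : x < n := by
          rw [not_le] at hn
          exact (Nat.floor_lt hx0.le).mp hn
        have : u ≤ Real.log n := Real.log_le_log hx0 hnx.le
        rw [max_eq_right (by linarith)]; simp
  rw [hT1, hT2, hT3, ha, hb] at hE
  generalize deriv L s / L s = A at hE ⊢
  generalize deriv (fun z => deriv L z / L z) s = B at hE ⊢
  generalize (∑' ρ : {ρ : ℂ // L ρ = 0 ∧ 0 < ρ.re ∧ ρ.re < 1},
    (m ρ : ℂ) * (x : ℂ) ^ ((ρ : ℂ) - s) / ((ρ : ℂ) - s) ^ 2) = S1 at hE ⊢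
  generalize (∑' k : ℕ, (x : ℂ) ^ (-2 * (k : ℂ) - s) / (2 * (k : ℂ) + s) ^ 2) = S2 at hE ⊢
  generalize (∑ n ∈ Finset.Icc 2 ⌊x⌋₊,
        (ArithmeticFunction.vonMangoldt n : ℂ) * χ (n : ZMod q) * (n : ℂ) ^ (-s) *
          ((Real.log (x / n) : ℂ) / (u : ℂ))) = S3 at hE ⊢
  field_simp
  linear_combination -hE
end

section
/- Unconditionally, for any x ≥ 2 and any complex number s not equal to 1, not equal to a zero of ζ, and not in {-2, -4, -6, ...}, one has -ζ'/ζ(s) = Σ_{2 ≤ n ≤ x} Λ(n) n^{-s} · (log(x/n)/log x) + (1/log x)·(d/ds)(ζ'/ζ)(s) + (1/log x)·Σ_ρ m_ρ · x^{ρ-s}/(ρ-s)² + (1/log x)·Σ_{m=1}^{∞} x^{-2m-s}/(2m+s)² - x^{1-s}/((1-s)² log x), where ρ runs over the zeros of ζ with 0 < Re ρ < 1, each counted with its multiplicity m_ρ (order of vanishing of ζ at ρ). -/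
namespace EF

open Complex Filter Topology

lemma order_ne_top_s6 {f : ℂ → ℂ} (hf : Differentiable ℂ f) (h0 : f 0 ≠ 0) (ρ : ℂ) :
    analyticOrderAt f ρ ≠ ⊤ := by
  intro h
  rw [analyticOrderAt_eq_top] at h
  have := (AnalyticOnNhd.eqOn_zero_of_preconnected_of_eventuallyEq_zero
    (fun z _ => hf.analyticAt z) isPreconnected_univ (Set.mem_univ ρ) h) (Set.mem_univ 0)
  exact h0 this

lemma div_one_root {g : ℂ → ℂ} (hg : Differentiable ℂ g) (ρ : ℂ)
    (ho : analyticOrderAt g ρ ≠ ⊤) :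
    ∃ h : ℂ → ℂ, Differentiable ℂ h ∧ h ρ ≠ 0 ∧
      ∀ z, g z = (z - ρ) ^ analyticOrderNatAt g ρ * h z := by
  obtain ⟨h0, ha, hne, heq⟩ := (hg.analyticAt ρ).analyticOrderAt_ne_top.1 ho
  set n := analyticOrderNatAt g ρ
  classical
  refine ⟨fun z => if z = ρ then h0 ρ else g z / (z - ρ) ^ n, ?_, by simpa using hne, ?_⟩
  · intro z
    by_cases hz : z = ρ
    · subst hz
      refine ha.differentiableAt.congr_of_eventuallyEq ?_
      filter_upwards [heq] with w hw
      by_cases hwz : w = z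
      · simp [hwz]
      · have : (w - z) ^ n ≠ 0 := pow_ne_zero _ (sub_ne_zero.2 hwz)
        simp only [hwz, if_false, hw, smul_eq_mul]
        field_simp
    · have h1 : DifferentiableAt ℂ (fun z => g z / (z - ρ) ^ n) z := by
        refine (hg z).div (by fun_prop) (pow_ne_zero _ (sub_ne_zero.2 hz))
      refine h1.congr_of_eventuallyEq ?_
      filter_upwards [isOpen_ne.mem_nhds hz] with w hw
      simp [show w ≠ ρ from hw]
  · intro z
    by_cases hz : z = ρ
    · subst hz
      have := heq.self_of_nhds
      simpa using this
    · have : (z - ρ) ^ n ≠ 0 := pow_ne_zero _ (sub_ne_zero.2 hz)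
      simp only [hz, if_false]
      field_simp

lemma div_roots {f : ℂ → ℂ} (hf : Differentiable ℂ f) (h0 : f 0 ≠ 0) (S : Finset ℂ)
    (hS : ∀ ρ ∈ S, ρ ≠ 0) :
    ∃ g : ℂ → ℂ, Differentiable ℂ g ∧ (∀ ρ ∈ S, g ρ ≠ 0) ∧
      ∀ z, f z = (∏ ρ ∈ S, (1 - z / ρ) ^ analyticOrderNatAt f ρ) * g z := by
  classical
  induction S using Finset.induction_on with
  | empty => exact ⟨f, hf, by simp, by simp⟩
  | insert a S ha ih =>
    obtain ⟨g, hg, hgS, hfg⟩ := ih (fun ρ h => hS ρ (Finset.mem_insert_of_mem h))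
    have ha0 : a ≠ 0 := hS a (Finset.mem_insert_self _ _)
    set P : ℂ → ℂ := fun z => ∏ ρ ∈ S, (1 - z / ρ) ^ analyticOrderNatAt f ρ with hP
    have hPd : Differentiable ℂ P := by
      rw [hP]; fun_prop
    have hPa : P a ≠ 0 := by
      rw [hP]
      refine Finset.prod_ne_zero_iff.2 fun ρ hρ => pow_ne_zero _ ?_
      have hρ0 := hS ρ (Finset.mem_insert_of_mem hρ)
      intro h
      rw [sub_eq_zero, eq_div_iff hρ0, one_mul] at h
      exact ha (h ▸ hρ)
    have hfP : f = P * g := by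
      ext z; exact hfg z
    have hg0 : g 0 ≠ 0 := by
      intro h; apply h0; rw [hfg, h, mul_zero]
    have hord : analyticOrderNatAt f a = analyticOrderNatAt g a := by
      have h1 : analyticOrderAt P a = 0 := (hPd.analyticAt a).analyticOrderAt_eq_zero.2 hPa
      unfold analyticOrderNatAt
      conv_lhs => rw [hfP]
      rw [analyticOrderAt_mul (hPd.analyticAt a) (hg.analyticAt a), h1, zero_add]
    obtain ⟨h, hh, hha, hgh⟩ := div_one_root hg a (order_ne_top_s6 hg hg0 a)
    rw [← hord] at hgh
    set n := analyticOrderNatAt f a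
    refine ⟨fun z => (-a) ^ n * h z, by fun_prop, ?_, ?_⟩
    · intro ρ hρ
      refine mul_ne_zero (pow_ne_zero _ (neg_ne_zero.2 ha0)) ?_
      rcases Finset.mem_insert.1 hρ with rfl | h'
      · exact hha
      · intro hc
        apply hgS ρ h'
        rw [hgh, hc, mul_zero]
    · intro z
      rw [Finset.prod_insert ha, hfg z, hgh z]
      have : (z - a) ^ n = (1 - z / a) ^ n * (-a) ^ n := by
        rw [← mul_pow]; congr 1; field_simp; ring
      rw [this]; ring

/-- division with the growth bound -/
lemma div_roots_bound {f : ℂ → ℂ} (hf : Differentiable ℂ f) (h0 : f 0 ≠ 0) (S : Finset ℂ)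
    {R B : ℝ} (hR : 0 < R) (hS : ∀ ρ ∈ S, ρ ≠ 0 ∧ ‖ρ‖ ≤ R)
    (hB : ∀ z : ℂ, ‖z‖ = 3 * R → ‖f z‖ ≤ B) :
    ∃ g : ℂ → ℂ, Differentiable ℂ g ∧ (∀ ρ ∈ S, g ρ ≠ 0) ∧
      (∀ z, f z = (∏ ρ ∈ S, (1 - z / ρ) ^ analyticOrderNatAt f ρ) * g z) ∧
      g 0 = f 0 ∧ ∀ z, ‖z‖ ≤ 3 * R → ‖g z‖ * 2 ^ (∑ ρ ∈ S, analyticOrderNatAt f ρ) ≤ B := by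
  obtain ⟨g, hg, hgS, hfg⟩ := div_roots hf h0 S (fun ρ h => (hS ρ h).1)
  refine ⟨g, hg, hgS, hfg, ?_, ?_⟩
  · have := hfg 0
    simpa using this.symm
  · set N := ∑ ρ ∈ S, analyticOrderNatAt f ρ
    intro z hz
    rw [← le_div_iff₀ (by positivity)]
    have h3R : (3 * R) ≠ 0 := by positivity
    refine Complex.norm_le_of_forall_mem_frontier_norm_le (U := Metric.ball 0 (3 * R))
      Metric.isBounded_ball hg.diffContOnCl ?_ ?_
    · intro w hw
      rw [frontier_ball _ h3R] at hw
      have hw' : ‖w‖ = 3 * R := by simpa using hw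
      rw [le_div_iff₀ (by positivity)]
      refine le_trans ?_ (hB w hw')
      rw [hfg w, norm_mul, mul_comm]
      gcongr
      rw [norm_prod, ← Finset.prod_pow_eq_pow_sum]
      refine Finset.prod_le_prod (fun _ _ => by positivity) fun ρ hρ => ?_
      rw [norm_pow]
      gcongr
      have h1 : ‖w / ρ‖ ≥ 3 := by
        rw [norm_div, hw', ge_iff_le, le_div_iff₀ (norm_pos_iff.2 (hS ρ hρ).1)]
        have := (hS ρ hρ).2
        linarith
      have h2 : ‖w / ρ‖ ≤ ‖1 - w / ρ‖ + ‖(1 : ℂ)‖ := by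
        have := norm_sub_le (1 : ℂ) (1 - w / ρ)
        rw [sub_sub_cancel] at this
        linarith
      simp at h2
      rw [norm_div] at h1
      linarith
    · rw [closure_ball _ h3R]; simpa using hz

/-- Borel-Caratheodory for the second derivative of a logarithm. -/
lemma logDeriv_deriv_bound {g : ℂ → ℂ} (hg : Differentiable ℂ g) {R A : ℝ} (hR : 0 < R)
    (hA : 0 < A) (hne : ∀ z, ‖z‖ < R → g z ≠ 0)
    (hb : ∀ z, ‖z‖ < R → ‖g z‖ ≤ Real.exp A * ‖g 0‖) {z : ℂ} (hz : ‖z‖ ≤ R / 4) :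
    ‖deriv (logDeriv g) z‖ ≤ 64 * A / R ^ 2 := by
  have hd : DifferentiableOn ℂ (logDeriv g) (Metric.ball 0 R) := by
    intro w hw
    have hw' : ‖w‖ < R := by simpa using hw
    refine DifferentiableAt.differentiableWithinAt ?_
    exact (hg.deriv w).div (hg w) (hne w hw')
  obtain ⟨h, hh0, hh⟩ := (hd.isExactOn_ball).with_val_at 0 0
  have hg0 : g 0 ≠ 0 := hne 0 (by simpa using hR)
  have hexp : ∀ w ∈ Metric.ball (0 : ℂ) R, g w * exp (-h w) = g 0 := by
    intro w hw
    have hdd : ∀ u ∈ Metric.ball (0 : ℂ) R,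
        HasDerivAt (fun u => g u * exp (-h u)) 0 u := by
      intro u hu
      have hu' : g u ≠ 0 := hne u (by simpa using hu)
      have := (hg u).hasDerivAt.mul ((hh u hu).neg.cexp)
      refine HasDerivAt.congr_deriv this ?_
      simp only [logDeriv_apply]
      field_simp
      ring
    have := IsOpen.is_const_of_deriv_eq_zero (f := fun u => g u * exp (-h u))
      Metric.isOpen_ball (convex_ball (0 : ℂ) R).isPreconnected
      (fun u hu => (hdd u hu).differentiableAt.differentiableWithinAt)
      (fun u hu => (hdd u hu).deriv) hw (Metric.mem_ball_self hR)
    simpa [hh0] using this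
  have hre : Set.MapsTo h (Metric.ball 0 R) {z | z.re ≤ A} := by
    intro w hw
    have h1 := hb w (by simpa using hw)
    have h2 := hexp w hw
    rw [← h2, norm_mul, Complex.norm_exp] at h1
    have h3 : 0 < ‖g w‖ := norm_pos_iff.2 (hne w (by simpa using hw))
    have h4 : 1 ≤ Real.exp A * Real.exp ((-h w).re) := by
      have : ‖g w‖ * 1 ≤ ‖g w‖ * (Real.exp A * Real.exp ((-h w).re)) := by linarith
      exact le_of_mul_le_mul_left this h3
    rw [← Real.exp_add] at h4
    have := Real.one_le_exp_iff.1 h4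
    simp at this
    simpa using this
  have hdh : DifferentiableOn ℂ h (Metric.ball 0 R) := fun w hw =>
    (hh w hw).differentiableAt.differentiableWithinAt
  have hbd : ∀ w, ‖w‖ ≤ R / 2 → ‖h w‖ ≤ 2 * A := by
    intro w hw
    have hw' : w ∈ Metric.ball (0 : ℂ) R := by simp; linarith
    refine (borelCaratheodory_zero hA hdh hre hR hw' hh0).trans ?_
    rw [div_le_iff₀ (by linarith)]
    have : 2 * A * ‖w‖ ≤ 2 * A * (R - ‖w‖) := by gcongr; linarith
    linarith
  have hsub : Metric.closedBall z (R / 4) ⊆ Metric.ball 0 R := by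
    intro w hw
    have h1 : ‖w - z‖ ≤ R / 4 := by simpa [dist_eq_norm] using hw
    have := norm_add_le (w - z) z
    simp at this ⊢
    linarith
  have hder : deriv (logDeriv g) z = iteratedDeriv 2 h z := by
    rw [iteratedDeriv_succ, iteratedDeriv_one]
    apply Filter.EventuallyEq.deriv_eq
    filter_upwards [Metric.isOpen_ball.mem_nhds
      (hsub (Metric.mem_closedBall_self (by positivity)))] with u hu
    exact (hh u hu).deriv.symm
  rw [hder]
  have := Complex.norm_iteratedDeriv_le_of_forall_mem_sphere_norm_le (f := h) (c := z)
    (R := R / 4) (C := 2 * A) 2 (by positivity)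
    ((hdh.mono hsub).diffContOnCl_ball subset_rfl) ?_
  · refine this.trans (le_of_eq ?_)
    simp [Nat.factorial]
    field_simp
    ring
  · intro w hw
    have h1 : ‖w - z‖ = R / 4 := by simpa [dist_eq_norm] using hw
    refine hbd w ?_
    have := norm_add_le (w - z) z
    simp at this
    linarith

end EF

namespace EF

open Complex Filter Topology

noncomputable def AA (f : ℂ → ℂ) (C R : ℝ) : ℝ :=
  C * (3 * R + 3) ^ (3 / 2 : ℝ) + |Real.log ‖f 0‖| + 1

lemma zero_ne {f : ℂ → ℂ} (h0 : f 0 ≠ 0) (ρ : {z : ℂ // f z = 0}) : (ρ : ℂ) ≠ 0 := by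
  intro h
  have := ρ.2
  rw [h] at this
  exact h0 this

lemma AA_pos (f : ℂ → ℂ) {C R : ℝ} (hC : 0 < C) (hR : 0 < R) : 0 < AA f C R := by
  unfold AA; positivity

lemma exp_AA_ge {f : ℂ → ℂ} (h0 : f 0 ≠ 0) {C R : ℝ} :
    Real.exp (C * (3 * R + 3) ^ (3 / 2 : ℝ)) ≤ Real.exp (AA f C R) * ‖f 0‖ := by
  have hp : 0 < ‖f 0‖ := norm_pos_iff.2 h0
  conv_rhs => rw [← Real.exp_log hp, ← Real.exp_add]
  unfold AA
  apply Real.exp_le_exp.2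
  have := neg_abs_le (Real.log ‖f 0‖)
  linarith

lemma count_bound {f : ℂ → ℂ} (hf : Differentiable ℂ f) (h0 : f 0 ≠ 0) {C : ℝ}
    (hC : ∀ z, ‖f z‖ ≤ Real.exp (C * (‖z‖ + 3) ^ (3 / 2 : ℝ)))
    (S : Finset ℂ) {R : ℝ} (hR : 0 < R) (hS : ∀ ρ ∈ S, ρ ≠ 0 ∧ ‖ρ‖ ≤ R) :
    (∑ ρ ∈ S, (analyticOrderNatAt f ρ : ℝ)) ≤ AA f C R / Real.log 2 := by
  obtain ⟨g, hg, hgS, hfg, hg0, hb⟩ := div_roots_bound hf h0 S hR hS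
    (B := Real.exp (C * (3 * R + 3) ^ (3 / 2 : ℝ))) (fun z hz => by
      have := hC z; rwa [hz] at this)
  have h1 := hb 0 (by simp; positivity)
  rw [hg0] at h1
  have h2 := h1.trans (exp_AA_ge h0)
  rw [mul_comm] at h2
  have h3 := le_of_mul_le_mul_right h2 (norm_pos_iff.2 h0)
  have h4 := Real.log_le_log (by positivity) h3
  rw [Real.log_exp, Real.log_pow] at h4
  rw [le_div_iff₀ (Real.log_pos (by norm_num))]
  push_cast at h4
  exact h4

lemma order_pos {f : ℂ → ℂ} (hf : Differentiable ℂ f) (h0 : f 0 ≠ 0) {ρ : ℂ} (h : f ρ = 0) :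
    1 ≤ analyticOrderNatAt f ρ := by
  have h1 := (hf.analyticAt ρ).analyticOrderAt_ne_zero.2 h
  rw [Nat.one_le_iff_ne_zero]
  intro h2
  rw [analyticOrderNatAt, ENat.toNat_eq_zero] at h2
  exact h2.elim h1 (order_ne_top_s6 hf h0 ρ)

lemma summable_AA (f : ℂ → ℂ) {C δ : ℝ} (hC : 0 < C) (hδ : 0 < δ) (hδ1 : δ ≤ 1) :
    Summable (fun k : ℕ => AA f C (δ * 2 ^ (k + 1)) / Real.log 2 / (δ * 2 ^ k) ^ 2) := by
  set D := |Real.log ‖f 0‖| + 1 with hD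
  have hlog : 0 < Real.log 2 := Real.log_pos (by norm_num)
  have hr : (2 : ℝ) ^ (3 / 2 : ℝ) / 4 < 1 := by
    rw [div_lt_one (by norm_num)]
    calc (2 : ℝ) ^ (3 / 2 : ℝ) < 2 ^ (2 : ℝ) :=
          Real.rpow_lt_rpow_of_exponent_lt (by norm_num) (by norm_num)
      _ = 4 := by norm_num
  have hs1 : Summable (fun k : ℕ => ((2 : ℝ) ^ (3 / 2 : ℝ) / 4) ^ k) :=
    summable_geometric_of_lt_one (by positivity) hr
  refine Summable.of_nonneg_of_le (fun k => ?_) (fun k => ?_)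
    (hs1.mul_left ((C * 9 ^ (3 / 2 : ℝ) + D) / Real.log 2 / δ ^ 2))
  · have := AA_pos f hC (show 0 < δ * 2 ^ (k + 1) by positivity)
    positivity
  · have h2k : (1 : ℝ) ≤ 2 ^ k := one_le_pow₀ (by norm_num)
    have h1 : 3 * (δ * 2 ^ (k + 1)) + 3 ≤ 9 * (2 : ℝ) ^ k := by
      rw [pow_succ]
      nlinarith
    have h3 : ((2 : ℝ) ^ k) ^ (3 / 2 : ℝ) = ((2 : ℝ) ^ (3 / 2 : ℝ)) ^ k := by
      rw [← Real.rpow_natCast, ← Real.rpow_natCast, ← Real.rpow_mul (by norm_num),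
        ← Real.rpow_mul (by norm_num), mul_comm]
    have h4 : 1 ≤ ((2 : ℝ) ^ k) ^ (3 / 2 : ℝ) := Real.one_le_rpow h2k (by norm_num)
    have h5 : AA f C (δ * 2 ^ (k + 1)) ≤
        (C * 9 ^ (3 / 2 : ℝ) + D) * ((2 : ℝ) ^ (3 / 2 : ℝ)) ^ k := by
      unfold AA
      have : (3 * (δ * 2 ^ (k + 1)) + 3) ^ (3 / 2 : ℝ) ≤
          9 ^ (3 / 2 : ℝ) * ((2 : ℝ) ^ k) ^ (3 / 2 : ℝ) := by
        rw [← Real.mul_rpow (by norm_num) (by positivity)]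
        exact Real.rpow_le_rpow (by positivity) h1 (by norm_num)
      rw [← h3]
      have hD0 : 0 ≤ D := by positivity
      calc _ ≤ C * (9 ^ (3 / 2 : ℝ) * ((2 : ℝ) ^ k) ^ (3 / 2 : ℝ)) + D * 1 := by
            rw [hD, mul_one, ← add_assoc]; gcongr
        _ ≤ C * (9 ^ (3 / 2 : ℝ) * ((2 : ℝ) ^ k) ^ (3 / 2 : ℝ)) +
            D * ((2 : ℝ) ^ k) ^ (3 / 2 : ℝ) := by gcongr
        _ = _ := by ring
    calc _ ≤ (C * 9 ^ (3 / 2 : ℝ) + D) * ((2 : ℝ) ^ (3 / 2 : ℝ)) ^ k / Real.log 2 /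
          (δ * 2 ^ k) ^ 2 := by gcongr
      _ = _ := by
        rw [div_pow, mul_pow, show ((4 : ℝ) ^ k) = (2 ^ k) ^ 2 by
          rw [← pow_mul, mul_comm, pow_mul]; norm_num]
        field_simp

lemma summable_zeros {f : ℂ → ℂ} (hf : Differentiable ℂ f) (h0 : f 0 ≠ 0) {C : ℝ}
    (hC0 : 0 < C) (hC : ∀ z, ‖f z‖ ≤ Real.exp (C * (‖z‖ + 3) ^ (3 / 2 : ℝ))) :
    Summable (fun ρ : {z : ℂ // f z = 0} => (analyticOrderNatAt f ρ : ℝ) / ‖(ρ : ℂ)‖ ^ 2) := by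
  classical
  obtain ⟨δ, hδ, hδ1, hδz⟩ : ∃ δ : ℝ, 0 < δ ∧ δ ≤ 1 ∧ ∀ z, f z = 0 → δ ≤ ‖z‖ := by
    obtain ⟨ε, hε, h⟩ := Metric.eventually_nhds_iff.1 (hf.continuous.continuousAt.eventually_ne h0)
    refine ⟨min ε 1, by positivity, min_le_right _ _, fun z hz => ?_⟩
    by_contra hlt
    push Not at hlt
    exact h (y := z) (by simpa using hlt.trans_le (min_le_left _ _)) hz
  have hκ : ∀ ρ : {z : ℂ // f z = 0}, ∃ k : ℕ, δ * 2 ^ k ≤ ‖(ρ : ℂ)‖ ∧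
      ‖(ρ : ℂ)‖ ≤ δ * 2 ^ (k + 1) := by
    intro ρ
    obtain ⟨n, h1, h2⟩ := exists_nat_pow_near (x := ‖(ρ : ℂ)‖ / δ) (y := 2)
      ((one_le_div hδ).2 (hδz ρ ρ.2)) (by norm_num)
    refine ⟨n, ?_, ?_⟩
    · rw [le_div_iff₀ hδ] at h1; linarith
    · rw [div_lt_iff₀ hδ] at h2; linarith
  choose κ hκ1 hκ2 using hκ
  have hsum := summable_AA f hC0 hδ hδ1
  refine summable_of_sum_le (c := ∑' k : ℕ, AA f C (δ * 2 ^ (k + 1)) / Real.log 2 / (δ * 2 ^ k) ^ 2)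
    (fun ρ => by positivity) fun F => ?_
  rw [← Finset.sum_fiberwise_of_maps_to (t := F.image κ) (g := κ)
    (fun x hx => Finset.mem_image_of_mem _ hx)]
  refine le_trans (Finset.sum_le_sum (g := fun k : ℕ =>
    AA f C (δ * 2 ^ (k + 1)) / Real.log 2 / (δ * 2 ^ k) ^ 2) fun k _ => ?_)
    (hsum.sum_le_tsum _ fun k _ => ?_)
  · have hc := count_bound hf h0 hC
      ((F.filter (fun ρ => κ ρ = k)).map (Function.Embedding.subtype _))
      (R := δ * 2 ^ (k + 1)) (by positivity) (by
        intro ρ hρ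
        simp only [Finset.mem_map, Finset.mem_filter, Function.Embedding.subtype_apply] at hρ
        obtain ⟨a, ⟨_, ha⟩, rfl⟩ := hρ
        refine ⟨?_, ha ▸ hκ2 a⟩
        exact zero_ne h0 a)
    rw [Finset.sum_map] at hc
    calc _ ≤ ∑ ρ ∈ F.filter (fun ρ => κ ρ = k),
          (analyticOrderNatAt f ρ : ℝ) / (δ * 2 ^ k) ^ 2 := by
          refine Finset.sum_le_sum fun ρ hρ => ?_
          have := hκ1 ρ
          rw [(Finset.mem_filter.1 hρ).2] at this
          gcongr
      _ ≤ _ := by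
          rw [← Finset.sum_div]
          gcongr
          exact hc
  · have := AA_pos f hC0 (show 0 < δ * 2 ^ (k + 1) by positivity)
    have hlog : 0 < Real.log 2 := Real.log_pos (by norm_num)
    positivity

lemma finite_zeros {f : ℂ → ℂ} (hf : Differentiable ℂ f) (h0 : f 0 ≠ 0) {C : ℝ}
    (hC0 : 0 < C) (hC : ∀ z, ‖f z‖ ≤ Real.exp (C * (‖z‖ + 3) ^ (3 / 2 : ℝ))) (R : ℝ) :
    {ρ : {z : ℂ // f z = 0} | ‖(ρ : ℂ)‖ ≤ R}.Finite := by
  have hs := (summable_zeros hf h0 hC0 hC).tendsto_cofinite_zero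
  have hR : 0 < |R| + 1 := by positivity
  have := hs.eventually (gt_mem_nhds (show (0 : ℝ) < 1 / (|R| + 1) ^ 2 by positivity))
  rw [eventually_cofinite] at this
  refine this.subset fun ρ hρ => ?_
  simp only [Set.mem_ofPred_eq, not_lt] at hρ ⊢
  have hp : 0 < ‖(ρ : ℂ)‖ := norm_pos_iff.2 (zero_ne h0 ρ)
  have h1 : (1 : ℝ) ≤ analyticOrderNatAt f ρ := by exact_mod_cast order_pos hf h0 ρ.2
  have h2 : ‖(ρ : ℂ)‖ ≤ |R| + 1 := by linarith [le_abs_self R]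
  gcongr

lemma norm_cofinite {f : ℂ → ℂ} (hf : Differentiable ℂ f) (h0 : f 0 ≠ 0) {C : ℝ}
    (hC0 : 0 < C) (hC : ∀ z, ‖f z‖ ≤ Real.exp (C * (‖z‖ + 3) ^ (3 / 2 : ℝ))) (R : ℝ) :
    ∀ᶠ ρ : {z : ℂ // f z = 0} in cofinite, R < ‖(ρ : ℂ)‖ := by
  rw [eventually_cofinite]
  simpa using finite_zeros hf h0 hC0 hC R

/-- summability of `M/((z-ρ)(s-ρ))` -/
lemma summable_two {f : ℂ → ℂ} (hf : Differentiable ℂ f) (h0 : f 0 ≠ 0) {C : ℝ}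
    (hC0 : 0 < C) (hC : ∀ z, ‖f z‖ ≤ Real.exp (C * (‖z‖ + 3) ^ (3 / 2 : ℝ))) (z s : ℂ) :
    Summable (fun ρ : {z : ℂ // f z = 0} =>
      (analyticOrderNatAt f ρ : ℂ) / ((z - ρ) * (s - ρ))) := by
  refine Summable.of_norm_bounded_eventually
    ((summable_zeros hf h0 hC0 hC).mul_left 4) ?_
  filter_upwards [norm_cofinite hf h0 hC0 hC (2 * ‖z‖), norm_cofinite hf h0 hC0 hC (2 * ‖s‖)]
    with ρ h1 h2
  have hp : 0 < ‖(ρ : ℂ)‖ := norm_pos_iff.2 (zero_ne h0 ρ)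
  have e1 : ‖(ρ : ℂ)‖ / 2 ≤ ‖z - ρ‖ := by
    have := norm_sub_le z (z - ρ); simp at this; linarith
  have e2 : ‖(ρ : ℂ)‖ / 2 ≤ ‖s - ρ‖ := by
    have := norm_sub_le s (s - ρ); simp at this; linarith
  rw [norm_div, norm_mul, Complex.norm_natCast]
  calc _ ≤ (analyticOrderNatAt f ρ : ℝ) / (‖(ρ : ℂ)‖ / 2 * (‖(ρ : ℂ)‖ / 2)) := by gcongr
    _ = _ := by field_simp; norm_num

set_option maxHeartbeats 1000000 in
lemma hadamard_approx {f : ℂ → ℂ} (hf : Differentiable ℂ f) (h0 : f 0 ≠ 0) {C : ℝ}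
    (hC0 : 0 < C) (hC : ∀ z, ‖f z‖ ≤ Real.exp (C * (‖z‖ + 3) ^ (3 / 2 : ℝ)))
    {R : ℝ} (hR : 0 < R) (S : Finset {z : ℂ // f z = 0}) (hS : ∀ ρ, ρ ∈ S ↔ ‖(ρ : ℂ)‖ ≤ R)
    {z s : ℂ} (hz : f z ≠ 0) (hs : f s ≠ 0) (hzR : ‖z‖ ≤ R / 4) (hsR : ‖s‖ < R / 4) :
    ‖(logDeriv f z - logDeriv f s) - ∑ ρ ∈ S, (analyticOrderNatAt f ρ : ℂ) *
      (1 / (z - ρ) - 1 / (s - ρ))‖ ≤ 64 * AA f C R / R ^ 2 * ‖z - s‖ ∧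
    ‖deriv (logDeriv f) s - ∑ ρ ∈ S, (analyticOrderNatAt f ρ : ℂ) *
      (-1 / (s - ρ) ^ 2)‖ ≤ 64 * AA f C R / R ^ 2 := by
  have hne0 : ∀ ρ : {z : ℂ // f z = 0}, (ρ : ℂ) ≠ 0 := zero_ne h0
  obtain ⟨g, hg, hgS, hfg, hg0, hb⟩ := div_roots_bound hf h0
    (S.map (Function.Embedding.subtype _)) hR
    (by
      intro ρ hρ
      simp only [Finset.mem_map, Function.Embedding.subtype_apply] at hρ
      obtain ⟨a, ha, rfl⟩ := hρ
      exact ⟨hne0 a, (hS a).1 ha⟩)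
    (B := Real.exp (C * (3 * R + 3) ^ (3 / 2 : ℝ))) (fun z hz => by
      have := hC z; rwa [hz] at this)
  simp only [Finset.prod_map, Function.Embedding.subtype_apply] at hfg
  have hApos := AA_pos f hC0 hR
  have hgne : ∀ z, ‖z‖ < R → g z ≠ 0 := by
    intro w hw
    by_cases hfw : f w = 0
    · refine hgS w ?_
      simp only [Finset.mem_map, Function.Embedding.subtype_apply]
      exact ⟨⟨w, hfw⟩, (hS _).2 hw.le, rfl⟩
    · intro h; exact hfw (by rw [hfg, h, mul_zero])
  have hgb : ∀ z, ‖z‖ < R → ‖g z‖ ≤ Real.exp (AA f C R) * ‖g 0‖ := by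
    intro w hw
    rw [hg0]
    refine le_trans ?_ (exp_AA_ge h0)
    refine le_trans ?_ (hb w (by linarith))
    exact le_mul_of_one_le_right (norm_nonneg _) (one_le_pow₀ (by norm_num))
  have hder : ∀ w, ‖w‖ ≤ R / 4 → ‖deriv (logDeriv g) w‖ ≤ 64 * AA f C R / R ^ 2 := fun w hw =>
    logDeriv_deriv_bound hg hR hApos hgne hgb hw
  have hlog : ∀ w, f w ≠ 0 → logDeriv f w =
      ∑ ρ ∈ S, (analyticOrderNatAt f ρ : ℂ) * (1 / (w - ρ)) + logDeriv g w := by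
    intro w hw
    have hwρ : ∀ ρ : {z : ℂ // f z = 0}, w - ρ ≠ 0 := fun ρ h => by
      rw [sub_eq_zero] at h; exact hw (h ▸ ρ.2)
    have hfac : ∀ ρ : {z : ℂ // f z = 0}, (1 - w / (ρ : ℂ)) ≠ 0 := fun ρ h => by
      have := hne0 ρ
      field_simp at h
      exact hwρ ρ (by linear_combination -h)
    have hfe : f = fun z => (∏ ρ ∈ S, (1 - z / (ρ : ℂ)) ^ analyticOrderNatAt f ρ) * g z := funext hfg
    have hP : (∏ ρ ∈ S, (1 - w / (ρ : ℂ)) ^ analyticOrderNatAt f ρ) ≠ 0 :=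
      Finset.prod_ne_zero_iff.2 fun ρ _ => pow_ne_zero _ (hfac ρ)
    have hgw : g w ≠ 0 := fun h => hw (by rw [hfg, h, mul_zero])
    have e1 : logDeriv f w = logDeriv (fun z => (∏ ρ ∈ S, (1 - z / (ρ : ℂ)) ^ analyticOrderNatAt f ρ) * g z) w :=
      congrArg (fun F => logDeriv F w) hfe
    rw [e1, logDeriv_mul w hP hgw (by fun_prop) (hg w), logDeriv_prod (𝕜 := ℂ)
      (f := fun (ρ : {z : ℂ // f z = 0}) (x : ℂ) => (1 - x / (ρ : ℂ)) ^ analyticOrderNatAt f ρ)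
      (fun ρ _ => pow_ne_zero _ (hfac ρ)) (fun ρ _ => by fun_prop)]
    congr 1
    refine Finset.sum_congr rfl fun ρ _ => ?_
    rw [logDeriv_fun_pow (by fun_prop)]
    congr 1
    rw [logDeriv_apply]
    have hd : deriv (fun x : ℂ => 1 - x / (ρ : ℂ)) w = -(1 / ρ) := by
      have : HasDerivAt (fun x : ℂ => 1 - x / (ρ : ℂ)) (-(1 / ρ)) w :=
        ((hasDerivAt_id w).div_const _).const_sub 1
      exact this.deriv
    rw [hd]
    have h1 := hne0 ρ
    have h2 := hwρ ρ
    have h3 := hfac ρ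
    rw [div_eq_div_iff h3 h2]
    field_simp
    ring
  have hgd : ∀ w, ‖w‖ < R → DifferentiableAt ℂ (logDeriv g) w := fun w hw =>
    (hg.deriv w).div (hg w) (hgne w hw)
  constructor
  · rw [hlog z hz, hlog s hs]
    have : (∑ ρ ∈ S, (analyticOrderNatAt f ρ : ℂ) * (1 / (z - ρ)) + logDeriv g z -
        (∑ ρ ∈ S, (analyticOrderNatAt f ρ : ℂ) * (1 / (s - ρ)) + logDeriv g s)) -
        ∑ ρ ∈ S, (analyticOrderNatAt f ρ : ℂ) * (1 / (z - ρ) - 1 / (s - ρ)) =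
        logDeriv g z - logDeriv g s := by
      simp only [mul_sub, Finset.sum_sub_distrib]
      ring
    rw [this]
    refine Convex.norm_image_sub_le_of_norm_deriv_le (s := Metric.closedBall 0 (R / 4))
      (fun w hw => hgd w ?_) (fun w hw => hder w ?_) (convex_closedBall _ _) ?_ ?_
    · have : ‖w‖ ≤ R / 4 := by simpa using hw
      linarith
    · simpa using hw
    · simpa using hsR.le
    · simpa using hzR
  · have hev : logDeriv f =ᶠ[𝓝 s] fun w =>
        ∑ ρ ∈ S, (analyticOrderNatAt f ρ : ℂ) * (1 / (w - ρ)) + logDeriv g w := by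
      filter_upwards [hf.continuous.continuousAt.eventually_ne hs] with w hw using hlog w hw
    have hd1 : HasDerivAt (fun w =>
        ∑ ρ ∈ S, (analyticOrderNatAt f ρ : ℂ) * (1 / (w - ρ)) + logDeriv g w)
        (∑ ρ ∈ S, (analyticOrderNatAt f ρ : ℂ) * (-1 / (s - ρ) ^ 2) + deriv (logDeriv g) s) s := by
      refine HasDerivAt.add (HasDerivAt.fun_sum fun ρ _ => ?_) (hgd s (by linarith)).hasDerivAt
      have hsρ : s - ρ ≠ 0 := fun h => by
        rw [sub_eq_zero] at h; exact hs (h ▸ ρ.2)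
      have := (((hasDerivAt_id s).sub_const (ρ : ℂ)).fun_inv hsρ).const_mul
        (analyticOrderNatAt f ρ : ℂ)
      simpa [one_div] using this
    rw [hev.deriv_eq, hd1.deriv, add_sub_cancel_left]
    exact hder s hsR.le

lemma tendsto_AA (f : ℂ → ℂ) (C : ℝ) :
    Tendsto (fun n : ℕ => 64 * AA f C n / (n : ℝ) ^ 2) atTop (𝓝 0) := by
  have h1 : Tendsto (fun n : ℕ => (n : ℝ) ^ (-(1 / 2) : ℝ)) atTop (𝓝 0) :=
    (tendsto_rpow_neg_atTop (by norm_num)).comp tendsto_natCast_atTop_atTop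
  have h2 : Tendsto (fun n : ℕ => (n : ℝ) ^ (-2 : ℝ)) atTop (𝓝 0) :=
    (tendsto_rpow_neg_atTop (by norm_num)).comp tendsto_natCast_atTop_atTop
  have h3 : Tendsto (fun n : ℕ => (3 + 3 / (n : ℝ)) ^ (3 / 2 : ℝ)) atTop (𝓝 ((3 + 0) ^ (3 / 2 : ℝ))) :=
    (tendsto_const_nhds.add (tendsto_const_div_atTop_nhds_zero_nat 3)).rpow_const
      (Or.inr (by norm_num))
  have h4 := ((h1.mul h3).const_mul (64 * C)).add
    (h2.const_mul (64 * (|Real.log ‖f 0‖| + 1)))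
  simp only [zero_mul, mul_zero, add_zero] at h4
  refine h4.congr' ?_
  filter_upwards [eventually_gt_atTop 0] with n hn
  have hn' : (0 : ℝ) < n := by exact_mod_cast hn
  unfold AA
  have e1 : (3 * (n : ℝ) + 3) ^ (3 / 2 : ℝ) = (n : ℝ) ^ (3 / 2 : ℝ) * (3 + 3 / (n : ℝ)) ^ (3 / 2 : ℝ) := by
    rw [← Real.mul_rpow hn'.le (by positivity)]
    congr 1; field_simp
  have e2 : (n : ℝ) ^ (3 / 2 : ℝ) = (n : ℝ) ^ (-(1 / 2) : ℝ) * (n : ℝ) ^ 2 := by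
    rw [← Real.rpow_natCast, ← Real.rpow_add hn']; norm_num
  have e3 : (n : ℝ) ^ (-2 : ℝ) = 1 / (n : ℝ) ^ 2 := by
    rw [Real.rpow_neg hn'.le, one_div]; norm_num
  rw [e1, e2, e3]
  field_simp
  ring

theorem hadamard_s6 {f : ℂ → ℂ} (hf : Differentiable ℂ f) (h0 : f 0 ≠ 0) {C : ℝ}
    (hC0 : 0 < C) (hC : ∀ z, ‖f z‖ ≤ Real.exp (C * (‖z‖ + 3) ^ (3 / 2 : ℝ)))
    {z s : ℂ} (hz : f z ≠ 0) (hs : f s ≠ 0) :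
    HasSum (fun ρ : {z : ℂ // f z = 0} => (analyticOrderNatAt f ρ : ℂ) *
      (1 / (z - ρ) - 1 / (s - ρ))) (logDeriv f z - logDeriv f s) ∧
    HasSum (fun ρ : {z : ℂ // f z = 0} => (analyticOrderNatAt f ρ : ℂ) *
      (-1 / (s - ρ) ^ 2)) (deriv (logDeriv f) s) := by
  set S : ℕ → Finset {z : ℂ // f z = 0} := fun n => (finite_zeros hf h0 hC0 hC n).toFinset with hSdef
  have hS : ∀ n ρ, ρ ∈ S n ↔ ‖(ρ : ℂ)‖ ≤ n := fun n ρ => by simp [hSdef]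
  have hST : Tendsto S atTop atTop := by
    refine tendsto_atTop_finset_of_monotone (fun a b hab ρ hρ => ?_) (fun ρ => ?_)
    · rw [hS] at hρ ⊢
      exact hρ.trans (by exact_mod_cast hab)
    · obtain ⟨n, hn⟩ := exists_nat_ge ‖(ρ : ℂ)‖
      exact ⟨n, (hS n ρ).2 hn⟩
  have hev : ∀ᶠ n : ℕ in atTop, (0 : ℝ) < n ∧ ‖z‖ ≤ (n : ℝ) / 4 ∧ ‖s‖ < (n : ℝ) / 4 := by
    have := tendsto_natCast_atTop_atTop (R := ℝ)
    filter_upwards [this.eventually_gt_atTop 0, this.eventually_gt_atTop (4 * ‖z‖),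
      this.eventually_gt_atTop (4 * ‖s‖)] with n h1 h2 h3
    exact ⟨h1, by linarith, by linarith⟩
  have hne : ∀ {w : ℂ}, f w ≠ 0 → ∀ ρ : {z : ℂ // f z = 0}, w - ρ ≠ 0 := fun hw ρ h => by
    rw [sub_eq_zero] at h; exact hw (h ▸ ρ.2)
  constructor
  · have hsm : Summable (fun ρ : {z : ℂ // f z = 0} => (analyticOrderNatAt f ρ : ℂ) *
        (1 / (z - ρ) - 1 / (s - ρ))) := by
      refine ((summable_two hf h0 hC0 hC z s).mul_left (s - z)).congr fun ρ => ?_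
      have h1 := hne hz ρ
      have h2 := hne hs ρ
      field_simp
      ring
    have ht := hsm.hasSum.comp hST
    have ht2 : Tendsto (fun n => ∑ ρ ∈ S n, (analyticOrderNatAt f ρ : ℂ) *
        (1 / (z - ρ) - 1 / (s - ρ))) atTop (𝓝 (logDeriv f z - logDeriv f s)) := by
      rw [tendsto_iff_norm_sub_tendsto_zero]
      have hb := (tendsto_AA f C).mul_const ‖z - s‖
      rw [zero_mul] at hb
      refine squeeze_zero' (Eventually.of_forall fun _ => norm_nonneg _) ?_ hb
      filter_upwards [hev] with n hn
      rw [norm_sub_rev]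
      exact (hadamard_approx hf h0 hC0 hC hn.1 (S n) (hS n) hz hs hn.2.1 hn.2.2).1
    rw [← tendsto_nhds_unique ht ht2]
    exact hsm.hasSum
  · have hsm : Summable (fun ρ : {z : ℂ // f z = 0} => (analyticOrderNatAt f ρ : ℂ) *
        (-1 / (s - ρ) ^ 2)) := by
      refine ((summable_two hf h0 hC0 hC s s).neg).congr fun ρ => ?_
      have h2 := hne hs ρ
      field_simp
    have ht := hsm.hasSum.comp hST
    have ht2 : Tendsto (fun n => ∑ ρ ∈ S n, (analyticOrderNatAt f ρ : ℂ) *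
        (-1 / (s - ρ) ^ 2)) atTop (𝓝 (deriv (logDeriv f) s)) := by
      rw [tendsto_iff_norm_sub_tendsto_zero]
      refine squeeze_zero' (Eventually.of_forall fun _ => norm_nonneg _) ?_ (tendsto_AA f C)
      filter_upwards [hev] with n hn
      rw [norm_sub_rev]
      exact (hadamard_approx hf h0 hC0 hC hn.1 (S n) (hS n) hz hs hn.2.1 hn.2.2).2
    rw [← tendsto_nhds_unique ht ht2]
    exact hsm.hasSum

end EF

namespace EF

open Complex Filter Topology

noncomputable def bb (n : ℕ) (z : ℂ) : ℂ :=
  (z - 1) * ((n : ℂ) + 1) ^ (-z) + (((n : ℂ) + 1 + 1) ^ (1 - z) - ((n : ℂ) + 1) ^ (1 - z))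

lemma cpow_diff_bound (N t : ℝ) (hN : 1 ≤ N) (ht : t ∈ Set.Icc N (N + 1)) (z : ℂ) (hz : 0 < z.re) :
    ‖(t : ℂ) ^ (-z) - (N : ℂ) ^ (-z)‖ ≤ ‖z‖ * N ^ (-z.re - 1) := by
  have hz0 : z ≠ 0 := by rintro rfl; simp at hz
  have key := (convex_Icc N (N + 1)).norm_image_sub_le_of_norm_hasDerivWithin_le
    (f := fun y : ℝ => (y : ℂ) ^ (-z)) (f' := fun y : ℝ => (-z) * (y : ℂ) ^ (-z - 1))
    (C := ‖z‖ * N ^ (-z.re - 1)) (x := N) (y := t)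
    (fun y hy => (hasDerivAt_ofReal_cpow_const (show y ≠ 0 from fun h => by linarith [hy.1])
      (neg_ne_zero.mpr hz0)).hasDerivWithinAt) ?_ ⟨le_refl _, by linarith⟩ ht
  · refine key.trans ?_
    have h1 : ‖t - N‖ ≤ 1 := by
      rw [Real.norm_eq_abs, abs_le]; constructor <;> linarith [ht.1, ht.2]
    have h2 : 0 ≤ ‖z‖ * N ^ (-z.re - 1) := by positivity
    nlinarith
  · intro y hy
    have hy0 : 0 < y := by linarith [hy.1]
    rw [norm_mul, norm_neg, Complex.norm_cpow_eq_rpow_re_of_pos hy0]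
    gcongr
    have : (-z - 1).re = -z.re - 1 := by simp
    rw [this]
    exact Real.rpow_le_rpow_of_nonpos (by linarith) hy.1 (by linarith)

lemma bb_bound (n : ℕ) (z : ℂ) (hz : 0 < z.re) :
    ‖bb n z‖ ≤ ‖z - 1‖ * ‖z‖ * ((n : ℝ) + 1) ^ (-z.re - 1) := by
  by_cases h1 : z = 1
  · subst h1; simp [bb]
  set N : ℝ := (n : ℝ) + 1 with hNdef
  have hN : 1 ≤ N := by simp [hNdef]
  have key := (convex_Icc N (N + 1)).norm_image_sub_le_of_norm_hasDerivWithin_le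
    (f := fun y : ℝ => (y : ℂ) ^ (1 - z) + (y : ℂ) * ((z - 1) * (N : ℂ) ^ (-z)))
    (f' := fun y : ℝ => (1 - z) * (y : ℂ) ^ (1 - z - 1) + 1 * ((z - 1) * (N : ℂ) ^ (-z)))
    (C := ‖z - 1‖ * ‖z‖ * N ^ (-z.re - 1)) (x := N) (y := N + 1)
    (fun y hy => by
      have hy0 : y ≠ 0 := by
        have := hy.1
        intro h; linarith
      exact ((hasDerivAt_ofReal_cpow_const hy0 (sub_ne_zero.mpr (Ne.symm h1))).add
        ((Complex.ofRealCLM.hasDerivAt (x := y)).mul_const _)).hasDerivWithinAt) ?_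
        ⟨le_refl _, by linarith⟩ ⟨by linarith, le_refl _⟩
  · have e : bb n z = ((N + 1 : ℝ) : ℂ) ^ (1 - z) + ((N + 1 : ℝ) : ℂ) * ((z - 1) * (N : ℂ) ^ (-z)) -
        ((N : ℂ) ^ (1 - z) + (N : ℂ) * ((z - 1) * (N : ℂ) ^ (-z))) := by
      simp only [bb, hNdef]; push_cast; ring
    rw [e]
    simpa using key
  · intro y hy
    have e : (1 - z) * (y : ℂ) ^ (1 - z - 1) + 1 * ((z - 1) * (N : ℂ) ^ (-z))
        = (1 - z) * ((y : ℂ) ^ (-z) - (N : ℂ) ^ (-z)) := by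
      rw [show 1 - z - 1 = -z by ring]; ring
    rw [e, norm_mul, norm_sub_rev, mul_assoc]
    gcongr
    exact cpow_diff_bound N y hN hy z hz

lemma bb_diff (n : ℕ) : Differentiable ℂ (bb n) := by
  have h1 : ((n : ℂ) + 1) ≠ 0 := by exact_mod_cast Nat.succ_ne_zero n
  have h2 : ((n : ℂ) + 1 + 1) ≠ 0 := by exact_mod_cast Nat.succ_ne_zero (n + 1)
  unfold bb
  intro z
  refine DifferentiableAt.add (DifferentiableAt.mul (by fun_prop)
    (DifferentiableAt.const_cpow (by fun_prop) (Or.inl h1))) (DifferentiableAt.sub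
    (DifferentiableAt.const_cpow (by fun_prop) (Or.inl h2))
    (DifferentiableAt.const_cpow (by fun_prop) (Or.inl h1)))

lemma summable_pow (a : ℝ) (ha : 0 < a) : Summable (fun n : ℕ => ((n : ℝ) + 1) ^ (-a - 1)) := by
  have := (summable_nat_add_iff 1).mpr (Real.summable_nat_rpow.mpr (show -a - 1 < -1 by linarith))
  simpa using this

lemma bb_summable (z : ℂ) (hz : 0 < z.re) : Summable (fun n => bb n z) :=
  Summable.of_norm_bounded ((summable_pow z.re hz).mul_left _) (fun n => bb_bound n z hz)

lemma tele (z : ℂ) (hz : 1 < z.re) :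
    Tendsto (fun n : ℕ => ((n : ℂ) + 1) ^ (1 - z)) atTop (𝓝 0) := by
  rw [tendsto_zero_iff_norm_tendsto_zero]
  have h : Tendsto (fun n : ℕ => ((n : ℝ) + 1) ^ (-(z.re - 1))) atTop (𝓝 0) :=
    (tendsto_rpow_neg_atTop (by linarith)).comp
      (tendsto_atTop_add_const_right _ _ tendsto_natCast_atTop_atTop)
  refine h.congr (fun n => ?_)
  have : ((n : ℂ) + 1) = (((n : ℝ) + 1 : ℝ) : ℂ) := by push_cast; rfl
  rw [this, Complex.norm_cpow_eq_rpow_re_of_pos (by positivity)]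
  congr 1
  simp

lemma zeta1_eq_of_one_lt (z : ℂ) (hz : 1 < z.re) : riemannZeta₁ z = 1 + ∑' n, bb n z := by
  have hz1 : z ≠ 1 := by rintro rfl; simp at hz
  have h1 : riemannZeta₁ z = (z - 1) * riemannZeta z := by
    rw [riemannZeta_eq_inv_sub_mul hz1, ← mul_assoc, mul_inv_cancel₀ (sub_ne_zero.mpr hz1), one_mul]
  have hS : Summable (fun n : ℕ => (z - 1) * ((n : ℂ) + 1) ^ (-z)) := by
    have := (summable_nat_add_iff 1).mpr (Complex.summable_one_div_nat_cpow.mpr hz)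
    refine (this.mul_left (z - 1)).congr (fun n => ?_)
    simp [Complex.cpow_neg]
  have hb := bb_summable z (by linarith)
  have hd : Summable (fun n : ℕ => ((n : ℂ) + 1 + 1) ^ (1 - z) - ((n : ℂ) + 1) ^ (1 - z)) := by
    refine (hb.sub hS).congr (fun n => ?_)
    simp [bb]
  have hd2 : ∑' n : ℕ, (((n : ℂ) + 1 + 1) ^ (1 - z) - ((n : ℂ) + 1) ^ (1 - z)) = -1 := by
    have t1 := hd.hasSum.tendsto_sum_nat
    have t2 : Tendsto (fun n : ℕ => ∑ i ∈ Finset.range n,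
        (((i : ℂ) + 1 + 1) ^ (1 - z) - ((i : ℂ) + 1) ^ (1 - z))) atTop (𝓝 (0 - 1)) := by
      refine ((tele z hz).sub_const 1).congr (fun n => ?_)
      have := Finset.sum_range_sub (fun i : ℕ => ((i : ℂ) + 1) ^ (1 - z)) n
      simp only [Nat.cast_add, Nat.cast_one] at this
      rw [this]; simp
    rw [zero_sub] at t2
    exact tendsto_nhds_unique t1 t2
  have e : ∑' n, bb n z = (z - 1) * riemannZeta z + -1 := by
    rw [zeta_eq_tsum_one_div_nat_add_one_cpow hz, ← hd2, ← tsum_mul_left, ← Summable.tsum_add _ hd]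
    · refine tsum_congr (fun n => ?_)
      simp [bb, Complex.cpow_neg]
    · refine hS.congr (fun n => ?_)
      simp [Complex.cpow_neg]
  rw [e, h1]; ring

lemma zeta1_eq (z : ℂ) (hz : 1 / 4 < z.re) : riemannZeta₁ z = 1 + ∑' n, bb n z := by
  set K : ℝ := ‖z‖ + 3 with hK
  set U : Set ℂ := {w : ℂ | 1 / 4 < w.re} ∩ Metric.ball 0 K with hU
  have hUo : IsOpen U := (isOpen_lt continuous_const Complex.continuous_re).inter Metric.isOpen_ball
  have hUc : Convex ℝ U := (convex_halfSpace_re_gt _).inter (convex_ball _ _)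
  have hD : DifferentiableOn ℂ (fun w => ∑' n, bb n w) U := by
    refine differentiableOn_tsum_of_summable_norm
      (u := fun n : ℕ => (K + 1) * K * ((n : ℝ) + 1) ^ (-(1 / 4 : ℝ) - 1))
      ((summable_pow _ (by norm_num)).mul_left _) (fun n => (bb_diff n).differentiableOn) hUo ?_
    intro n w hw
    have hw1 : 1 / 4 < w.re := hw.1
    have hw2 : ‖w‖ < K := by simpa using hw.2
    refine (bb_bound n w (by linarith)).trans ?_
    have : ‖w - 1‖ ≤ K + 1 := (norm_sub_le _ _).trans (by simp; linarith)
    have h3 : ((n : ℝ) + 1) ^ (-w.re - 1) ≤ ((n : ℝ) + 1) ^ (-(1 / 4 : ℝ) - 1) :=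
      Real.rpow_le_rpow_of_exponent_le (by simp) (by linarith)
    gcongr
  have hA1 : AnalyticOnNhd ℂ riemannZeta₁ U :=
    (differentiable_riemannZeta₁.differentiableOn).analyticOnNhd hUo
  have hA2 : AnalyticOnNhd ℂ (fun w => 1 + ∑' n, bb n w) U :=
    ((differentiableOn_const 1).add hD).analyticOnNhd hUo
  have h2 : (2 : ℂ) ∈ U := by
    refine ⟨by simp; norm_num, ?_⟩
    simp [hK]; linarith [norm_nonneg z]
  have hev : riemannZeta₁ =ᶠ[𝓝 2] (fun w => 1 + ∑' n, bb n w) := by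
    have : {w : ℂ | 1 < w.re} ∈ 𝓝 (2 : ℂ) :=
      (isOpen_lt continuous_const Complex.continuous_re).mem_nhds (by simp)
    filter_upwards [this] with w hw using zeta1_eq_of_one_lt w hw
  exact hA1.eqOn_of_preconnected_of_eventuallyEq hA2 hUc.isPreconnected h2 hev
    ⟨hz, by simp [hK]⟩

lemma zeta1_right : ∃ K > 0, ∀ z : ℂ, 1 / 2 ≤ z.re → ‖riemannZeta₁ z‖ ≤ K * (‖z‖ + 1) ^ 2 := by
  set S := ∑' n : ℕ, ((n : ℝ) + 1) ^ (-(1 / 2 : ℝ) - 1) with hS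
  have hS0 : 0 ≤ S := tsum_nonneg (fun n => by positivity)
  refine ⟨1 + S, by linarith, fun z hz => ?_⟩
  rw [zeta1_eq z (by linarith)]
  have hs := summable_pow (1 / 2) (by norm_num)
  have hb : ‖∑' n, bb n z‖ ≤ ‖z - 1‖ * ‖z‖ * S := by
    refine tsum_of_norm_bounded (hs.hasSum.mul_left _) (fun n => ?_)
    refine (bb_bound n z (by linarith)).trans ?_
    have h3 : ((n : ℝ) + 1) ^ (-z.re - 1) ≤ ((n : ℝ) + 1) ^ (-(1 / 2 : ℝ) - 1) :=
      Real.rpow_le_rpow_of_exponent_le (by simp) (by linarith)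
    gcongr
  have h1 : ‖z - 1‖ ≤ ‖z‖ + 1 := (norm_sub_le _ _).trans (by simp)
  have h2 : ‖z - 1‖ * ‖z‖ * S ≤ (‖z‖ + 1) * (‖z‖ + 1) * S := by
    gcongr; linarith
  calc ‖1 + ∑' n, bb n z‖ ≤ 1 + ‖∑' n, bb n z‖ := (norm_add_le _ _).trans (by simp)
    _ ≤ 1 + (‖z‖ + 1) * (‖z‖ + 1) * S := by linarith
    _ ≤ (1 + S) * (‖z‖ + 1) ^ 2 := by nlinarith [norm_nonneg z]

end EF

namespace EF

open Complex Filter Topology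

lemma norm_Gamma_le_s6 (w : ℂ) (hw : 0 < w.re) : ‖Complex.Gamma w‖ ≤ Real.Gamma w.re := by
  rw [Complex.Gamma_eq_integral hw, Real.Gamma_eq_integral hw, Complex.GammaIntegral]
  refine (MeasureTheory.norm_integral_le_integral_norm _).trans (le_of_eq ?_)
  refine MeasureTheory.setIntegral_congr_fun measurableSet_Ioi (fun t ht => ?_)
  simp only [norm_mul]
  rw [Complex.norm_cpow_eq_rpow_re_of_pos ht, Complex.norm_real, Real.norm_eq_abs,
    abs_of_pos (Real.exp_pos _)]
  simp

lemma norm_cos_le_s6 (u : ℂ) : ‖Complex.cos u‖ ≤ Real.exp ‖u‖ := by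
  rw [Complex.cos, norm_div]
  have h1 := Complex.norm_exp_le_exp_norm (u * I)
  have h2 := Complex.norm_exp_le_exp_norm (-u * I)
  have h3 := norm_add_le (Complex.exp (u * I)) (Complex.exp (-u * I))
  simp only [norm_mul, norm_neg, Complex.norm_I, mul_one] at h1 h2
  rw [Complex.norm_ofNat, div_le_iff₀ (by norm_num)]
  linarith

lemma Gamma_bound (σ R : ℝ) (h1 : 1 / 2 < σ) (hR3 : 3 ≤ R) (hR : σ + 2 ≤ R) :
    Real.Gamma σ ≤ 4 * Real.exp (8 * R ^ (3 / 2 : ℝ)) := by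
  have e : Real.Gamma (σ + 2) = (σ + 1) * (σ * Real.Gamma σ) := by
    rw [show σ + 2 = (σ + 1) + 1 by ring, Real.Gamma_add_one (by linarith),
      Real.Gamma_add_one (by linarith)]
  have hp : 0 < Real.Gamma σ := Real.Gamma_pos_of_pos (by linarith)
  have h2 : Real.Gamma σ ≤ 4 * Real.Gamma (σ + 2) := by
    rw [e]
    have : 1 ≤ 4 * ((σ + 1) * σ) := by nlinarith
    nlinarith
  set N : ℕ := ⌈R⌉₊ with hN
  have hN1 : R ≤ N := Nat.le_ceil R
  have hN2 : (N : ℝ) ≤ 2 * R := by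
    have := Nat.ceil_lt_add_one (show 0 ≤ R by linarith)
    linarith
  have h3 : Real.Gamma (σ + 2) ≤ (N.factorial : ℝ) := by
    rw [← Real.Gamma_nat_eq_factorial]
    exact Real.Gamma_strictMonoOn_Ici.monotoneOn (by simp; linarith) (by simp; linarith)
      (by linarith)
  have h4 : (N.factorial : ℝ) ≤ Real.exp (8 * R ^ (3 / 2 : ℝ)) := by
    have hNpos : (0 : ℝ) < N := by linarith
    have h5 : (N.factorial : ℝ) ≤ (N : ℝ) ^ N := by exact_mod_cast Nat.factorial_le_pow N
    have h6 : (N : ℝ) ^ N = Real.exp (N * Real.log N) := by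
      rw [mul_comm, Real.exp_mul, Real.exp_log hNpos, Real.rpow_natCast]
    rw [h6] at h5
    refine h5.trans (Real.exp_le_exp.mpr ?_)
    have h7 : Real.log N ≤ (N : ℝ) ^ (1 / 2 : ℝ) / (1 / 2) :=
      Real.log_natCast_le_rpow_div N (by norm_num)
    have h8 : (N : ℝ) * (N : ℝ) ^ (1 / 2 : ℝ) = (N : ℝ) ^ (3 / 2 : ℝ) := by
      rw [show (3 / 2 : ℝ) = 1 + 1 / 2 by norm_num, Real.rpow_add hNpos, Real.rpow_one]
    have h9 : (N : ℝ) ^ (3 / 2 : ℝ) ≤ (2 * R) ^ (3 / 2 : ℝ) :=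
      Real.rpow_le_rpow hNpos.le hN2 (by norm_num)
    rw [Real.mul_rpow (by norm_num) (by linarith)] at h9
    have h10 : (2 : ℝ) ^ (3 / 2 : ℝ) ≤ 4 := by
      have : (2 : ℝ) ^ (3 / 2 : ℝ) ≤ (2 : ℝ) ^ (2 : ℝ) :=
        Real.rpow_le_rpow_of_exponent_le (by norm_num) (by norm_num)
      norm_num at this ⊢; linarith
    have h11 : 0 ≤ R ^ (3 / 2 : ℝ) := Real.rpow_nonneg (by linarith) _
    nlinarith
  linarith

lemma zeta1_eq_mul (z : ℂ) (hz : z ≠ 1) : riemannZeta₁ z = (z - 1) * riemannZeta z := by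
  rw [riemannZeta_eq_inv_sub_mul hz, ← mul_assoc, mul_inv_cancel₀ (sub_ne_zero.mpr hz), one_mul]

/-- functional equation in terms of `w = 1 - z`. -/
lemma zeta1_func (w : ℂ) (hw : 0 < w.re) (hw1 : w ≠ 1) :
    riemannZeta₁ (1 - w) = -w * (2 * (2 * (Real.pi : ℂ)) ^ (-w) * Complex.Gamma w *
      Complex.cos ((Real.pi : ℂ) * w / 2) * riemannZeta w) := by
  have hw0 : w ≠ 0 := by rintro rfl; simp at hw
  have hn : ∀ n : ℕ, w ≠ -n := by
    rintro n rfl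
    simp at hw
    linarith [(Nat.cast_nonneg n : (0 : ℝ) ≤ n)]
  rw [zeta1_eq_mul _ (by simpa using hw0), riemannZeta_one_sub hn hw1]
  ring

lemma growth_zeta1 : ∃ C > 0, ∀ z : ℂ, ‖riemannZeta₁ z‖ ≤ Real.exp (C * (‖z‖ + 3) ^ (3 / 2 : ℝ)) := by
  obtain ⟨K, hK0, hK⟩ := zeta1_right
  obtain ⟨B, hB⟩ := (isCompact_closedBall (0 : ℂ) 1).exists_bound_of_continuousOn
    differentiable_riemannZeta₁.continuous.continuousOn
  refine ⟨32 * K + |B| + 14, by positivity, fun z => ?_⟩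
  set R := ‖z‖ + 3 with hR
  have hz0 := norm_nonneg z
  have hR3 : 3 ≤ R := by linarith
  set Q := R ^ (3 / 2 : ℝ) with hQ
  have hRQ : R ≤ Q := by
    have := Real.rpow_le_rpow_of_exponent_le (show 1 ≤ R by linarith) (show (1 : ℝ) ≤ 3 / 2 by norm_num)
    rwa [Real.rpow_one] at this
  have hRe : R ≤ Real.exp R := by linarith [Real.add_one_le_exp R]
  have small : ∀ A : ℝ, 0 ≤ A → A ≤ Real.exp (A * Q) := fun A hA => by
    have h1 := Real.add_one_le_exp (A * Q)
    nlinarith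
  by_cases h1 : ‖z‖ ≤ 1
  · refine ((hB z (by simpa using h1)).trans (le_abs_self B)).trans ((small _ (abs_nonneg B)).trans ?_)
    apply Real.exp_le_exp.mpr
    nlinarith
  have hR1 : (‖z‖ + 1) ^ 2 ≤ Real.exp (2 * R) := by
    have : ‖z‖ + 1 ≤ Real.exp R := by linarith
    calc (‖z‖ + 1) ^ 2 ≤ (Real.exp R) ^ 2 := by gcongr
      _ = Real.exp (2 * R) := by rw [← Real.exp_nat_mul]; norm_num
  by_cases h2 : 1 / 2 ≤ z.re
  · calc ‖riemannZeta₁ z‖ ≤ K * (‖z‖ + 1) ^ 2 := hK z h2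
      _ ≤ Real.exp (K * Q) * Real.exp (2 * R) := by
        gcongr
        exact small K hK0.le
      _ = Real.exp (K * Q + 2 * R) := (Real.exp_add _ _).symm
      _ ≤ _ := by
        apply Real.exp_le_exp.mpr
        have := abs_nonneg B
        nlinarith [mul_nonneg this (show 0 ≤ Q by linarith), mul_pos hK0 (show 0 < Q by linarith)]
  push Not at h1 h2
  set w := 1 - z with hw
  have hwre : 1 / 2 < w.re := by simp [hw]; linarith
  have hwn : ‖w‖ ≤ ‖z‖ + 1 := (norm_sub_le _ _).trans (by simp [add_comm])
  have hw1 : w ≠ 1 := by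
    intro h
    have : z = 0 := by simpa [hw] using h
    simp [this] at h1; linarith
  have hwR : ‖w‖ ≤ R := by linarith
  have e : riemannZeta₁ z = -w * (2 * (2 * (Real.pi : ℂ)) ^ (-w) * Complex.Gamma w *
      Complex.cos ((Real.pi : ℂ) * w / 2) * ((w - 1)⁻¹ * riemannZeta₁ w)) := by
    rw [← riemannZeta_eq_inv_sub_mul hw1, ← zeta1_func w (by linarith) hw1]
    congr 1; simp [hw]
  have b1 : ‖(2 * (Real.pi : ℂ)) ^ (-w)‖ ≤ 1 := by
    have : (2 * (Real.pi : ℂ)) = ((2 * Real.pi : ℝ) : ℂ) := by push_cast; rfl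
    rw [this, Complex.norm_cpow_eq_rpow_re_of_pos (by positivity)]
    refine Real.rpow_le_one_of_one_le_of_nonpos (by linarith [Real.pi_gt_three]) (by simp; linarith)
  have b2 : ‖Complex.Gamma w‖ ≤ 4 * Real.exp (8 * Q) :=
    (norm_Gamma_le_s6 w (by linarith)).trans (Gamma_bound _ _ hwre hR3
      (by linarith [Complex.re_le_norm w]))
  have b3 : ‖Complex.cos ((Real.pi : ℂ) * w / 2)‖ ≤ Real.exp (2 * R) := by
    refine (norm_cos_le_s6 _).trans (Real.exp_le_exp.mpr ?_)
    simp only [norm_div, norm_mul, Complex.norm_real, Complex.norm_ofNat, Real.norm_eq_abs,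
      abs_of_pos Real.pi_pos]
    nlinarith [Real.pi_lt_four, norm_nonneg w]
  have b4 : ‖(w - 1)⁻¹‖ ≤ 1 := by
    rw [norm_inv, show w - 1 = -z by simp [hw], norm_neg]
    exact inv_le_one_of_one_le₀ h1.le
  have b5 : ‖riemannZeta₁ w‖ ≤ K * (4 * Real.exp (2 * R)) := by
    refine (hK w hwre.le).trans ?_
    gcongr
    calc (‖w‖ + 1) ^ 2 ≤ (2 * Real.exp R) ^ 2 := by gcongr; linarith
      _ = 4 * Real.exp (2 * R) := by
        rw [mul_pow, ← Real.exp_nat_mul]; norm_num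
  rw [e]
  calc _ = ‖w‖ * (2 * ‖(2 * (Real.pi : ℂ)) ^ (-w)‖ * ‖Complex.Gamma w‖ *
      ‖Complex.cos ((Real.pi : ℂ) * w / 2)‖ * (‖(w - 1)⁻¹‖ * ‖riemannZeta₁ w‖)) := by
        simp only [norm_mul, norm_neg, Complex.norm_ofNat]
    _ ≤ Real.exp R * (2 * 1 * (4 * Real.exp (8 * Q)) * Real.exp (2 * R) *
        (1 * (K * (4 * Real.exp (2 * R))))) := by
        gcongr
        linarith
    _ = 32 * K * Real.exp (5 * R + 8 * Q) := by
        rw [show 5 * R + 8 * Q = R + 8 * Q + 2 * R + 2 * R by ring,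
          Real.exp_add (R + 8 * Q + 2 * R), Real.exp_add (R + 8 * Q), Real.exp_add R]
        ring
    _ ≤ Real.exp (32 * K * Q) * Real.exp (5 * R + 8 * Q) := by
        gcongr
        exact small _ (by positivity)
    _ = Real.exp (32 * K * Q + (5 * R + 8 * Q)) := (Real.exp_add _ _).symm
    _ ≤ _ := by
        apply Real.exp_le_exp.mpr
        have := abs_nonneg B
        nlinarith [mul_nonneg this (show 0 ≤ Q by linarith)]

end EF

namespace EF

open Complex Filter Topology

lemma gg_ne {w : ℂ} (hw : 1 ≤ w.re) :
    -w * (2 * (2 * (Real.pi : ℂ)) ^ (-w) * Complex.Gamma w * riemannZeta w) ≠ 0 := by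
  have hw0 : w ≠ 0 := by rintro rfl; simp at hw; linarith
  have hpi : (2 * (Real.pi : ℂ)) ≠ 0 := by
    simpa using Real.pi_ne_zero
  refine mul_ne_zero (neg_ne_zero.mpr hw0) (mul_ne_zero (mul_ne_zero (mul_ne_zero two_ne_zero ?_) ?_) ?_)
  · rw [Complex.cpow_def_of_ne_zero hpi]
    exact Complex.exp_ne_zero _
  · exact Complex.Gamma_ne_zero_of_re_pos (by linarith)
  · exact riemannZeta_ne_zero_of_one_le_re hw

lemma zeta1_zero_cases {z : ℂ} (h : riemannZeta₁ z = 0) :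
    (riemannZeta z = 0 ∧ 0 < z.re ∧ z.re < 1) ∨ ∃ k : ℕ, z = -2 * ((k : ℂ) + 1) := by
  have hz1 : z ≠ 1 := by
    rintro rfl
    rw [riemannZeta₁_one] at h
    exact one_ne_zero h
  have hz : riemannZeta z = 0 := by rw [riemannZeta_eq_inv_sub_mul hz1, h, mul_zero]
  have hre : z.re < 1 := by
    by_contra hc
    exact riemannZeta_ne_zero_of_one_le_re (not_lt.mp hc) hz
  by_cases h0 : 0 < z.re
  · exact Or.inl ⟨hz, h0, hre⟩
  right
  push Not at h0
  have hzne : z ≠ 0 := by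
    rintro rfl
    rw [riemannZeta_zero] at hz
    norm_num at hz
  have hw : 1 ≤ (1 - z).re := by simp; exact h0
  have hfe := zeta1_func (1 - z) (by linarith) (by simpa using hzne)
  rw [sub_sub_cancel, h] at hfe
  have hc : Complex.cos ((Real.pi : ℂ) * (1 - z) / 2) = 0 := by
    by_contra hc
    refine mul_ne_zero (gg_ne hw) hc ?_
    rw [hfe]; ring
  obtain ⟨j, hj⟩ := Complex.cos_eq_zero_iff.mp hc
  have hpi : (Real.pi : ℂ) ≠ 0 := by simpa using Real.pi_ne_zero
  have hzj : z = -2 * (j : ℂ) := by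
    have : (Real.pi : ℂ) * (1 - z) = Real.pi * (2 * j + 1) := by linear_combination 2 * hj
    have := mul_left_cancel₀ hpi this
    linear_combination -this
  have hj0 : 0 ≤ j := by
    rw [hzj] at h0
    have : (0 : ℝ) ≤ j := by simpa using h0
    exact_mod_cast this
  have hj1 : j ≠ 0 := by
    rintro rfl
    exact hzne (by simpa using hzj)
  refine ⟨(j - 1).toNat, ?_⟩
  have : (((j - 1).toNat : ℤ) : ℂ) = ((j - 1 : ℤ) : ℂ) := by
    rw [Int.toNat_of_nonneg (by omega)]
  rw [Int.cast_natCast] at this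
  rw [this, hzj]; push_cast; ring

abbrev NT := {ρ : ℂ // riemannZeta ρ = 0 ∧ 0 < ρ.re ∧ ρ.re < 1}

lemma nt_zero (ρ : NT) : riemannZeta₁ ρ = 0 := by
  have h1 : (ρ : ℂ) ≠ 1 := by
    intro h
    have := ρ.2.2.2
    rw [h] at this
    simp at this
  rw [zeta1_eq_mul _ h1, ρ.2.1, mul_zero]

lemma triv_ne_one (k : ℕ) : (-2 * ((k : ℂ) + 1)) ≠ 1 := by
  intro h
  have := congrArg Complex.re h
  simp at this
  linarith [(Nat.cast_nonneg k : (0 : ℝ) ≤ k)]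

lemma triv_zero (k : ℕ) : riemannZeta₁ (-2 * ((k : ℂ) + 1)) = 0 := by
  rw [zeta1_eq_mul _ (triv_ne_one k), riemannZeta_neg_two_mul_nat_add_one, mul_zero]

def zmap : NT ⊕ ℕ → {z : ℂ // riemannZeta₁ z = 0}
  | Sum.inl ρ => ⟨ρ, nt_zero ρ⟩
  | Sum.inr k => ⟨-2 * ((k : ℂ) + 1), triv_zero k⟩

lemma zmap_bij : Function.Bijective zmap := by
  constructor
  · rintro (ρ | k) (ρ' | k') h
    · have := congrArg Subtype.val h
      simp only [zmap] at this
      exact congrArg Sum.inl (Subtype.ext this)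
    · exfalso
      have := congrArg Subtype.val h
      simp only [zmap] at this
      have h2 := ρ.2.2.1
      rw [this] at h2
      simp at h2
      linarith [(Nat.cast_nonneg k' : (0 : ℝ) ≤ k')]
    · exfalso
      have := congrArg Subtype.val h
      simp only [zmap] at this
      have h2 := ρ'.2.2.1
      rw [← this] at h2
      simp at h2
      linarith [(Nat.cast_nonneg k : (0 : ℝ) ≤ k)]
    · have := congrArg Subtype.val h
      simp only [zmap] at this
      have h3 : (k : ℂ) = k' := by linear_combination (-1 / 2) * this
      exact congrArg Sum.inr (by exact_mod_cast h3)
  · rintro ⟨z, hz⟩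
    rcases zeta1_zero_cases hz with h | ⟨k, hk⟩
    · exact ⟨Sum.inl ⟨z, h⟩, rfl⟩
    · exact ⟨Sum.inr k, Subtype.ext hk.symm⟩

lemma order_nt (ρ : ℂ) (h1 : ρ ≠ 1) (n : ℕ) (g : ℂ → ℂ) (hg : AnalyticAt ℂ g ρ) (hg0 : g ρ ≠ 0)
    (h : ∀ᶠ z in 𝓝 ρ, riemannZeta z = (z - ρ) ^ n * g z) :
    analyticOrderNatAt riemannZeta₁ ρ = n := by
  have : analyticOrderAt riemannZeta₁ ρ = n := by
    rw [(differentiable_riemannZeta₁.analyticAt ρ).analyticOrderAt_eq_natCast]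
    refine ⟨fun z => (z - 1) * g z, by fun_prop, mul_ne_zero (sub_ne_zero.mpr h1) hg0, ?_⟩
    filter_upwards [h, eventually_ne_nhds h1] with z hz hz1
    rw [zeta1_eq_mul z hz1, hz, smul_eq_mul]; ring
  simp [analyticOrderNatAt, this]

lemma order_triv (k : ℕ) : analyticOrderNatAt riemannZeta₁ (-2 * ((k : ℂ) + 1)) = 1 := by
  set ρ : ℂ := -2 * ((k : ℂ) + 1) with hρ
  have hk : (0 : ℝ) ≤ k := Nat.cast_nonneg k
  have hre : ρ.re < 0 := by simp [hρ]; linarith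
  have hwre : 1 < (1 - ρ).re := by rw [Complex.sub_re, Complex.one_re]; linarith
  set G : ℂ → ℂ := fun z => -(1 - z) * (2 * (2 * (Real.pi : ℂ)) ^ (-(1 - z)) * Complex.Gamma (1 - z) *
    riemannZeta (1 - z)) with hG
  set c : ℂ → ℂ := fun z => Complex.cos ((Real.pi : ℂ) * (1 - z) / 2) with hc
  have hpi : (Real.pi : ℂ) ≠ 0 := by simpa using Real.pi_ne_zero
  have hGd : DifferentiableAt ℂ G ρ := by
    have d0 : DifferentiableAt ℂ (fun z : ℂ => 1 - z) ρ := by fun_prop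
    have d1 : DifferentiableAt ℂ (fun z : ℂ => Complex.Gamma (1 - z)) ρ := by
      refine DifferentiableAt.comp (g := Complex.Gamma) ρ (Complex.differentiableAt_Gamma _ ?_) d0
      intro n hn
      rw [hn] at hwre
      simp at hwre
      linarith [(Nat.cast_nonneg n : (0 : ℝ) ≤ n)]
    have d2 : DifferentiableAt ℂ (fun z : ℂ => riemannZeta (1 - z)) ρ := by
      refine DifferentiableAt.comp (g := riemannZeta) ρ (differentiableAt_riemannZeta ?_) d0
      intro h
      rw [h] at hwre
      simp at hwre
    have d3 : DifferentiableAt ℂ (fun z : ℂ => (2 * (Real.pi : ℂ)) ^ (-(1 - z))) ρ :=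
      DifferentiableAt.const_cpow d0.neg (Or.inl (mul_ne_zero two_ne_zero hpi))
    exact d0.neg.mul (((d3.const_mul 2).mul d1).mul d2)
  have hG0 : G ρ ≠ 0 := gg_ne hwre.le
  have hc0 : c ρ = 0 := by
    rw [hc]
    refine Complex.cos_eq_zero_iff.mpr ⟨k + 1, ?_⟩
    rw [hρ]; push_cast; ring
  have hcd : HasDerivAt c (-Complex.sin ((Real.pi : ℂ) * (1 - ρ) / 2) * (-Real.pi / 2)) ρ := by
    have : HasDerivAt (fun z : ℂ => (Real.pi : ℂ) * (1 - z) / 2) (-Real.pi / 2 : ℂ) ρ := by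
      have h := (((hasDerivAt_id ρ).const_sub 1).const_mul (Real.pi : ℂ)).div_const 2
      exact h.congr_deriv (by ring)
    exact this.ccos
  have hsin : Complex.sin ((Real.pi : ℂ) * (1 - ρ) / 2) ≠ 0 := by
    intro h
    have := Complex.sin_sq_add_cos_sq ((Real.pi : ℂ) * (1 - ρ) / 2)
    have h2 : Complex.cos ((Real.pi : ℂ) * (1 - ρ) / 2) = 0 := hc0
    rw [h, h2] at this
    simp at this
  have hev : riemannZeta₁ =ᶠ[𝓝 ρ] G * c := by
    have : {w : ℂ | w.re < 0} ∈ 𝓝 ρ :=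
      (isOpen_lt Complex.continuous_re continuous_const).mem_nhds hre
    filter_upwards [this] with z hz
    have hz' : z.re < 0 := hz
    have hfe := zeta1_func (1 - z) (by simp; linarith) (by
      intro h
      have : z = 0 := by simpa using h
      rw [this] at hz'; simp at hz')
    rw [sub_sub_cancel] at hfe
    rw [hfe]; simp only [hG, hc, Pi.mul_apply]; ring
  have hderiv : deriv riemannZeta₁ ρ ≠ 0 := by
    rw [hev.deriv_eq, (hGd.hasDerivAt.mul hcd).deriv, hc0, mul_zero, zero_add]
    refine mul_ne_zero hG0 (mul_ne_zero (neg_ne_zero.mpr hsin) ?_)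
    simpa using Real.pi_ne_zero
  have := (differentiable_riemannZeta₁.analyticAt ρ).analyticOrderAt_sub_eq_one_of_deriv_ne_zero hderiv
  rw [triv_zero] at this
  simp only [sub_zero] at this
  simp only [analyticOrderNatAt]
  erw [this]; rfl

end EF

namespace EF

open Complex Filter Topology MeasureTheory

noncomputable def EE (y : ℝ) : ℝ := Set.indicator (Set.Ioi 0) (fun y => Real.exp (-y)) y

lemma EE_nonneg (y : ℝ) : 0 ≤ EE y :=
  Set.indicator_nonneg (fun _ _ => (Real.exp_pos _).le) y

lemma EE_le_one (y : ℝ) : EE y ≤ 1 := by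
  unfold EE
  by_cases h : y ∈ Set.Ioi (0 : ℝ)
  · rw [Set.indicator_of_mem h]
    exact Real.exp_le_one_iff.mpr (by linarith [Set.mem_Ioi.mp h])
  · rw [Set.indicator_of_notMem h]; norm_num

lemma EE_int : Integrable EE := by
  have := exp_neg_integrableOn_Ioi 0 (b := 1) one_pos
  simp only [neg_mul, one_mul] at this
  exact this.integrable_indicator measurableSet_Ioi

def Nice (F : ℝ → ℂ) (u : ℝ) : Prop := Continuous F ∧ ∀ y, ‖F y‖ ≤ u * EE y

lemma Nice.nonneg {F : ℝ → ℂ} {u : ℝ} (h : Nice F u) : 0 ≤ u := by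
  have h1 := (norm_nonneg _).trans (h.2 1)
  have : 0 < EE 1 := by
    unfold EE
    rw [Set.indicator_of_mem (by simp)]
    exact Real.exp_pos _
  exact nonneg_of_mul_nonneg_left h1 this

lemma Nice.integrable {F : ℝ → ℂ} {u : ℝ} (h : Nice F u) : Integrable F :=
  (EE_int.const_mul u).mono' h.1.aestronglyMeasurable (Eventually.of_forall h.2)

lemma Nice.add {F G : ℝ → ℂ} {u v : ℝ} (h : Nice F u) (k : Nice G v) :
    Nice (fun y => F y + G y) (u + v) :=
  ⟨h.1.add k.1, fun y => (norm_add_le _ _).trans (by rw [add_mul]; exact add_le_add (h.2 y) (k.2 y))⟩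

lemma Nice.smul {F : ℝ → ℂ} {u : ℝ} (h : Nice F u) (c : ℂ) :
    Nice (fun y => c * F y) (‖c‖ * u) :=
  ⟨continuous_const.mul h.1, fun y => by
    rw [norm_mul, mul_assoc]
    exact mul_le_mul_of_nonneg_left (h.2 y) (norm_nonneg _)⟩

noncomputable def JJ (F : ℝ → ℂ) (t : ℝ) : ℂ := ∫ v : ℝ, cexp (-(2 * Real.pi * t * I) * v) * F v

lemma norm_ker (t v : ℝ) : ‖cexp (-(2 * Real.pi * t * I) * v)‖ = 1 := by
  rw [show -(2 * (Real.pi : ℂ) * t * I) * v = ((-(2 * Real.pi * t) * v : ℝ) : ℂ) * I by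
    push_cast; ring]
  exact Complex.norm_exp_ofReal_mul_I _

lemma Nice.ker {F : ℝ → ℂ} {u : ℝ} (h : Nice F u) (t : ℝ) :
    Nice (fun v => cexp (-(2 * Real.pi * t * I) * v) * F v) u :=
  ⟨Continuous.mul (by fun_prop) h.1, fun y => by rw [norm_mul, norm_ker, one_mul]; exact h.2 y⟩

lemma JJ_add {F G : ℝ → ℂ} {u v : ℝ} (h : Nice F u) (k : Nice G v) (t : ℝ) :
    JJ (fun y => F y + G y) t = JJ F t + JJ G t := by
  unfold JJ
  simp only [mul_add]
  exact integral_add (h.ker t).integrable (k.ker t).integrable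

lemma JJ_smul (F : ℝ → ℂ) (c : ℂ) (t : ℝ) : JJ (fun y => c * F y) t = c * JJ F t := by
  unfold JJ
  rw [← integral_const_mul]
  congr 1; ext v; ring

lemma Nice.eq_zero {F : ℝ → ℂ} {u : ℝ} (h : Nice F u) (hJ : ∀ t, JJ F t = 0) (y : ℝ) : F y = 0 := by
  have hF : FourierTransform.fourier F = 0 := by
    ext w
    rw [Real.fourier_real_eq_integral_exp_smul, Pi.zero_apply, ← hJ w, JJ]
    congr 1; ext v
    rw [smul_eq_mul]; congr 2; push_cast; ring
  have := h.integrable.fourierInv_fourier_eq (v := y) (by rw [hF]; exact integrable_zero _ _ _)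
    h.1.continuousAt
  rw [← this, hF, Real.fourierInv_eq']
  simp

lemma Nice.tsum {ι : Type*} {F : ι → ℝ → ℂ} {u : ι → ℝ} (h : ∀ i, Nice (F i) (u i))
    (hu : Summable u) : Nice (fun y => ∑' i, F i y) (∑' i, u i) := by
  refine ⟨continuous_tsum (fun i => (h i).1) hu (fun i y => ?_), fun y => ?_⟩
  · refine ((h i).2 y).trans ?_
    have := (h i).nonneg
    nlinarith [EE_le_one y]
  · exact tsum_of_norm_bounded (hu.hasSum.mul_right _) (fun i => (h i).2 y)

lemma JJ_tsum {ι : Type*} [Countable ι] {F : ι → ℝ → ℂ} {u : ι → ℝ} (h : ∀ i, Nice (F i) (u i))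
    (hu : Summable u) (t : ℝ) : HasSum (fun i => JJ (F i) t) (JJ (fun y => ∑' i, F i y) t) := by
  unfold JJ
  have := hasSum_integral_of_summable_integral_norm (μ := volume)
    (F := fun i (v : ℝ) => cexp (-(2 * Real.pi * t * I) * v) * F i v)
    (fun i => ((h i).ker t).integrable) ?_
  · simpa only [tsum_mul_left] using this
  · refine Summable.of_nonneg_of_le (fun i => integral_nonneg (fun a => norm_nonneg _)) (fun i => ?_)
      (hu.mul_right (∫ y, EE y))
    rw [← integral_const_mul]
    exact integral_mono ((h i).ker t).integrable.norm (EE_int.const_mul _) (((h i).ker t).2)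

noncomputable def kk (s : ℂ) (c : ℝ) (u : ℝ) : ℂ :=
  ((max u 0 : ℝ) : ℂ) * cexp ((s - c) * ((max u 0 : ℝ) : ℂ))

noncomputable def ka (s : ℂ) (c : ℝ) (a : ℂ) (y : ℝ) : ℂ :=
  cexp ((a - c) * ((max y 0 : ℝ) : ℂ)) - cexp ((s - c) * ((max y 0 : ℝ) : ℂ))

lemma kk_norm (s : ℂ) (c : ℝ) (hc : s.re + 2 ≤ c) (y : ℝ) (hy : 0 < y) :
    ‖kk s c y‖ ≤ Real.exp (-y) := by
  unfold kk
  rw [max_eq_left hy.le, norm_mul, Complex.norm_exp, Complex.norm_real, Real.norm_eq_abs,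
    abs_of_pos hy]
  have h1 : ((s - c) * (y : ℂ)).re = (s.re - c) * y := by simp
  rw [h1]
  have h2 : y ≤ Real.exp y := by linarith [Real.add_one_le_exp y]
  have h3 : Real.exp ((s.re - c) * y) ≤ Real.exp (-2 * y) := Real.exp_le_exp.mpr (by nlinarith)
  calc _ ≤ Real.exp y * Real.exp (-2 * y) := by gcongr
    _ = Real.exp (-y) := by rw [← Real.exp_add]; congr 1; ring

lemma kk_neg (s : ℂ) (c : ℝ) (y : ℝ) (hy : y ≤ 0) : kk s c y = 0 := by
  unfold kk
  rw [max_eq_right hy]; simp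

lemma kk_cont (s : ℂ) (c : ℝ) : Continuous (kk s c) := by
  unfold kk; fun_prop

lemma nice_kk (s : ℂ) (c : ℝ) (hc : s.re + 2 ≤ c) : Nice (kk s c) 1 := by
  refine ⟨kk_cont s c, fun y => ?_⟩
  rw [one_mul, EE]
  by_cases h : y ∈ Set.Ioi (0 : ℝ)
  · rw [Set.indicator_of_mem h]
    exact kk_norm s c hc y h
  · rw [Set.indicator_of_notMem h, kk_neg s c y (not_lt.mp h), norm_zero]

lemma nice_kk_shift (s : ℂ) (c : ℝ) (hc : s.re + 2 ≤ c) (τ : ℝ) (hτ : 0 ≤ τ) :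
    Nice (fun y => kk s c (y - τ)) (Real.exp τ) := by
  refine ⟨(kk_cont s c).comp (continuous_id.sub continuous_const), fun y => ?_⟩
  by_cases h : τ < y
  · rw [EE, Set.indicator_of_mem (by simp; linarith)]
    refine (kk_norm s c hc (y - τ) (by linarith)).trans (le_of_eq ?_)
    rw [← Real.exp_add]; congr 1; ring
  · have h0 : kk s c (y - τ) = 0 := kk_neg s c _ (by linarith)
    simp only [h0, norm_zero]
    exact mul_nonneg (Real.exp_pos _).le (EE_nonneg y)

lemma nice_ka (s : ℂ) (c : ℝ) (hc : s.re + 2 ≤ c) (a : ℂ) (ha : a.re + 2 ≤ c) :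
    Nice (ka s c a) 2 := by
  refine ⟨by unfold ka; fun_prop, fun y => ?_⟩
  rw [EE]
  by_cases h : y ∈ Set.Ioi (0 : ℝ)
  · have hy : 0 < y := h
    rw [Set.indicator_of_mem h]
    unfold ka
    rw [max_eq_left hy.le]
    have key : ∀ b : ℂ, b.re + 2 ≤ c → ‖cexp ((b - c) * (y : ℂ))‖ ≤ Real.exp (-y) := by
      intro b hb
      rw [Complex.norm_exp]
      apply Real.exp_le_exp.mpr
      have h1 : ((b - c) * (y : ℂ)).re = (b.re - c) * y := by simp
      rw [h1]; nlinarith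
    refine (norm_sub_le _ _).trans ?_
    linarith [key a ha, key s hc]
  · rw [Set.indicator_of_notMem h, ka, max_eq_right (not_lt.mp h)]
    simp

lemma int_lin_exp (b : ℂ) (hb : 2 ≤ b.re) :
    ∫ u in Set.Ioi (0 : ℝ), (u : ℂ) * cexp (-b * u) = 1 / b ^ 2 := by
  have hb0 : b ≠ 0 := by rintro rfl; simp at hb; linarith
  have hn : ∀ u : ℝ, ‖cexp (-b * u)‖ = Real.exp (-(b.re * u)) := by
    intro u
    rw [Complex.norm_exp]; congr 1; simp
  have hle : ∀ u : ℝ, 0 < u → ‖(u : ℂ) * cexp (-b * u)‖ ≤ Real.exp (-u) := by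
    intro u hu
    rw [norm_mul, hn, Complex.norm_real, Real.norm_eq_abs, abs_of_pos hu]
    have h2 : u ≤ Real.exp u := by linarith [Real.add_one_le_exp u]
    have h3 : Real.exp (-(b.re * u)) ≤ Real.exp (-2 * u) := Real.exp_le_exp.mpr (by nlinarith)
    calc _ ≤ Real.exp u * Real.exp (-2 * u) := by gcongr
      _ = Real.exp (-u) := by rw [← Real.exp_add]; congr 1; ring
  have hle2 : ∀ u : ℝ, 0 < u → ‖cexp (-b * u)‖ ≤ Real.exp (-u) := by
    intro u hu
    rw [hn]
    exact Real.exp_le_exp.mpr (by nlinarith)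
  have hexp : Tendsto (fun u : ℝ => Real.exp (-u)) atTop (𝓝 0) :=
    Real.tendsto_exp_atBot.comp tendsto_neg_atTop_atBot
  have t1 : Tendsto (fun u : ℝ => (u : ℂ) * cexp (-b * u)) atTop (𝓝 0) :=
    squeeze_zero_norm' (by filter_upwards [eventually_gt_atTop 0] with u hu using hle u hu) hexp
  have t2 : Tendsto (fun u : ℝ => cexp (-b * u)) atTop (𝓝 0) :=
    squeeze_zero_norm' (by filter_upwards [eventually_gt_atTop 0] with u hu using hle2 u hu) hexp
  have hd : ∀ u ∈ Set.Ici (0 : ℝ), HasDerivAt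
      (fun u : ℝ => (-1 / b) * ((u : ℂ) * cexp (-b * u)) + (-1 / b ^ 2) * cexp (-b * u))
      ((u : ℂ) * cexp (-b * u)) u := by
    intro u _
    have h0 : HasDerivAt (fun u : ℝ => (u : ℂ)) 1 u := Complex.ofRealCLM.hasDerivAt (x := u)
    have h1 : HasDerivAt (fun u : ℝ => cexp (-b * u)) (cexp (-b * u) * (-b * 1)) u :=
      (h0.const_mul (-b)).cexp
    refine (((h0.mul h1).const_mul (-1 / b)).add (h1.const_mul (-1 / b ^ 2))).congr_deriv ?_
    field_simp
    ring
  have hIntg : IntegrableOn (fun u : ℝ => (u : ℂ) * cexp (-b * u)) (Set.Ioi 0) := by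
    have := exp_neg_integrableOn_Ioi 0 (b := 1) one_pos
    simp only [neg_mul, one_mul] at this
    refine Integrable.mono' this (Continuous.aestronglyMeasurable (by fun_prop)) ?_
    filter_upwards [ae_restrict_mem measurableSet_Ioi] with u hu
    simpa using hle u hu
  rw [integral_Ioi_of_hasDerivAt_of_tendsto' hd hIntg
    (by simpa using (t1.const_mul (-1 / b)).add (t2.const_mul (-1 / b ^ 2)))]
  simp
  field_simp

lemma JJ_kk (s : ℂ) (c : ℝ) (hc : s.re + 2 ≤ c) (t : ℝ) :
    JJ (kk s c) t = 1 / ((c : ℂ) + 2 * Real.pi * t * I - s) ^ 2 := by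
  rw [← int_lin_exp _ (by simp; linarith), JJ, ← integral_indicator measurableSet_Ioi]
  congr 1; ext v
  by_cases h : v ∈ Set.Ioi (0 : ℝ)
  · rw [Set.indicator_of_mem h, kk, max_eq_left (le_of_lt h), mul_left_comm, ← Complex.exp_add]
    congr 2; ring
  · rw [Set.indicator_of_notMem h, kk_neg s c v (not_lt.mp h), mul_zero]

lemma JJ_kk_shift (s : ℂ) (c : ℝ) (hc : s.re + 2 ≤ c) (τ t : ℝ) :
    JJ (fun y => kk s c (y - τ)) t =
      cexp (-(2 * Real.pi * t * I) * τ) * (1 / ((c : ℂ) + 2 * Real.pi * t * I - s) ^ 2) := by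
  rw [← JJ_kk s c hc, JJ, JJ, ← integral_const_mul,
    ← integral_sub_right_eq_self (fun v : ℝ => cexp (-(2 * Real.pi * t * I) * τ) *
      (cexp (-(2 * Real.pi * t * I) * v) * kk s c v)) τ]
  congr 1; ext v
  rw [← mul_assoc, ← Complex.exp_add]
  congr 2; push_cast; ring

lemma JJ_ka (s : ℂ) (c : ℝ) (hc : s.re + 2 ≤ c) (a : ℂ) (ha : a.re + 2 ≤ c) (t : ℝ) :
    JJ (ka s c a) t = 1 / ((c : ℂ) + 2 * Real.pi * t * I - a) -
      1 / ((c : ℂ) + 2 * Real.pi * t * I - s) := by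
  have key : ∀ b : ℂ, b.re + 2 ≤ c → IntegrableOn (fun v : ℝ =>
      cexp ((b - ((c : ℂ) + 2 * Real.pi * t * I)) * v)) (Set.Ioi 0) ∧
      ∫ v in Set.Ioi (0 : ℝ), cexp ((b - ((c : ℂ) + 2 * Real.pi * t * I)) * v) =
        1 / ((c : ℂ) + 2 * Real.pi * t * I - b) := by
    intro b hb
    have hre : (b - ((c : ℂ) + 2 * Real.pi * t * I)).re < 0 := by simp; linarith
    refine ⟨integrableOn_exp_mul_complex_Ioi hre 0, ?_⟩
    rw [integral_exp_mul_complex_Ioi hre]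
    rw [← neg_sub ((c : ℂ) + 2 * Real.pi * t * I) b, neg_div_neg_eq]
    simp
  rw [← (key a ha).2, ← (key s hc).2, ← integral_sub (key a ha).1 (key s hc).1, JJ,
    ← integral_indicator measurableSet_Ioi]
  congr 1; ext v
  by_cases h : v ∈ Set.Ioi (0 : ℝ)
  · rw [Set.indicator_of_mem h, ka, max_eq_left (le_of_lt h), mul_sub, ← Complex.exp_add,
      ← Complex.exp_add]
    congr 2 <;> ring
  · rw [Set.indicator_of_notMem h, ka, max_eq_right (not_lt.mp h)]
    simp

end EF

namespace EF

open Complex Filter Topology MeasureTheory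

lemma zeta1_zero_ne : riemannZeta₁ 0 ≠ 0 := by
  rw [zeta1_eq_mul 0 (by norm_num), riemannZeta_zero]
  norm_num

lemma zeta1_ne {z : ℂ} (h1 : z ≠ 1) (h : riemannZeta z ≠ 0) : riemannZeta₁ z ≠ 0 := by
  rw [zeta1_eq_mul z h1]
  exact mul_ne_zero (sub_ne_zero.mpr h1) h

lemma logDeriv_zeta1 {z : ℂ} (h1 : z ≠ 1) (h : riemannZeta z ≠ 0) :
    deriv riemannZeta z / riemannZeta z = logDeriv riemannZeta₁ z - (z - 1)⁻¹ := by
  have h2 := zeta1_ne h1 h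
  have h3 := sub_ne_zero.mpr h1
  have hd : HasDerivAt riemannZeta₁ (1 * riemannZeta z + (z - 1) * deriv riemannZeta z) z := by
    have := ((hasDerivAt_id z).sub_const 1).mul (differentiableAt_riemannZeta h1).hasDerivAt
    refine this.congr_of_eventuallyEq ?_
    filter_upwards [eventually_ne_nhds h1] with w hw
    simpa using zeta1_eq_mul w hw
  rw [logDeriv_apply, hd.deriv, zeta1_eq_mul z h1]
  field_simp
  ring

lemma deriv_logDeriv_zeta1 {s : ℂ} (h1 : s ≠ 1) (h : riemannZeta s ≠ 0) :
    deriv (fun z => deriv riemannZeta z / riemannZeta z) s =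
      deriv (logDeriv riemannZeta₁) s + 1 / (s - 1) ^ 2 := by
  have h2 := zeta1_ne h1 h
  have hev : (fun z => deriv riemannZeta z / riemannZeta z) =ᶠ[𝓝 s]
      logDeriv riemannZeta₁ - fun z => (z - 1)⁻¹ := by
    have hc := (differentiableAt_riemannZeta h1).continuousAt.eventually_ne h
    filter_upwards [hc, eventually_ne_nhds h1] with z hz hz1
    exact logDeriv_zeta1 hz1 hz
  have ha := differentiable_riemannZeta₁.analyticAt s
  have hd : DifferentiableAt ℂ (logDeriv riemannZeta₁) s :=
    ha.deriv.differentiableAt.div ha.differentiableAt h2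
  have hi : HasDerivAt (fun z : ℂ => (z - 1)⁻¹) (-1 / (s - 1) ^ 2) s :=
    ((hasDerivAt_id s).sub_const 1).inv (sub_ne_zero.mpr h1)
  rw [hev.deriv_eq, (hd.hasDerivAt.sub hi).deriv]
  ring

lemma zero_re (ρ : {z : ℂ // riemannZeta₁ z = 0}) : (ρ : ℂ).re ≤ 1 := by
  rcases zeta1_zero_cases ρ.2 with h | ⟨k, hk⟩
  · exact h.2.2.le
  · rw [hk]; simp
    linarith [(Nat.cast_nonneg k : (0 : ℝ) ≤ k)]

lemma sub_zero_ne {s : ℂ} (h : riemannZeta₁ s ≠ 0) (ρ : {z : ℂ // riemannZeta₁ z = 0}) :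
    s - ρ ≠ 0 := by
  intro h2
  have : s = ρ := sub_eq_zero.mp h2
  rw [this] at h
  exact h ρ.2

noncomputable def VM (n : ℕ) : ℂ := (ArithmeticFunction.vonMangoldt n : ℂ)

lemma term_shift (c : ℝ) (w : ℂ) (n : ℕ) :
    LSeries.term VM ((c : ℂ) + w) n = LSeries.term VM c n * cexp (-w * (Real.log n : ℝ)) := by
  rcases eq_or_ne n 0 with rfl | hn
  · simp
  have hn' : (n : ℂ) ≠ 0 := by exact_mod_cast hn
  rw [LSeries.term_of_ne_zero hn, LSeries.term_of_ne_zero hn, Complex.cpow_add _ _ hn',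
    Complex.cpow_def_of_ne_zero hn' w, Complex.natCast_log, neg_mul, Complex.exp_neg,
    mul_comm w]
  field_simp

theorem main_identity (s : ℂ) (h1 : s ≠ 1) (h : riemannZeta s ≠ 0) (c : ℝ) (hc3 : 3 ≤ c)
    (hc : s.re + 2 ≤ c) (y : ℝ) :
    (∑' n : ℕ, LSeries.term VM c n * kk s c (y - Real.log n)) +
      (deriv riemannZeta s / riemannZeta s) * kk s c y +
      (∑' ρ : {z : ℂ // riemannZeta₁ z = 0},
        ((analyticOrderNatAt riemannZeta₁ ρ : ℂ) / ((s - ρ) * (s - ρ))) * ka s c ρ y) +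
      (-1 / (s - 1) ^ 2) * ka s c 1 y = 0 := by
  obtain ⟨C, hC0, hC⟩ := growth_zeta1
  have hf := differentiable_riemannZeta₁
  have hs := zeta1_ne h1 h
  have h0 := zeta1_zero_ne
  have hsum2 := summable_two hf h0 hC0 hC s s
  have hcount : Countable {z : ℂ // riemannZeta₁ z = 0} := by
    have := hsum2.countable_support
    refine Set.countable_univ_iff.mp (this.mono ?_)
    · intro ρ _
      have := order_pos hf h0 ρ.2
      refine div_ne_zero ?_ (mul_ne_zero (sub_zero_ne hs ρ) (sub_zero_ne hs ρ))
      exact_mod_cast (by omega : analyticOrderNatAt riemannZeta₁ (ρ : ℂ) ≠ 0)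
  have hρc : ∀ ρ : {z : ℂ // riemannZeta₁ z = 0}, (ρ : ℂ).re + 2 ≤ c := fun ρ => by
    linarith [zero_re ρ]
  -- the prime sum
  have n1 : ∀ n : ℕ, Nice (fun y => LSeries.term VM c n * kk s c (y - Real.log n))
      (‖LSeries.term VM c n‖ * Real.exp (Real.log n)) := fun n =>
    (nice_kk_shift s c hc (Real.log n) (Real.log_natCast_nonneg n)).smul _
  have u1 : Summable (fun n : ℕ => ‖LSeries.term VM c n‖ * Real.exp (Real.log n)) := by
    have : LSeriesSummable VM ((c : ℂ) + (-1)) :=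
      ArithmeticFunction.LSeriesSummable_vonMangoldt (by simp; linarith)
    refine this.norm.congr (fun n => ?_)
    rw [term_shift, norm_mul, Complex.norm_exp, neg_neg, one_mul, Complex.ofReal_re]
  -- the zero sum
  have n2 : ∀ ρ : {z : ℂ // riemannZeta₁ z = 0}, Nice (fun y =>
      ((analyticOrderNatAt riemannZeta₁ ρ : ℂ) / ((s - ρ) * (s - ρ))) * ka s c ρ y)
      (‖(analyticOrderNatAt riemannZeta₁ ρ : ℂ) / ((s - ρ) * (s - ρ))‖ * 2) := fun ρ =>
    (nice_ka s c hc ρ (hρc ρ)).smul _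
  have u2 := hsum2.norm.mul_right 2
  have nk := (nice_kk s c hc).smul (deriv riemannZeta s / riemannZeta s)
  have n1c := (nice_ka s c hc 1 (by simp; linarith)).smul (-1 / (s - 1) ^ 2)
  have nA := Nice.tsum n1 u1
  have nB := Nice.tsum n2 u2
  refine (((nA.add nk).add nB).add n1c).eq_zero (fun t => ?_) y
  rw [JJ_add ((nA.add nk).add nB) n1c, JJ_add (nA.add nk) nB, JJ_add nA nk, JJ_smul, JJ_smul,
    JJ_kk s c hc, JJ_ka s c hc 1 (by simp; linarith)]
  set z : ℂ := (c : ℂ) + 2 * Real.pi * t * I with hz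
  have hzre : z.re = c := by simp [hz]
  have hz1 : z ≠ 1 := by
    intro h
    rw [h] at hzre
    simp at hzre; linarith
  have hzz : riemannZeta z ≠ 0 := riemannZeta_ne_zero_of_one_le_re (by linarith)
  have hz1' := zeta1_ne hz1 hzz
  have hzs : z - s ≠ 0 := by
    intro h
    have : z.re = s.re := by rw [sub_eq_zero.mp h]
    linarith
  have hA : JJ (fun y => ∑' n : ℕ, LSeries.term VM c n * kk s c (y - Real.log n)) t =
      -(deriv riemannZeta z / riemannZeta z) * (1 / (z - s) ^ 2) := by
    rw [← (JJ_tsum n1 u1 t).tsum_eq, ← neg_div,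
      ← ArithmeticFunction.LSeries_vonMangoldt_eq_deriv_riemannZeta_div (by linarith : 1 < z.re),
      LSeries, ← tsum_mul_right]
    refine tsum_congr (fun n => ?_)
    rw [JJ_smul, JJ_kk_shift s c hc, ← mul_assoc, ← term_shift]
    rfl
  have hB : JJ (fun y => ∑' ρ : {z : ℂ // riemannZeta₁ z = 0},
        ((analyticOrderNatAt riemannZeta₁ ρ : ℂ) / ((s - ρ) * (s - ρ))) * ka s c ρ y) t =
      (logDeriv riemannZeta₁ z - logDeriv riemannZeta₁ s) * (1 / (z - s) ^ 2) := by
    rw [← (JJ_tsum n2 u2 t).tsum_eq, ← (hadamard_s6 hf h0 hC0 hC hz1' hs).1.tsum_eq, ← tsum_mul_right]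
    refine tsum_congr (fun ρ => ?_)
    rw [JJ_smul, JJ_ka s c hc ρ (hρc ρ)]
    have e1 := sub_zero_ne hs ρ
    have e2 := sub_zero_ne hz1' ρ
    rw [← hz]
    field_simp
    ring
  rw [hA, hB, logDeriv_zeta1 hz1 hzz, logDeriv_zeta1 h1 h]
  have e1 := sub_ne_zero.mpr h1
  have e2 := sub_ne_zero.mpr hz1
  field_simp
  ring


lemma kk_mul (s : ℂ) (c y : ℝ) (u : ℝ) (hu : 0 ≤ u) (n : ℝ) (hn : u = y - n) :
    kk s c u * cexp ((c - s) * y) = (u : ℂ) * cexp ((c - s) * n) := by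
  rw [kk, max_eq_left hu, mul_assoc, ← Complex.exp_add]
  congr 2
  rw [hn]; push_cast; ring

lemma ka_mul (s : ℂ) (c : ℝ) (x : ℝ) (hx : 2 ≤ x) (a : ℂ) :
    ka s c a (Real.log x) * cexp ((c - s) * (Real.log x : ℝ)) = (x : ℂ) ^ (a - s) - 1 := by
  have hl : 0 ≤ Real.log x := Real.log_nonneg (by linarith)
  have hx0 : (x : ℂ) ≠ 0 := by
    have : x ≠ 0 := by linarith
    exact_mod_cast this
  rw [ka, max_eq_left hl, sub_mul, ← Complex.exp_add, ← Complex.exp_add,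
    Complex.cpow_def_of_ne_zero hx0, ← Complex.ofReal_log (by linarith)]
  congr 1
  · congr 1; ring
  · rw [← Complex.exp_zero]; congr 1; ring

lemma prime_sum (s : ℂ) (c : ℝ) (x : ℝ) (hx : 2 ≤ x) :
    (∑' n : ℕ, LSeries.term VM c n * kk s c (Real.log x - Real.log n)) *
      cexp ((c - s) * (Real.log x : ℝ)) =
    ∑ n ∈ Finset.Icc 2 ⌊x⌋₊, (ArithmeticFunction.vonMangoldt n : ℂ) * (n : ℂ) ^ (-s) *
      (Real.log (x / n) : ℂ) := by
  rw [tsum_eq_sum (s := Finset.Icc 2 ⌊x⌋₊), Finset.sum_mul]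
  · refine Finset.sum_congr rfl (fun n hn => ?_)
    rw [Finset.mem_Icc] at hn
    have hn0 : n ≠ 0 := by omega
    have hnR : (0 : ℝ) < n := by exact_mod_cast Nat.pos_of_ne_zero hn0
    have hn' : (n : ℂ) ≠ 0 := by exact_mod_cast hn0
    have hle : (n : ℝ) ≤ x := (Nat.le_floor_iff (by linarith)).mp hn.2
    have hlog : Real.log n ≤ Real.log x := Real.log_le_log hnR hle
    rw [mul_assoc, kk_mul s c (Real.log x) _ (by linarith) (Real.log n) rfl,
      LSeries.term_of_ne_zero hn0, Real.log_div (by linarith) hnR.ne']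
    have e : cexp ((c - s) * (Real.log n : ℝ)) = (n : ℂ) ^ (c : ℂ) * (n : ℂ) ^ (-s) := by
      rw [← Complex.cpow_add _ _ hn', Complex.cpow_def_of_ne_zero hn', Complex.natCast_log]
      congr 1; ring
    have hne : (n : ℂ) ^ (c : ℂ) ≠ 0 := by
      rw [Complex.cpow_def_of_ne_zero hn']; exact Complex.exp_ne_zero _
    rw [e, VM]
    field_simp
  · intro n hn
    rw [Finset.mem_Icc] at hn
    by_cases h2 : n < 2
    · have : n = 0 ∨ n = 1 := by omega
      rcases this with rfl | rfl
      · simp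
      · simp [LSeries.term, VM]
    · have hlt : x < n := by
        rw [← Nat.floor_lt (by linarith)]
        omega
      have : Real.log x ≤ Real.log n := Real.log_le_log (by linarith) hlt.le
      rw [kk_neg s c _ (by linarith), mul_zero]

lemma zero_sum (s : ℂ) (h1 : s ≠ 1) (h : riemannZeta s ≠ 0) (x : ℝ) (hx : 2 ≤ x) (c : ℝ) :
    Summable (fun ρ : {z : ℂ // riemannZeta₁ z = 0} =>
      ((analyticOrderNatAt riemannZeta₁ ρ : ℂ) / ((s - ρ) * (s - ρ))) * (x : ℂ) ^ ((ρ : ℂ) - s)) ∧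
    (∑' ρ : {z : ℂ // riemannZeta₁ z = 0},
        ((analyticOrderNatAt riemannZeta₁ ρ : ℂ) / ((s - ρ) * (s - ρ))) * ka s c ρ (Real.log x)) *
      cexp ((c - s) * (Real.log x : ℝ)) =
    (∑' ρ : {z : ℂ // riemannZeta₁ z = 0},
      ((analyticOrderNatAt riemannZeta₁ ρ : ℂ) / ((s - ρ) * (s - ρ))) * (x : ℂ) ^ ((ρ : ℂ) - s)) +
    deriv (logDeriv riemannZeta₁) s := by
  obtain ⟨C, hC0, hC⟩ := growth_zeta1
  have hf := differentiable_riemannZeta₁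
  have hs := zeta1_ne h1 h
  have h0 := zeta1_zero_ne
  have hsum2 := summable_two hf h0 hC0 hC s s
  have hS : Summable (fun ρ : {z : ℂ // riemannZeta₁ z = 0} =>
      ((analyticOrderNatAt riemannZeta₁ ρ : ℂ) / ((s - ρ) * (s - ρ))) *
        (x : ℂ) ^ ((ρ : ℂ) - s)) := by
    refine Summable.of_norm_bounded (hsum2.norm.mul_right (x ^ (1 - s.re))) (fun ρ => ?_)
    rw [norm_mul, Complex.norm_cpow_eq_rpow_re_of_pos (by linarith)]
    gcongr
    · linarith
    · simp [zero_re ρ]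
  refine ⟨hS, ?_⟩
  rw [← (hadamard_s6 hf h0 hC0 hC hs hs).2.tsum_eq, ← tsum_mul_right,
    ← Summable.tsum_add hS (hadamard_s6 hf h0 hC0 hC hs hs).2.summable]
  refine tsum_congr (fun ρ => ?_)
  rw [mul_assoc, ka_mul s c x hx]
  have := sub_zero_ne hs ρ
  field_simp
  ring

lemma split_sum (F : {z : ℂ // riemannZeta₁ z = 0} → ℂ) (hF : Summable F) :
    ∑' ρ, F ρ = (∑' ρ : NT, F (zmap (Sum.inl ρ))) + ∑' k : ℕ, F (zmap (Sum.inr k)) := by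
  have hs : Summable (F ∘ zmap) := (Equiv.ofBijective zmap zmap_bij).summable_iff.mpr hF
  rw [← (Equiv.ofBijective zmap zmap_bij).tsum_eq F]
  exact Summable.tsum_sum (f := F ∘ zmap) (hs.comp_injective Sum.inl_injective)
    (hs.comp_injective Sum.inr_injective)

end EF

open Complex

/-- (Unconditional explicit formula for `-ζ'/ζ`.) For any `x ≥ 2` and any
complex `s` not equal to `1`, not a zero of `ζ`, and not a trivial zero `-2, -4, -6, ...`,
`-ζ'/ζ(s) = ∑_{2 ≤ n ≤ x} Λ(n)n^{-s}(log(x/n)/log x) + (1/log x)(ζ'/ζ)'(s)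
 + (1/log x)∑_ρ m_ρ x^{ρ-s}/(ρ-s)² + (1/log x)∑_{m≥1} x^{-2m-s}/(2m+s)²
 - x^{1-s}/((1-s)² log x)`,
where `ρ` runs over the zeros of `ζ` with `0 < Re ρ < 1`, with multiplicity `m ρ`. -/
theorem explicit_formula_zeta (x : ℝ) (hx : 2 ≤ x) (s : ℂ)
    (hs_one : s ≠ 1) (hs_nzero : riemannZeta s ≠ 0)
    (hs_ntriv : ∀ m : ℕ, s ≠ -2 * ((m : ℂ) + 1))
    (m : ℂ → ℕ)
    (hm : ∀ ρ : ℂ, riemannZeta ρ = 0 → 0 < ρ.re → ρ.re < 1 →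
      ∃ g : ℂ → ℂ, AnalyticAt ℂ g ρ ∧ g ρ ≠ 0 ∧
        ∀ᶠ z in nhds ρ, riemannZeta z = (z - ρ) ^ m ρ * g z) :
    -(deriv riemannZeta s / riemannZeta s) =
      (∑ n ∈ Finset.Icc 2 ⌊x⌋₊,
        (ArithmeticFunction.vonMangoldt n : ℂ) * (n : ℂ) ^ (-s) *
          ((Real.log (x / n) : ℂ) / (Real.log x : ℂ))) +
      (1 / (Real.log x : ℂ)) *
        deriv (fun z => deriv riemannZeta z / riemannZeta z) s +
      (1 / (Real.log x : ℂ)) *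
        ∑' ρ : {ρ : ℂ // riemannZeta ρ = 0 ∧ 0 < ρ.re ∧ ρ.re < 1},
          (m ρ : ℂ) * (x : ℂ) ^ ((ρ : ℂ) - s) / ((ρ : ℂ) - s) ^ 2 +
      (1 / (Real.log x : ℂ)) *
        ∑' k : ℕ, (x : ℂ) ^ (-2 * ((k : ℂ) + 1) - s) / (2 * ((k : ℂ) + 1) + s) ^ 2 -
      (x : ℂ) ^ ((1 : ℂ) - s) / ((1 - s) ^ 2 * (Real.log x : ℂ)) := by
  set c : ℝ := |s.re| + 3 with hc
  have hc3 : 3 ≤ c := by linarith [abs_nonneg s.re]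
  have hcs : s.re + 2 ≤ c := by linarith [le_abs_self s.re]
  have hlog : 0 < Real.log x := Real.log_pos (by linarith)
  have hlogC : (Real.log x : ℂ) ≠ 0 := by exact_mod_cast hlog.ne'
  have main := EF.main_identity s hs_one hs_nzero c hc3 hcs (Real.log x)
  have main2 := congrArg (fun w => w * cexp ((c - s) * (Real.log x : ℝ))) main
  simp only [zero_mul, add_mul] at main2
  obtain ⟨hS, hZ⟩ := EF.zero_sum s hs_one hs_nzero x hx c
  have hk := EF.kk_mul s c (Real.log x) (Real.log x) hlog.le 0 (by ring)
  have hk1 := EF.ka_mul s c x hx 1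
  rw [EF.prime_sum s c x hx, hZ, mul_assoc (deriv riemannZeta s / riemannZeta s), hk,
    mul_assoc (-1 / (s - 1) ^ 2), hk1, EF.split_sum _ hS] at main2
  have hd := EF.deriv_logDeriv_zeta1 hs_one hs_nzero
  have hN : (∑' ρ : EF.NT, ((analyticOrderNatAt riemannZeta₁ (EF.zmap (Sum.inl ρ)) : ℂ) /
      ((s - EF.zmap (Sum.inl ρ)) * (s - EF.zmap (Sum.inl ρ)))) *
        (x : ℂ) ^ ((EF.zmap (Sum.inl ρ) : ℂ) - s)) =
      ∑' ρ : {ρ : ℂ // riemannZeta ρ = 0 ∧ 0 < ρ.re ∧ ρ.re < 1},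
          (m ρ : ℂ) * (x : ℂ) ^ ((ρ : ℂ) - s) / ((ρ : ℂ) - s) ^ 2 := by
    refine tsum_congr (fun ρ => ?_)
    simp only [EF.zmap]
    obtain ⟨g, hg, hg0, hge⟩ := hm ρ ρ.2.1 ρ.2.2.1 ρ.2.2.2
    have h1 : (ρ : ℂ) ≠ 1 := by
      intro h
      have := ρ.2.2.2
      rw [h] at this
      simp at this
    rw [EF.order_nt ρ h1 (m ρ) g hg hg0 hge, ← sq, ← neg_sub (ρ : ℂ) s, neg_sq]
    ring
  have hT : (∑' k : ℕ, ((analyticOrderNatAt riemannZeta₁ (EF.zmap (Sum.inr k)) : ℂ) /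
      ((s - EF.zmap (Sum.inr k)) * (s - EF.zmap (Sum.inr k)))) *
        (x : ℂ) ^ ((EF.zmap (Sum.inr k) : ℂ) - s)) =
      ∑' k : ℕ, (x : ℂ) ^ (-2 * ((k : ℂ) + 1) - s) / (2 * ((k : ℂ) + 1) + s) ^ 2 := by
    refine tsum_congr (fun k => ?_)
    simp only [EF.zmap]
    rw [EF.order_triv k]
    rw [show s - -2 * ((k : ℂ) + 1) = 2 * ((k : ℂ) + 1) + s by ring]
    push_cast
    ring
  rw [hN, hT] at main2
  have hP : (∑ n ∈ Finset.Icc 2 ⌊x⌋₊,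
        (ArithmeticFunction.vonMangoldt n : ℂ) * (n : ℂ) ^ (-s) *
          ((Real.log (x / n) : ℂ) / (Real.log x : ℂ))) =
      (∑ n ∈ Finset.Icc 2 ⌊x⌋₊,
        (ArithmeticFunction.vonMangoldt n : ℂ) * (n : ℂ) ^ (-s) *
          (Real.log (x / n) : ℂ)) / (Real.log x : ℂ) := by
    rw [Finset.sum_div]
    exact Finset.sum_congr rfl (fun n _ => by ring)
  rw [hP, hd]
  have e1 : (1 - s) ≠ 0 := sub_ne_zero.mpr (Ne.symm hs_one)
  have e2 : (s - 1) ^ 2 = (1 - s) ^ 2 := by ring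
  rw [e2] at main2 ⊢
  simp only [ofReal_zero, mul_zero, Complex.exp_zero, mul_one] at main2
  generalize (∑ n ∈ Finset.Icc 2 ⌊x⌋₊, (ArithmeticFunction.vonMangoldt n : ℂ) * (n : ℂ) ^ (-s) *
          (Real.log (x / n) : ℂ)) = A at *
  generalize (∑' ρ : {ρ : ℂ // riemannZeta ρ = 0 ∧ 0 < ρ.re ∧ ρ.re < 1},
          (m ρ : ℂ) * (x : ℂ) ^ ((ρ : ℂ) - s) / ((ρ : ℂ) - s) ^ 2) = B at *
  generalize (∑' k : ℕ, (x : ℂ) ^ (-2 * ((k : ℂ) + 1) - s) / (2 * ((k : ℂ) + 1) + s) ^ 2) = D at *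
  generalize deriv riemannZeta s / riemannZeta s = E at *
  generalize deriv (logDeriv riemannZeta₁) s = G at *
  generalize (x : ℂ) ^ ((1 : ℂ) - s) = X at *
  generalize (Real.log x : ℂ) = l at *
  have hfin : -E * l = A + (G + 1 / (1 - s) ^ 2) + B + D - X / (1 - s) ^ 2 := by
    linear_combination -main2
  field_simp at hfin ⊢
  linear_combination hfin
end
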